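/- arXiv:1103.4922 — 8 statements merged into one kernel-verified Lean document; each statement's English description precedes it below -/
import Mathlib

section
/- Let K be a field of characteristic different from 2 and let a, b, c, d be nonzero elements of K. Then the following are equivalent: (1) the quaternion algebras ℍ[K,a,b] and ℍ[K,c,d] are isomorphic as K-algebras; (2) the quaternary norm forms ⟨1,−a,−b,ab⟩ and ⟨1,−c,−d,cd⟩ are isometric over K; (3) the ternary pure norm forms ⟨−a,−b,ab⟩ and ⟨−c,−d,cd⟩ are isometric over K. -/
open Quaternion

/-- The quaternary norm form `⟨1, -a, -b, ab⟩` of the quaternion algebra `ℍ[K, a, b]`. -/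
noncomputable def quaternionNormForm (K : Type*) [Field K] (a b : K) :
    QuadraticForm K (Fin 4 → K) :=
  QuadraticMap.weightedSumSquares K ![1, -a, -b, a * b]

/-- The ternary pure norm form `⟨-a, -b, ab⟩` of the quaternion algebra `ℍ[K, a, b]`. -/
noncomputable def quaternionPureNormForm (K : Type*) [Field K] (a b : K) :
    QuadraticForm K (Fin 3 → K) :=
  QuadraticMap.weightedSumSquares K ![-a, -b, a * b]

theorem qnf_apply {K : Type*} [Field K] (a b : K) (v : Fin 4 → K) :
    quaternionNormForm K a b v
      = v 0 * v 0 - a * (v 1 * v 1) - b * (v 2 * v 2) + a * b * (v 3 * v 3) := by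
  simp [quaternionNormForm, QuadraticMap.weightedSumSquares_apply, Fin.sum_univ_four]
  ring

theorem qpf_apply {K : Type*} [Field K] (a b : K) (v : Fin 3 → K) :
    quaternionPureNormForm K a b v
      = - a * (v 0 * v 0) - b * (v 1 * v 1) + a * b * (v 2 * v 2) := by
  simp [quaternionPureNormForm, QuadraticMap.weightedSumSquares_apply, Fin.sum_univ_three]
  ring

/-- Pure quaternion with given coordinates. -/
def pureQ {K : Type*} [Field K] (a b : K) : (Fin 3 → K) →ₗ[K] ℍ[K, a, b] where
  toFun v := ⟨0, v 0, v 1, v 2⟩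
  map_add' u v := by ext <;> simp
  map_smul' r v := by ext <;> simp

/-- Quaternion with given coordinates. -/
def fullQ {K : Type*} [Field K] (a b : K) : (Fin 4 → K) →ₗ[K] ℍ[K, a, b] where
  toFun v := ⟨v 0, v 1, v 2, v 3⟩
  map_add' u v := by ext <;> simp
  map_smul' r v := by ext <;> simp

/-- The coordinates of the pure part. -/
def imQ {K : Type*} [Field K] (a b : K) : ℍ[K, a, b] →ₗ[K] (Fin 3 → K) where
  toFun q := ![q.imI, q.imJ, q.imK]
  map_add' u v := by ext i; fin_cases i <;> simp
  map_smul' r v := by ext i; fin_cases i <;> simp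

/-- The coordinates. -/
def coordQ {K : Type*} [Field K] (a b : K) : ℍ[K, a, b] →ₗ[K] (Fin 4 → K) where
  toFun q := ![q.re, q.imI, q.imJ, q.imK]
  map_add' u v := by ext i; fin_cases i <;> simp
  map_smul' r v := by ext i; fin_cases i <;> simp

/-- Prepending a zero. -/
def consZ (K : Type*) [Field K] : (Fin 3 → K) →ₗ[K] (Fin 4 → K) where
  toFun v := ![0, v 0, v 1, v 2]
  map_add' u v := by ext i; fin_cases i <;> simp
  map_smul' r v := by ext i; fin_cases i <;> simp

/-- Dropping the first coordinate. -/
def tailZ (K : Type*) [Field K] : (Fin 4 → K) →ₗ[K] (Fin 3 → K) where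
  toFun v := ![v 1, v 2, v 3]
  map_add' u v := by ext i; fin_cases i <;> simp
  map_smul' r v := by ext i; fin_cases i <;> simp

theorem equiv_of_inj {K : Type*} [Field K] {n : ℕ} (Q Q' : QuadraticForm K (Fin n → K))
    (f : (Fin n → K) →ₗ[K] (Fin n → K)) (hf : ∀ v, f v = 0 → v = 0)
    (h : ∀ v, Q' (f v) = Q v) : Q.Equivalent Q' := by
  have hi : Function.Injective f := (injective_iff_map_eq_zero f).2 hf
  exact ⟨{ LinearEquiv.ofInjectiveEndo f hi with map_app' := fun v => h v }⟩

theorem one_three {K : Type*} [Field K] (h2 : (2 : K) ≠ 0) (a b c d : K)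
    (φ : ℍ[K, a, b] ≃ₐ[K] ℍ[K, c, d]) :
    (quaternionPureNormForm K a b).Equivalent (quaternionPureNormForm K c d) := by
  have key : ∀ v : Fin 3 → K, (φ (pureQ a b v)).re = 0 ∧
      quaternionPureNormForm K c d (imQ c d (φ (pureQ a b v))) = quaternionPureNormForm K a b v := by
    intro v
    have h1 : pureQ a b v * pureQ a b v
        = algebraMap K _ (-(quaternionPureNormForm K a b v)) := by
      rw [qpf_apply]
      ext <;> simp [pureQ, QuaternionAlgebra.algebraMap_eq] <;> ring
    have h3 := congrArg φ h1
    rw [map_mul, AlgEquiv.commutes] at h3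
    set q := φ (pureQ a b v) with hq
    have hr := congrArg QuaternionAlgebra.re h3
    have hI := congrArg QuaternionAlgebra.imI h3
    have hJ := congrArg QuaternionAlgebra.imJ h3
    have hK := congrArg QuaternionAlgebra.imK h3
    simp [QuaternionAlgebra.algebraMap_eq] at hr hI hJ hK
    have h0 : q.re = 0 := by
      by_contra hne
      have eI : q.imI = 0 := by
        have : (2 * q.re) * q.imI = 0 := by linear_combination hI
        exact (mul_eq_zero.1 this).resolve_left (mul_ne_zero h2 hne)
      have eJ : q.imJ = 0 := by
        have : (2 * q.re) * q.imJ = 0 := by linear_combination hJ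
        exact (mul_eq_zero.1 this).resolve_left (mul_ne_zero h2 hne)
      have eK : q.imK = 0 := by
        have : (2 * q.re) * q.imK = 0 := by linear_combination hK
        exact (mul_eq_zero.1 this).resolve_left (mul_ne_zero h2 hne)
      have hs : q = algebraMap K _ q.re := by
        ext <;> simp [QuaternionAlgebra.algebraMap_eq, eI, eJ, eK]
      have : pureQ a b v = algebraMap K _ q.re := by
        apply φ.injective
        rw [AlgEquiv.commutes, ← hs]
      have := congrArg QuaternionAlgebra.re this
      simp [pureQ, QuaternionAlgebra.algebraMap_eq] at this
      exact hne this.symm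
    refine ⟨h0, ?_⟩
    rw [h0] at hr
    rw [qpf_apply c d]
    simp [imQ]
    linear_combination -hr
  refine equiv_of_inj _ _ ((imQ c d) ∘ₗ φ.toLinearMap ∘ₗ (pureQ a b)) ?_ (fun v => (key v).2)
  intro v hv
  have hv' : imQ c d (φ (pureQ a b v)) = 0 := hv
  have e : φ (pureQ a b v) = 0 := by
    have e0 := congrFun hv' 0
    have e1 := congrFun hv' 1
    have e2 := congrFun hv' 2
    simp [imQ] at e0 e1 e2
    ext
    · exact (key v).1
    · exact e0
    · exact e1
    · exact e2
  have e' : pureQ a b v = 0 := by simpa using e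
  ext i
  have e0 := congrArg QuaternionAlgebra.imI e'
  have e1 := congrArg QuaternionAlgebra.imJ e'
  have e2 := congrArg QuaternionAlgebra.imK e'
  fin_cases i
  · exact e0
  · exact e1
  · exact e2

theorem three_two {K : Type*} [Field K] (a b c d : K)
    (h : (quaternionPureNormForm K a b).Equivalent (quaternionPureNormForm K c d)) :
    (quaternionNormForm K a b).Equivalent (quaternionNormForm K c d) := by
  obtain ⟨f⟩ := h
  refine equiv_of_inj _ _
    ((consZ K) ∘ₗ (f.toLinearEquiv : (Fin 3 → K) →ₗ[K] (Fin 3 → K)) ∘ₗ (tailZ K)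
      + (LinearMap.single K (fun _ : Fin 4 => K) 0) ∘ₗ (LinearMap.proj 0)) ?_ ?_
  · intro v hv
    have e0 := congrFun hv 0
    have e1 := congrFun hv 1
    have e2 := congrFun hv 2
    have e3 := congrFun hv 3
    simp [consZ] at e0 e1 e2 e3
    have : f (tailZ K v) = 0 := by
      ext i; fin_cases i
      · exact e1
      · exact e2
      · exact e3
    have h3 : tailZ K v = 0 := f.toLinearEquiv.map_eq_zero_iff.1 this
    have e1 := congrFun h3 0
    have e2 := congrFun h3 1
    have e3 := congrFun h3 2
    simp [tailZ] at e1 e2 e3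
    ext i; fin_cases i <;> simpa
  · intro v
    have := f.map_app (tailZ K v)
    rw [qpf_apply, qpf_apply] at this
    rw [qnf_apply, qnf_apply]
    simp [consZ]
    simp [tailZ] at this ⊢
    linear_combination this

theorem two_three {K : Type*} [Field K] (h2 : (2 : K) ≠ 0) (a b c d : K)
    (h : (quaternionNormForm K a b).Equivalent (quaternionNormForm K c d)) :
    (quaternionPureNormForm K a b).Equivalent (quaternionPureNormForm K c d) := by
  obtain ⟨f⟩ := h
  set e : Fin 4 → K := ![1, 0, 0, 0] with he
  set w := fullQ c d (f e) with hw
  have hN : w.re * w.re - c * (w.imI * w.imI) - d * (w.imJ * w.imJ)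
      + c * d * (w.imK * w.imK) = 1 := by
    have := f.map_app e
    rw [qnf_apply, qnf_apply] at this
    simpa [he, hw, fullQ] using this
  have hww : w * star w = 1 := by
    ext <;> simp
    · linear_combination hN
    all_goals ring
  have hww' : star w * w = 1 := by
    ext <;> simp
    · linear_combination hN
    all_goals ring
  set g : (Fin 4 → K) →ₗ[K] ℍ[K, c, d] := LinearMap.mulLeft K (star w) ∘ₗ fullQ c d ∘ₗ
    (f.toLinearEquiv : (Fin 4 → K) →ₗ[K] (Fin 4 → K)) with hg
  have hgv : ∀ v, g v = star w * fullQ c d (f v) := fun v => rfl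
  have hge : g e = 1 := by rw [hgv, ← hw, hww']
  have hgi : ∀ v, g v = 0 → v = 0 := by
    intro v hv
    have h1 : fullQ c d (f v) = 0 := by
      have : w * g v = 0 := by rw [hv, mul_zero]
      rwa [hgv, ← mul_assoc, hww, one_mul] at this
    have : f v = 0 := by
      ext i
      have e0 := congrArg QuaternionAlgebra.re h1
      have e1 := congrArg QuaternionAlgebra.imI h1
      have e2 := congrArg QuaternionAlgebra.imJ h1
      have e3 := congrArg QuaternionAlgebra.imK h1
      fin_cases i
      · exact e0
      · exact e1
      · exact e2
      · exact e3
    exact f.toLinearEquiv.map_eq_zero_iff.1 this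
  have hgN : ∀ v, quaternionNormForm K c d (coordQ c d (g v)) = quaternionNormForm K a b v := by
    intro v
    rw [← f.map_app v, hgv, qnf_apply, qnf_apply]
    set u := f v
    simp [coordQ, fullQ]
    linear_combination (u 0 * u 0 - c * (u 1 * u 1) - d * (u 2 * u 2) + c * d * (u 3 * u 3)) * hN
  have hre : ∀ v, (g (consZ K v)).re = 0 := by
    intro v
    have h1 := hgN (consZ K v)
    have h3 := hgN (consZ K v + e)
    rw [map_add, hge] at h3
    rw [qnf_apply, qnf_apply] at h1 h3
    simp [coordQ, consZ, he] at h1 h3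
    have : 2 * (g ![0, v 0, v 1, v 2]).re = 0 := by linear_combination h3 - h1
    exact (mul_eq_zero.1 this).resolve_left h2
  refine equiv_of_inj _ _ (imQ c d ∘ₗ g ∘ₗ consZ K) ?_ ?_
  · intro v hv
    have hv' : imQ c d (g (consZ K v)) = 0 := hv
    have h0 : g (consZ K v) = 0 := by
      ext
      · exact hre v
      · exact congrFun hv' 0
      · exact congrFun hv' 1
      · exact congrFun hv' 2
    have h1 := hgi _ h0
    ext i; fin_cases i
    · exact congrFun h1 1
    · exact congrFun h1 2
    · exact congrFun h1 3
  · intro v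
    have h1 := hgN (consZ K v)
    have h3 := hre v
    rw [qnf_apply, qnf_apply] at h1
    change quaternionPureNormForm K c d (imQ c d (g (consZ K v))) = _
    rw [qpf_apply, qpf_apply]
    simp [coordQ, imQ, h3] at h1 ⊢
    simp [consZ] at h1 ⊢
    linear_combination h1

theorem three_one {K : Type*} [Field K] (h20 : (2 : K) ≠ 0) (a b c d : K) (ha : a ≠ 0) (hb : b ≠ 0)
    (h : (quaternionPureNormForm K a b).Equivalent (quaternionPureNormForm K c d)) :
    Nonempty (ℍ[K, a, b] ≃ₐ[K] ℍ[K, c, d]) := by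
  obtain ⟨f⟩ := h
  have h1 := f.map_app ![1, 0, 0]
  have h2 := f.map_app ![0, 1, 0]
  have h3 := f.map_app (![1, 0, 0] + ![0, 1, 0])
  have hadd : f (![1, 0, 0] + ![0, 1, 0]) = f ![1, 0, 0] + f ![0, 1, 0] :=
    f.toLinearEquiv.map_add _ _
  rw [hadd] at h3
  set u := f ![1, 0, 0]
  set v := f ![0, 1, 0]
  rw [qpf_apply, qpf_apply] at h1 h2 h3
  simp at h1 h2 h3
  have horth : 2 * (- c * (u 0 * v 0) - d * (u 1 * v 1) + c * d * (u 2 * v 2)) = 0 := by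
    linear_combination h3 - h1 - h2
  have ho := (mul_eq_zero.1 horth).resolve_left h20
  let B : QuaternionAlgebra.Basis ℍ[K, c, d] a 0 b :=
    { i := pureQ c d u
      j := pureQ c d v
      k := pureQ c d u * pureQ c d v
      i_mul_i := by
        ext <;> simp [pureQ]
        · linear_combination -h1
        all_goals ring
      j_mul_j := by
        ext <;> simp [pureQ]
        · linear_combination -h2
        all_goals ring
      i_mul_j := rfl
      j_mul_i := by
        ext <;> simp [pureQ]
        · linear_combination -2 * ho
        all_goals ring }
  have hre : ∀ q : ℍ[K, a, b], (B.liftHom q).re = q.re := by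
    intro q
    simp [QuaternionAlgebra.Basis.lift, B, pureQ, QuaternionAlgebra.algebraMap_eq]
    right
    linear_combination -ho
  have hinj : Function.Injective B.liftHom := by
    refine (injective_iff_map_eq_zero _).2 fun q hq => ?_
    have hz : ∀ y, (q * y).re = 0 := by
      intro y
      rw [← hre, map_mul, hq, zero_mul]
      rfl
    have z0 := hz 1
    have z1 := hz ⟨0, 1, 0, 0⟩
    have z2 := hz ⟨0, 0, 1, 0⟩
    have z3 := hz ⟨0, 0, 0, 1⟩
    simp [ha, hb] at z0 z1 z2 z3
    ext <;> simpa
  have hfr : Module.finrank K ℍ[K, a, b] = Module.finrank K ℍ[K, c, d] := by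
    rw [QuaternionAlgebra.finrank_eq_four, QuaternionAlgebra.finrank_eq_four]
  have hsurj : Function.Surjective B.liftHom :=
    (LinearMap.injective_iff_surjective_of_finrank_eq_finrank
      (f := B.liftHom.toLinearMap) hfr).1 hinj
  exact ⟨AlgEquiv.ofBijective B.liftHom ⟨hinj, hsurj⟩⟩

theorem stmt_0 (K : Type*) [Field K] (hK : ringChar K ≠ 2)
    (a b c d : K) (ha : a ≠ 0) (hb : b ≠ 0) (hc : c ≠ 0) (hd : d ≠ 0) :
    List.TFAE
      [Nonempty (ℍ[K, a, b] ≃ₐ[K] ℍ[K, c, d]),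
       (quaternionNormForm K a b).Equivalent (quaternionNormForm K c d),
       (quaternionPureNormForm K a b).Equivalent (quaternionPureNormForm K c d)] := by
  have h2 : (2 : K) ≠ 0 := Ring.two_ne_zero hK
  tfae_have 1 → 3 := fun ⟨φ⟩ => one_three h2 a b c d φ
  tfae_have 3 → 2 := three_two a b c d
  tfae_have 2 → 3 := two_three h2 a b c d
  tfae_have 3 → 1 := three_one h2 a b c d ha hb
  tfae_finish
end

section
/- Let K be a field of characteristic different from 2 and let a, b be nonzero elements of K. Then the following are equivalent: (1) ℍ[K,a,b] is a division ring; (2) the quaternary norm form ⟨1,−a,−b,ab⟩ is anisotropic over K; (3) the ternary pure norm form ⟨−a,−b,ab⟩ is anisotropic over K. -/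
open Quaternion

theorem quaternionNormForm_anis_iff (K : Type*) [Field K] (a b : K) :
    (quaternionNormForm K a b).Anisotropic ↔
      ∀ x y z w : K, x * x - a * (y * y) - b * (z * z) + a * b * (w * w) = 0 →
        x = 0 ∧ y = 0 ∧ z = 0 ∧ w = 0 := by
  constructor
  · intro h x y z w e
    have h0 := h ![x, y, z, w] (by
      simp [quaternionNormForm, QuadraticMap.weightedSumSquares_apply, Fin.sum_univ_four]
      linear_combination e)
    exact ⟨by simpa using congrFun h0 0, by simpa using congrFun h0 1,
      by simpa using congrFun h0 2, by simpa using congrFun h0 3⟩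
  · intro h v e
    simp [quaternionNormForm, QuadraticMap.weightedSumSquares_apply, Fin.sum_univ_four] at e
    obtain ⟨h0, h1, h2, h3⟩ := h (v 0) (v 1) (v 2) (v 3) (by linear_combination e)
    ext i
    fin_cases i <;> simpa

theorem quaternionPureNormForm_anis_iff (K : Type*) [Field K] (a b : K) :
    (quaternionPureNormForm K a b).Anisotropic ↔
      ∀ y z w : K, - a * (y * y) - b * (z * z) + a * b * (w * w) = 0 →
        y = 0 ∧ z = 0 ∧ w = 0 := by
  constructor
  · intro h y z w e
    have h0 := h ![y, z, w] (by
      simp [quaternionPureNormForm, QuadraticMap.weightedSumSquares_apply, Fin.sum_univ_three]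
      linear_combination e)
    exact ⟨by simpa using congrFun h0 0, by simpa using congrFun h0 1,
      by simpa using congrFun h0 2⟩
  · intro h v e
    simp [quaternionPureNormForm, QuadraticMap.weightedSumSquares_apply, Fin.sum_univ_three] at e
    obtain ⟨h0, h1, h2⟩ := h (v 0) (v 1) (v 2) (by linear_combination e)
    ext i
    fin_cases i <;> simpa

theorem stmt_1 (K : Type*) [Field K] (hK : ringChar K ≠ 2)
    (a b : K) (ha : a ≠ 0) (hb : b ≠ 0) :
    List.TFAE
      [∀ x : ℍ[K, a, b], x ≠ 0 → IsUnit x,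
       (quaternionNormForm K a b).Anisotropic,
       (quaternionPureNormForm K a b).Anisotropic] := by
  rw [quaternionNormForm_anis_iff, quaternionPureNormForm_anis_iff]
  tfae_have 1 → 2 := by
    intro h x y z w e
    by_contra hne
    have hq : (⟨x, y, z, w⟩ : ℍ[K, a, b]) ≠ 0 := by
      intro h0
      rw [QuaternionAlgebra.ext_iff] at h0
      exact hne (by simpa using h0)
    have hm : (⟨x, y, z, w⟩ : ℍ[K, a, b]) * ⟨x, -y, -z, -w⟩ = 0 := by
      ext <;> simp
      · linear_combination e
      all_goals ring
    have h1 := (h _ hq).mul_right_eq_zero.mp hm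
    rw [QuaternionAlgebra.ext_iff] at h1
    exact hne (by simpa using h1)
  tfae_have 2 → 1 := by
    rintro h ⟨x, y, z, w⟩ hq
    have hN : x * x - a * (y * y) - b * (z * z) + a * b * (w * w) ≠ 0 := by
      intro e
      obtain ⟨rfl, rfl, rfl, rfl⟩ := h x y z w e
      exact hq rfl
    obtain ⟨n, hn⟩ : ∃ n, (x * x - a * (y * y) - b * (z * z) + a * b * (w * w)) * n = 1 :=
      ⟨_, mul_inv_cancel₀ hN⟩
    refine ⟨⟨⟨x, y, z, w⟩, ⟨x * n, -y * n, -z * n, -w * n⟩, ?_, ?_⟩, rfl⟩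
    · ext <;> simp
      · linear_combination hn
      all_goals ring
    · ext <;> simp
      · linear_combination hn
      all_goals ring
  tfae_have 2 → 3 := fun h y z w e => (h 0 y z w (by linear_combination e)).2
  tfae_have 3 → 2 := by
    intro h x y z w e
    obtain ⟨h1, -, -⟩ := h (b * (z * z - a * (w * w))) (a * (x * w + y * z)) (x * z + a * y * w)
      (by linear_combination a * b * (z * z - a * (w * w)) * e)
    have h2 : z * z - a * (w * w) = 0 := (mul_eq_zero.mp h1).resolve_left hb
    obtain ⟨-, hz, hw⟩ := h 0 z w (by linear_combination -b * h2)
    subst hz hw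
    obtain ⟨-, hx, hy⟩ := h 0 x y (by linear_combination -b * e)
    exact ⟨hx, hy, rfl, rfl⟩
  tfae_finish
end

section
/- Let p be a prime number. There exist nonzero a₀, b₀ ∈ ℚ_p such that D := ℍ[ℚ_p,a₀,b₀] is a division ring, and for all nonzero a, b ∈ ℚ_p, the quaternion algebra ℍ[ℚ_p,a,b] is isomorphic as a ℚ_p-algebra either to the matrix algebra M₂(ℚ_p) or to D, but not to both (D is not isomorphic to M₂(ℚ_p)). In other words, there are exactly two quaternion algebras over ℚ_p up to isomorphism. -/
open Quaternion

/-- A ring is a division ring if it is nontrivial and every nonzero element is invertible. -/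
def IsDivisionRingPred (A : Type*) [Ring A] : Prop :=
  (1 : A) ≠ 0 ∧ ∀ x : A, x ≠ 0 → IsUnit x

namespace QP
variable {K : Type*} [Field K]

/-- An algebra hom out of a nondegenerate quaternion algebra kills only elements of real part 0. -/
theorem re_of_ker [NeZero (2 : K)] {A : Type*} [Ring A] [Algebra K A] [Nontrivial A] {c d : K}
    (hc : c ≠ 0) (hd : d ≠ 0) (f : ℍ[K, c, d] →ₐ[K] A) (x : ℍ[K, c, d]) (hx : f x = 0) :
    x.re = 0 := by
  obtain ⟨r, hr⟩ : ∃ r, r = 4 * c * d * x.re := ⟨_, rfl⟩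
  have key : (algebraMap K ℍ[K, c, d]) r =
      (c * d) • x + d • ((⟨0,1,0,0⟩ : ℍ[K, c, d]) * x * ⟨0,1,0,0⟩)
        + c • ((⟨0,0,1,0⟩ : ℍ[K, c, d]) * x * ⟨0,0,1,0⟩)
        - ((⟨0,0,0,1⟩ : ℍ[K, c, d]) * x * ⟨0,0,0,1⟩) := by
    rw [QuaternionAlgebra.coe_algebraMap]
    ext <;> simp <;> (try rw [hr]) <;> ring
  have h := congrArg f key
  simp only [map_sub, map_add, map_smul, map_mul f, hx, AlgHom.commutes] at h
  simp only [smul_zero, mul_zero, zero_mul, add_zero, sub_zero] at h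
  rw [map_eq_zero_iff _ (algebraMap K A).injective, hr] at h
  have h2 : (2 : K) ≠ 0 := NeZero.ne _
  have h4 : (4 : K) ≠ 0 := by
    have : (4 : K) = 2 * 2 := by norm_num
    rw [this]; exact mul_ne_zero h2 h2
  simpa [h4, hc, hd] using h

theorem hom_inj [NeZero (2 : K)] {A : Type*} [Ring A] [Algebra K A] [Nontrivial A] {c d : K}
    (hc : c ≠ 0) (hd : d ≠ 0) (f : ℍ[K, c, d] →ₐ[K] A) : Function.Injective f := by
  rw [injective_iff_map_eq_zero]
  intro x hx
  have h1 := re_of_ker hc hd f x hx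
  have h2 := re_of_ker hc hd f (x * ⟨0,1,0,0⟩) (by rw [map_mul, hx, zero_mul])
  have h3 := re_of_ker hc hd f (x * ⟨0,0,1,0⟩) (by rw [map_mul, hx, zero_mul])
  have h4 := re_of_ker hc hd f (x * ⟨0,0,0,1⟩) (by rw [map_mul, hx, zero_mul])
  simp [hc, hd] at h2 h3 h4
  ext <;> simp [*]

theorem equiv_of_basis [NeZero (2 : K)] {A : Type*} [Ring A] [Algebra K A] [Nontrivial A]
    (hA : Module.finrank K A = 4) {c d : K}
    (hc : c ≠ 0) (hd : d ≠ 0) (q : QuaternionAlgebra.Basis A c 0 d) :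
    Nonempty (ℍ[K, c, d] ≃ₐ[K] A) := by
  have hi := hom_inj hc hd q.liftHom
  have : FiniteDimensional K A := Module.finite_of_finrank_pos (by omega)
  refine ⟨AlgEquiv.ofBijective q.liftHom ⟨hi, ?_⟩⟩
  have := (LinearMap.injective_iff_surjective_of_finrank_eq_finrank
    (f := q.liftHom.toLinearMap) (by rw [hA, QuaternionAlgebra.finrank_eq_four])).1 hi
  exact this

theorem equiv_of [NeZero (2 : K)] {a b c d : K}
    (hc : c ≠ 0) (hd : d ≠ 0) (i j : ℍ[K, a, b])
    (h1 : i * i = c • 1) (h2 : j * j = d • 1) (h3 : j * i = - (i * j)) :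
    Nonempty (ℍ[K, a, b] ≃ₐ[K] ℍ[K, c, d]) := by
  obtain ⟨e⟩ := equiv_of_basis (A := ℍ[K, a, b]) (QuaternionAlgebra.finrank_eq_four _ _ _) hc hd
    { i := i, j := j, k := i * j
      i_mul_i := by simp [h1]
      j_mul_j := h2
      i_mul_j := rfl
      j_mul_i := by simp [h3] }
  exact ⟨e.symm⟩

theorem e_swap [NeZero (2 : K)] {a b : K} (ha : a ≠ 0) (hb : b ≠ 0) :
    Nonempty (ℍ[K, a, b] ≃ₐ[K] ℍ[K, b, a]) := by
  refine equiv_of hb ha ⟨0,0,1,0⟩ ⟨0,1,0,0⟩ ?_ ?_ ?_ <;> ext <;> simp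

/-- Multiply the second slot by a norm. -/
theorem e_norm [NeZero (2 : K)] {a b : K} (ha : a ≠ 0) (hb : b ≠ 0) (x y : K)
    (h : x ^ 2 - a * y ^ 2 ≠ 0) :
    Nonempty (ℍ[K, a, b] ≃ₐ[K] ℍ[K, a, b * (x ^ 2 - a * y ^ 2)]) := by
  refine equiv_of ha (mul_ne_zero hb h) ⟨0,1,0,0⟩ ⟨0,0,x,y⟩ ?_ ?_ ?_ <;> ext <;> simp <;> ring

theorem e_add [NeZero (2 : K)] {a b : K} (ha : a ≠ 0) (hb : b ≠ 0) (h : a + b ≠ 0) :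
    Nonempty (ℍ[K, a, b] ≃ₐ[K] ℍ[K, a + b, - (a * b)]) := by
  refine equiv_of h (neg_ne_zero.2 (mul_ne_zero ha hb)) ⟨0,1,1,0⟩ ⟨0,0,0,1⟩ ?_ ?_ ?_ <;>
    ext <;> simp

theorem e_sq [NeZero (2 : K)] {a b s t : K} (ha : a ≠ 0) (hb : b ≠ 0) (hs : s ≠ 0) (ht : t ≠ 0) :
    Nonempty (ℍ[K, a, b] ≃ₐ[K] ℍ[K, a * s ^ 2, b * t ^ 2]) := by
  refine equiv_of (mul_ne_zero ha (pow_ne_zero 2 hs)) (mul_ne_zero hb (pow_ne_zero 2 ht))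
    ⟨0,s,0,0⟩ ⟨0,0,t,0⟩ ?_ ?_ ?_ <;> ext <;> simp <;> ring

theorem e_mat [NeZero (2 : K)] {b s : K} (hb : b ≠ 0) (hs : s ≠ 0) :
    Nonempty (ℍ[K, s ^ 2, b] ≃ₐ[K] Matrix (Fin 2) (Fin 2) K) := by
  refine equiv_of_basis (by simp [Module.finrank_matrix]) (pow_ne_zero 2 hs) hb
    { i := !![s, 0; 0, -s], j := !![0, b; 1, 0], k := !![0, s * b; -s, 0]
      i_mul_i := ?_, j_mul_j := ?_, i_mul_j := ?_, j_mul_i := ?_ } <;>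
  · ext i j
    fin_cases i <;> fin_cases j <;> simp [pow_two, mul_comm]

theorem div_of_aniso {a b : K}
    (h : ∀ x y z w : K, (x ^ 2 - a * y ^ 2) - b * (z ^ 2 - a * w ^ 2) = 0 →
      x = 0 ∧ y = 0 ∧ z = 0 ∧ w = 0) : IsDivisionRingPred ℍ[K, a, b] := by
  refine ⟨one_ne_zero, fun q hq => ?_⟩
  set n := (q.re ^ 2 - a * q.imI ^ 2) - b * (q.imJ ^ 2 - a * q.imK ^ 2) with hn
  have hn0 : n ≠ 0 := by
    intro h0
    obtain ⟨h1, h2, h3, h4⟩ := h _ _ _ _ (hn ▸ h0)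
    exact hq (QuaternionAlgebra.ext h1 h2 h3 h4)
  have e1 : q * star q = n • 1 := by ext <;> simp [hn] <;> ring
  have e2 : star q * q = n • 1 := by ext <;> simp [hn] <;> ring
  refine ⟨⟨q, n⁻¹ • star q, ?_, ?_⟩, rfl⟩
  · rw [mul_smul_comm, e1, smul_smul, inv_mul_cancel₀ hn0, one_smul]
  · rw [smul_mul_assoc, e2, smul_smul, inv_mul_cancel₀ hn0, one_smul]

theorem not_mat_of_div {A : Type*} [Ring A] [Algebra K A] (h : IsDivisionRingPred A) :
    ¬ Nonempty (A ≃ₐ[K] Matrix (Fin 2) (Fin 2) K) := by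
  rintro ⟨e⟩
  have hne : (!![1, 0; 0, 0] : Matrix (Fin 2) (Fin 2) K) ≠ 0 := by
    intro h; simpa using congrFun (congrFun h 0) 0
  have hu := (h.2 (e.symm !![1, 0; 0, 0]) (by simpa using hne)).map e
  rw [AlgEquiv.apply_symm_apply, Matrix.isUnit_iff_isUnit_det] at hu
  simp at hu

/-- The dichotomy. -/
def R (u π a b : K) : Prop :=
  Nonempty (ℍ[K, a, b] ≃ₐ[K] Matrix (Fin 2) (Fin 2) K) ∨
    Nonempty (ℍ[K, a, b] ≃ₐ[K] ℍ[K, u, π])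

theorem R.of {u π a b c d : K} (h : Nonempty (ℍ[K, a, b] ≃ₐ[K] ℍ[K, c, d])) (hr : R u π c d) :
    R u π a b := by
  obtain ⟨e⟩ := h
  unfold R at hr
  rcases hr with hf | hf
  · obtain ⟨f⟩ := hf
    exact Or.inl ⟨e.trans f⟩
  · obtain ⟨f⟩ := hf
    exact Or.inr ⟨e.trans f⟩

theorem R.congr {u π a b c d : K} (h1 : c = a) (h2 : d = b) (hr : R u π c d) :
    R u π a b := by subst h1; subst h2; exact hr

end QP

namespace QP
section padic
variable {p : ℕ} [hp : Fact p.Prime]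

theorem p_ne : (p : ℚ_[p]) ≠ 0 := by exact_mod_cast hp.out.ne_zero

theorem coe_ne {v : ℤ_[p]} (hv : ‖v‖ = 1) : (v : ℚ_[p]) ≠ 0 := by
  intro h
  rw [PadicInt.norm_def, h] at hv
  simp at hv

theorem exists_lift {x : ℚ_[p]} (hx : ‖x‖ ≤ 1) : ∃ y : ℤ_[p], (y : ℚ_[p]) = x := ⟨⟨x, hx⟩, rfl⟩

theorem decomp (a : ℚ_[p]) (ha : a ≠ 0) : ∃ v : ℤ_[p], ‖v‖ = 1 ∧ ∃ s : ℚ_[p], s ≠ 0 ∧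
    (a = v * s ^ 2 ∨ a = v * p * s ^ 2) := by
  have hp0 := p_ne (p := p)
  have hn : ‖a * (p : ℚ_[p]) ^ (-a.valuation)‖ = 1 := by
    have hpr : (p : ℝ) ≠ 0 := by exact_mod_cast hp.out.ne_zero
    rw [norm_mul, Padic.norm_eq_zpow_neg_valuation ha, Padic.norm_p_zpow, ← zpow_add₀ hpr]
    simp
  refine ⟨⟨_, hn.le⟩, hn, ?_⟩
  rcases Int.even_or_odd' a.valuation with ⟨k, hk | hk⟩
  · refine ⟨(p : ℚ_[p]) ^ k, zpow_ne_zero _ hp0, Or.inl ?_⟩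
    have : ((p : ℚ_[p]) ^ k) ^ 2 = (p : ℚ_[p]) ^ a.valuation := by
      rw [hk, ← zpow_natCast, ← zpow_mul, mul_comm]; rfl
    rw [this, mul_assoc, ← zpow_add₀ hp0]; simp
  · refine ⟨(p : ℚ_[p]) ^ k, zpow_ne_zero _ hp0, Or.inr ?_⟩
    have : (p : ℚ_[p]) * ((p : ℚ_[p]) ^ k) ^ 2 = (p : ℚ_[p]) ^ a.valuation := by
      rw [hk, ← zpow_natCast, ← zpow_mul, mul_comm, ← zpow_add_one₀ hp0, mul_comm k]; rfl
    rw [mul_assoc, this, mul_assoc, ← zpow_add₀ hp0]; simp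

theorem R.swap {u π a b : ℚ_[p]} (ha : a ≠ 0) (hb : b ≠ 0) (h : R u π b a) : R u π a b :=
  R.of (e_swap ha hb) h

/-- Remove squares. -/
theorem R.sq {u π a b s t : ℚ_[p]} (ha : a ≠ 0) (hb : b ≠ 0) (hs : s ≠ 0) (ht : t ≠ 0)
    (h : R u π a b) : R u π (a * s ^ 2) (b * t ^ 2) := by
  obtain ⟨e⟩ := e_sq ha hb hs ht
  exact R.of ⟨e.symm⟩ h

theorem final (u : ℤ_[p]) (hu : ‖u‖ = 1)
    (H2 : ∀ v : ℤ_[p], ‖v‖ = 1 → ∃ x y t : ℚ_[p], t ≠ 0 ∧ v * t ^ 2 = x ^ 2 - u * y ^ 2)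
    (c d s : ℚ_[p]) (hs : s ≠ 0) (hd : d ≠ 0) (hc : c = s ^ 2 ∨ c = u * s ^ 2) :
    R (u : ℚ_[p]) p c d := by
  have hu0 := coe_ne hu
  have hp0 := p_ne (p := p)
  rcases hc with rfl | rfl
  · exact Or.inl (e_mat hd hs)
  obtain ⟨v, hv, r, hr, hd'⟩ := decomp d hd
  obtain ⟨x, y, t, ht, hN⟩ := H2 v hv
  have hv0 := coe_ne hv
  have hN0 : x ^ 2 - u * y ^ 2 ≠ 0 := by
    rw [← hN]; exact mul_ne_zero hv0 (pow_ne_zero 2 ht)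
  have key : ∀ e : ℚ_[p], e ≠ 0 → R (u : ℚ_[p]) p u (e) → R (u : ℚ_[p]) p u (v * e * r ^ 2) := by
    intro e he h
    refine R.of (e_norm hu0 (mul_ne_zero (mul_ne_zero hv0 he) (pow_ne_zero 2 hr)) x y hN0) ?_
    refine R.congr (c := u * 1 ^ 2) (d := e * (v * r * t) ^ 2) (by ring) (by rw [← hN]; ring) ?_
    exact R.sq hu0 he one_ne_zero (mul_ne_zero (mul_ne_zero hv0 hr) ht) h
  refine R.congr (c := u * s ^ 2) (d := d * 1 ^ 2) rfl (by ring) (R.sq hu0 hd hs one_ne_zero ?_)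
  rcases hd' with h | h
  · refine R.congr rfl (by rw [h, mul_one]) (key 1 one_ne_zero ?_)
    refine R.swap hu0 one_ne_zero (Or.inl ?_)
    have := e_mat (s := (1 : ℚ_[p])) hu0 one_ne_zero
    rwa [one_pow] at this
  · exact R.congr rfl h.symm (key p hp0 (Or.inr ⟨AlgEquiv.refl⟩))

theorem reduce {u π : ℚ_[p]}
    (h1 : ∀ v w : ℤ_[p], ‖v‖ = 1 → ‖w‖ = 1 → R u π (v : ℚ_[p]) (w : ℚ_[p]))
    (h2 : ∀ v w : ℤ_[p], ‖v‖ = 1 → ‖w‖ = 1 → R u π (v : ℚ_[p]) ((w : ℚ_[p]) * p))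
    (a b : ℚ_[p]) (ha : a ≠ 0) (hb : b ≠ 0) : R u π a b := by
  have hp0 := p_ne (p := p)
  obtain ⟨v, hv, s, hs, hva⟩ := decomp a ha
  obtain ⟨w, hw, t, ht, hwb⟩ := decomp b hb
  have hv0 := coe_ne hv
  have hw0 := coe_ne hw
  rcases hva with rfl | rfl <;> rcases hwb with rfl | rfl
  · exact R.sq hv0 hw0 hs ht (h1 v w hv hw)
  · exact R.sq hv0 (mul_ne_zero hw0 hp0) hs ht (h2 v w hv hw)
  · exact R.swap ha hb (R.sq hw0 (mul_ne_zero hv0 hp0) ht hs (h2 w v hw hv))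
  · have hvp := mul_ne_zero hv0 hp0
    have hwp := mul_ne_zero hw0 hp0
    refine R.sq hvp hwp hs ht ?_
    refine R.of (e_norm hvp hwp 0 1 (by simpa using hvp)) ?_
    have hn : ‖-(v * w)‖ = 1 := by rw [norm_neg, norm_mul, hv, hw, one_mul]
    refine R.congr (c := (v * p) * 1 ^ 2) (d := ((-(v * w) : ℤ_[p]) : ℚ_[p]) * p ^ 2)
      (by ring) (by push_cast; ring) ?_
    refine R.sq hvp (coe_ne hn) one_ne_zero hp0 ?_
    exact R.swap hvp (coe_ne hn) (h2 _ _ hn hv)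

theorem assemble (u : ℤ_[p]) (hu : ‖u‖ = 1)
    (H1 : ∀ t : ℤ_[p], ∃ n : ℤ, ‖1 - u * t ^ 2‖ = (p : ℝ) ^ (2 * n))
    (H1' : ∀ t : ℤ_[p], ∃ n : ℤ, ‖t ^ 2 - u‖ = (p : ℝ) ^ (2 * n))
    (H3 : ∀ v w : ℤ_[p], ‖v‖ = 1 → ‖w‖ = 1 → R (u : ℚ_[p]) p (v : ℚ_[p]) (w : ℚ_[p]))
    (H4 : ∀ v w : ℤ_[p], ‖v‖ = 1 → ‖w‖ = 1 → R (u : ℚ_[p]) p (v : ℚ_[p]) ((w : ℚ_[p]) * p)) :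
    ∃ a₀ b₀ : ℚ_[p], a₀ ≠ 0 ∧ b₀ ≠ 0 ∧
      IsDivisionRingPred ℍ[ℚ_[p], a₀, b₀] ∧
      ¬ Nonempty (ℍ[ℚ_[p], a₀, b₀] ≃ₐ[ℚ_[p]] Matrix (Fin 2) (Fin 2) ℚ_[p]) ∧
      ∀ a b : ℚ_[p], a ≠ 0 → b ≠ 0 →
        Nonempty (ℍ[ℚ_[p], a, b] ≃ₐ[ℚ_[p]] Matrix (Fin 2) (Fin 2) ℚ_[p]) ∨
        Nonempty (ℍ[ℚ_[p], a, b] ≃ₐ[ℚ_[p]] ℍ[ℚ_[p], a₀, b₀]) := by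
  have hp0 := p_ne (p := p)
  have hpr : (p : ℝ) ≠ 0 := by exact_mod_cast hp.out.ne_zero
  have hsq : ∀ x : ℚ_[p], x ≠ 0 → ∃ n : ℤ, ‖x ^ 2‖ = (p : ℝ) ^ (2 * n) := by
    intro x hx
    refine ⟨-x.valuation, ?_⟩
    rw [norm_pow, Padic.norm_eq_zpow_neg_valuation hx, ← zpow_natCast, ← zpow_mul, mul_comm]; rfl
  have ev : ∀ x y : ℚ_[p], ¬ (x = 0 ∧ y = 0) →
      ∃ n : ℤ, ‖x ^ 2 - u * y ^ 2‖ = (p : ℝ) ^ (2 * n) := by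
    intro x y hxy
    rcases le_or_gt ‖y‖ ‖x‖ with hle | hlt
    · have hx : x ≠ 0 := by
        rintro rfl
        rw [norm_zero] at hle
        exact hxy ⟨rfl, norm_le_zero_iff.1 hle⟩
      obtain ⟨t, ht⟩ := exists_lift (x := y / x)
        (by rw [norm_div]; exact div_le_one_of_le₀ hle (norm_nonneg _))
      obtain ⟨n, hn⟩ := H1 t
      obtain ⟨m, hm⟩ := hsq x hx
      refine ⟨m + n, ?_⟩
      have : x ^ 2 - u * y ^ 2 = x ^ 2 * ((1 - u * t ^ 2 : ℤ_[p]) : ℚ_[p]) := by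
        push_cast; rw [ht]; field_simp
      rw [this, norm_mul, hm, ← PadicInt.norm_def, hn, ← zpow_add₀ hpr, mul_add]
    · have hy : y ≠ 0 := by
        rintro rfl
        rw [norm_zero] at hlt
        exact absurd hlt (not_lt.2 (norm_nonneg _))
      obtain ⟨t, ht⟩ := exists_lift (x := x / y)
        (by rw [norm_div]; exact div_le_one_of_le₀ hlt.le (norm_nonneg _))
      obtain ⟨n, hn⟩ := H1' t
      obtain ⟨m, hm⟩ := hsq y hy
      refine ⟨m + n, ?_⟩
      have : x ^ 2 - u * y ^ 2 = y ^ 2 * ((t ^ 2 - u : ℤ_[p]) : ℚ_[p]) := by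
        push_cast; rw [ht]; field_simp
      rw [this, norm_mul, hm, ← PadicInt.norm_def, hn, ← zpow_add₀ hpr, mul_add]
  have hdiv : IsDivisionRingPred ℍ[ℚ_[p], (u : ℚ_[p]), (p : ℚ_[p])] := by
    apply div_of_aniso
    intro x y z w h
    have h' : x ^ 2 - u * y ^ 2 = p * (z ^ 2 - u * w ^ 2) := sub_eq_zero.1 h
    have hpos : ∀ n : ℤ, (p : ℝ) ^ n ≠ 0 := fun n => zpow_ne_zero _ hpr
    by_cases h1 : x = 0 ∧ y = 0
    · by_cases h2 : z = 0 ∧ w = 0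
      · exact ⟨h1.1, h1.2, h2.1, h2.2⟩
      · obtain ⟨n, hn⟩ := ev z w h2
        obtain ⟨rfl, rfl⟩ := h1
        have h3 : z ^ 2 - u * w ^ 2 = 0 := by
          have : (p : ℚ_[p]) * (z ^ 2 - u * w ^ 2) = 0 := by rw [← h']; ring
          exact (mul_eq_zero.1 this).resolve_left hp0
        rw [h3, norm_zero] at hn
        exact absurd hn.symm (hpos _)
    · obtain ⟨m, hm⟩ := ev x y h1
      by_cases h2 : z = 0 ∧ w = 0
      · obtain ⟨rfl, rfl⟩ := h2
        have h3 : x ^ 2 - u * y ^ 2 = 0 := by rw [h']; ring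
        rw [h3, norm_zero] at hm
        exact absurd hm.symm (hpos _)
      · obtain ⟨n, hn⟩ := ev z w h2
        rw [h', norm_mul, hn, Padic.norm_p, ← zpow_neg_one, ← zpow_add₀ hpr] at hm
        have := zpow_right_injective₀ (a := (p : ℝ)) (by exact_mod_cast hp.out.pos)
          (by exact_mod_cast hp.out.one_lt.ne') hm
        omega
  exact ⟨u, p, coe_ne hu, hp0, hdiv, not_mat_of_div hdiv, fun a b ha hb => reduce H3 H4 a b ha hb⟩

theorem hensel_sq (v w : ℤ_[p]) (h : ‖w ^ 2 - v‖ < ‖2 * w‖ ^ 2) : ∃ s : ℤ_[p], s ^ 2 = v := by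
  obtain ⟨z, hz, -⟩ := hensels_lemma (p := p) (R := ℤ_[p])
    (F := Polynomial.X ^ 2 - Polynomial.C v) (a := w) (by simpa [Polynomial.derivative_X_pow, one_add_one_eq_two] using h)
  exact ⟨z, sub_eq_zero.1 (by simpa using hz)⟩

theorem norm_one_iff (x : ℤ_[p]) : ‖x‖ = 1 ↔ PadicInt.toZMod x ≠ 0 := by
  rw [← PadicInt.isUnit_iff, Ne, ← RingHom.mem_ker, PadicInt.ker_toZMod,
    IsLocalRing.mem_maximalIdeal, mem_nonunits_iff, not_not]

theorem norm_lt_iff (x : ℤ_[p]) : ‖x‖ < 1 ↔ PadicInt.toZMod x = 0 := by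
  rw [← not_iff_not, ← Ne, ← norm_one_iff, not_lt]
  exact ⟨fun h => le_antisymm (PadicInt.norm_le_one _) h, fun h => h.ge⟩

theorem toZMod_surj (x : ZMod p) : ∃ y : ℤ_[p], PadicInt.toZMod y = x :=
  ⟨(x.val : ℤ_[p]), by simp⟩

theorem odd_sq (hp2 : p ≠ 2) (v w : ℤ_[p]) (hv : ‖v‖ = 1)
    (h : PadicInt.toZMod v = PadicInt.toZMod w ^ 2) : ∃ s : ℤ_[p], s ^ 2 = v := by
  refine hensel_sq v w ?_
  have h2 : ‖(2 : ℤ_[p]) * w‖ = 1 := by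
    rw [norm_one_iff, map_mul]
    rw [norm_one_iff, h] at hv
    refine mul_ne_zero ?_ (by rintro h0; simp [h0] at hv)
    have : Fact (2 < p) := ⟨lt_of_le_of_ne hp.out.two_le hp2.symm⟩
    have := ZMod.neg_one_ne_one (n := p)
    rw [map_ofNat]
    intro h0
    apply this
    linear_combination -h0
  rw [h2, one_pow, norm_lt_iff, map_sub, map_pow, h, sub_self]

theorem odd_case (hp2 : p ≠ 2) :
    ∃ a₀ b₀ : ℚ_[p], a₀ ≠ 0 ∧ b₀ ≠ 0 ∧
      IsDivisionRingPred ℍ[ℚ_[p], a₀, b₀] ∧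
      ¬ Nonempty (ℍ[ℚ_[p], a₀, b₀] ≃ₐ[ℚ_[p]] Matrix (Fin 2) (Fin 2) ℚ_[p]) ∧
      ∀ a b : ℚ_[p], a ≠ 0 → b ≠ 0 →
        Nonempty (ℍ[ℚ_[p], a, b] ≃ₐ[ℚ_[p]] Matrix (Fin 2) (Fin 2) ℚ_[p]) ∨
        Nonempty (ℍ[ℚ_[p], a, b] ≃ₐ[ℚ_[p]] ℍ[ℚ_[p], a₀, b₀]) := by
  have hchar : ringChar (ZMod p) ≠ 2 := by rwa [ZMod.ringChar_zmod_n]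
  obtain ⟨u', hu'⟩ := FiniteField.exists_nonsquare hchar
  obtain ⟨u, rfl⟩ := toZMod_surj u'
  have hu : ‖u‖ = 1 := by
    rw [norm_one_iff]; intro h; rw [h] at hu'; exact hu' (IsSquare.zero)
  have H2 : ∀ v : ℤ_[p], ‖v‖ = 1 →
      ∃ x y t : ℚ_[p], t ≠ 0 ∧ v * t ^ 2 = x ^ 2 - u * y ^ 2 := by
    intro v hv
    obtain ⟨x', y', hxy⟩ : ∃ x y : ZMod p,
        x ^ 2 - PadicInt.toZMod u * y ^ 2 = PadicInt.toZMod v := by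
      have hu0 := (norm_one_iff u).1 hu
      obtain ⟨x, y, h⟩ := FiniteField.exists_root_sum_quadratic (R := ZMod p)
        (f := Polynomial.X ^ 2 - Polynomial.C (PadicInt.toZMod v))
        (g := Polynomial.C (-PadicInt.toZMod u) * Polynomial.X ^ 2)
        (Polynomial.degree_X_pow_sub_C (by norm_num) _)
        (Polynomial.degree_C_mul_X_pow 2 (neg_ne_zero.2 hu0))
        (by rw [ZMod.card]; exact (hp.out.eq_two_or_odd.resolve_left hp2))
      refine ⟨x, y, ?_⟩
      simp at h
      linear_combination h
    obtain ⟨x, rfl⟩ := toZMod_surj x'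
    obtain ⟨y, rfl⟩ := toZMod_surj y'
    have hn : ‖x ^ 2 - u * y ^ 2‖ = 1 := by
      rw [norm_one_iff] at hv ⊢
      simpa [hxy] using hv
    obtain ⟨s, hs⟩ := odd_sq hp2 (v * (x ^ 2 - u * y ^ 2)) v (by rw [norm_mul, hv, hn, one_mul])
      (by simp [hxy]; ring)
    have hv0 := coe_ne hv
    have hs0 : (s : ℚ_[p]) ≠ 0 := by
      intro h0
      have h1 := congrArg (fun z : ℤ_[p] => (z : ℚ_[p])) hs
      simp only [PadicInt.coe_pow, PadicInt.coe_mul, h0] at h1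
      exact mul_ne_zero hv0 (coe_ne hn) (by rw [← h1]; ring)
    refine ⟨x, y, s / v, div_ne_zero hs0 hv0, ?_⟩
    have h1 := congrArg (fun z : ℤ_[p] => (z : ℚ_[p])) hs
    push_cast at h1
    field_simp
    linear_combination h1
  have Hu : ∀ v : ℤ_[p], ‖v‖ = 1 → ∀ d : ℚ_[p], d ≠ 0 → R (u : ℚ_[p]) p (v : ℚ_[p]) d := by
    intro v hv d hd
    have hu0 := coe_ne hu
    have hv0 := coe_ne hv
    by_cases hsq : IsSquare (PadicInt.toZMod v)
    · obtain ⟨w', hw⟩ := hsq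
      obtain ⟨w, rfl⟩ := toZMod_surj w'
      obtain ⟨s, hs⟩ := odd_sq hp2 v w hv (by rw [hw]; ring)
      have h1 := congrArg (fun z : ℤ_[p] => (z : ℚ_[p])) hs
      push_cast at h1
      refine final u hu H2 v d s ?_ hd (Or.inl h1.symm)
      rintro h0
      rw [h0] at h1
      exact hv0 (by rw [← h1]; ring)
    · have : IsSquare (PadicInt.toZMod (u * v)) := by
        have huv : ‖u * v‖ = 1 := by rw [norm_mul, hu, hv, one_mul]
        rw [← quadraticChar_one_iff_isSquare ((norm_one_iff _).1 huv), map_mul, map_mul,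
          quadraticChar_neg_one_iff_not_isSquare.2 hu', quadraticChar_neg_one_iff_not_isSquare.2 hsq]
        norm_num
      obtain ⟨w', hw⟩ := this
      obtain ⟨w, rfl⟩ := toZMod_surj w'
      obtain ⟨s, hs⟩ := odd_sq hp2 (u * v) w (by rw [norm_mul, hu, hv, one_mul]) (by rw [hw]; ring)
      have h1 := congrArg (fun z : ℤ_[p] => (z : ℚ_[p])) hs
      push_cast at h1
      refine final u hu H2 v d (s / u) (div_ne_zero ?_ hu0) hd (Or.inr ?_)
      · rintro h0
        rw [h0] at h1
        exact mul_ne_zero hu0 hv0 (by rw [← h1]; ring)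
      · field_simp
        linear_combination -h1
  refine assemble u hu ?_ ?_ (fun v w hv hw => Hu v hv _ (coe_ne hw))
    (fun v w hv hw => Hu v hv _ (mul_ne_zero (coe_ne hw) p_ne))
  · refine fun t => ⟨0, ?_⟩
    rw [mul_zero, zpow_zero, norm_one_iff]
    intro h
    simp only [map_sub, map_mul, map_pow, map_one] at h
    have ht : PadicInt.toZMod t ≠ 0 := by
      intro h0
      simp [h0] at h
    refine hu' ⟨(PadicInt.toZMod t)⁻¹, ?_⟩
    field_simp
    linear_combination -h
  · refine fun t => ⟨0, ?_⟩
    rw [mul_zero, zpow_zero, norm_one_iff]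
    intro h
    simp only [map_sub, map_pow] at h
    exact hu' ⟨PadicInt.toZMod t, by linear_combination -h⟩

end padic

section two
open scoped Classical

theorem parity (x : ℤ_[2]) : ∃ y, x = 2 * y ∨ x = 2 * y + 1 := by
  have h01 : ∀ z : ZMod 2, z = 0 ∨ z = 1 := by decide
  have dv : ∀ x : ℤ_[2], PadicInt.toZMod x = 0 → ∃ y, x = 2 * y := by
    intro x h
    have := (PadicInt.norm_lt_one_iff_dvd x).1 ((norm_lt_iff x).2 h)
    exact_mod_cast this
  rcases h01 (PadicInt.toZMod x) with h | h
  · obtain ⟨y, hy⟩ := dv x h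
    exact ⟨y, Or.inl hy⟩
  · obtain ⟨y, hy⟩ := dv (x - 1) (by rw [map_sub, h, map_one, sub_self])
    exact ⟨y, Or.inr (by linear_combination hy)⟩

theorem norm_two : ‖(2 : ℤ_[2])‖ = 2⁻¹ := by
  have := PadicInt.norm_p (p := 2)
  exact_mod_cast this

theorem odd_norm (y : ℤ_[2]) : ‖2 * y + 1‖ = 1 := by
  rw [norm_one_iff, map_add, map_mul, map_ofNat, map_one]
  have : (2 : ZMod 2) = 0 := rfl
  rw [this]; simp

theorem odd_of_norm (x : ℤ_[2]) (h : ‖x‖ = 1) : ∃ y, x = 2 * y + 1 := by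
  obtain ⟨y, rfl | rfl⟩ := parity x
  · exfalso
    rw [norm_mul, norm_two] at h
    have := PadicInt.norm_le_one y
    linarith
  · exact ⟨y, rfl⟩

/-- Units congruent to 1 mod 8 are squares. -/
theorem sq_two (y : ℤ_[2]) : ∃ s : ℤ_[2], s ^ 2 = 8 * y + 1 := by
  refine hensel_sq _ 1 ?_
  have : (1 : ℤ_[2]) ^ 2 - (8 * y + 1) = -(2 * 2 * 2 * y) := by ring
  rw [this]
  simp only [norm_neg, norm_mul, norm_two, mul_one]
  have := PadicInt.norm_le_one y
  linarith

theorem even_case :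
    ∃ a₀ b₀ : ℚ_[2], a₀ ≠ 0 ∧ b₀ ≠ 0 ∧
      IsDivisionRingPred ℍ[ℚ_[2], a₀, b₀] ∧
      ¬ Nonempty (ℍ[ℚ_[2], a₀, b₀] ≃ₐ[ℚ_[2]] Matrix (Fin 2) (Fin 2) ℚ_[2]) ∧
      ∀ a b : ℚ_[2], a ≠ 0 → b ≠ 0 →
        Nonempty (ℍ[ℚ_[2], a, b] ≃ₐ[ℚ_[2]] Matrix (Fin 2) (Fin 2) ℚ_[2]) ∨
        Nonempty (ℍ[ℚ_[2], a, b] ≃ₐ[ℚ_[2]] ℍ[ℚ_[2], a₀, b₀]) := by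
  obtain ⟨u, hudef⟩ : ∃ u : ℤ_[2], u = -3 := ⟨_, rfl⟩
  have hu : ‖u‖ = 1 := by
    have := odd_norm (-2)
    rwa [show 2 * (-2 : ℤ_[2]) + 1 = u by rw [hudef]; norm_num] at this
  have hu0 := coe_ne hu
  have huc : (u : ℚ_[2]) = -3 := by rw [hudef]; push_cast; rfl
  -- v * N is 1 mod 8
  have aux : ∀ v : ℤ_[2], ‖v‖ = 1 → ∀ x y z : ℤ_[2], v * (x ^ 2 + 3 * y ^ 2) = 8 * z + 1 →
      ∃ x y t : ℚ_[2], t ≠ 0 ∧ v * t ^ 2 = x ^ 2 - u * y ^ 2 := by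
    intro v hv x y z h
    obtain ⟨s, hs⟩ := sq_two z
    have hv0 := coe_ne hv
    have hs1 : ‖s‖ = 1 := by
      have h8 : ‖s ^ 2‖ = 1 := by
        rw [hs, show 8 * z + 1 = 2 * (4 * z) + 1 by ring]; exact odd_norm _
      rw [norm_pow] at h8
      exact (pow_eq_one_iff_of_nonneg (norm_nonneg _) two_ne_zero).1 h8
    refine ⟨x, y, s / v, div_ne_zero (coe_ne hs1) hv0, ?_⟩
    have h1 := congrArg (fun z : ℤ_[2] => (z : ℚ_[2])) (hs.trans h.symm)
    simp only [PadicInt.coe_pow, PadicInt.coe_mul, PadicInt.coe_add] at h1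
    have h3 : ((3 : ℤ_[2]) : ℚ_[2]) = 3 := rfl
    rw [h3] at h1
    rw [huc]
    field_simp
    linear_combination h1
  have H2 : ∀ v : ℤ_[2], ‖v‖ = 1 →
      ∃ x y t : ℚ_[2], t ≠ 0 ∧ v * t ^ 2 = x ^ 2 - u * y ^ 2 := by
    intro v hv
    obtain ⟨y, hy⟩ := odd_of_norm v hv
    obtain ⟨z, hz | hz⟩ := parity y <;> obtain ⟨w, hw | hw⟩ := parity z
    · exact aux v hv 1 0 w (by rw [hy, hz, hw]; ring)
    · exact aux v hv 1 2 (13 * w + 8) (by rw [hy, hz, hw]; ring)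
    · exact aux v hv 0 1 (3 * w + 1) (by rw [hy, hz, hw]; ring)
    · exact aux v hv 2 1 (7 * w + 6) (by rw [hy, hz, hw]; ring)
  have Hone : ∀ y : ℤ_[2], ∀ d : ℚ_[2], d ≠ 0 →
      R (u : ℚ_[2]) (2 : ℕ) ((4 * y + 1 : ℤ_[2]) : ℚ_[2]) d := by
    intro y d hd
    have hn : ‖4 * y + 1‖ = 1 := by
      rw [show 4 * y + 1 = 2 * (2 * y) + 1 by ring]; exact odd_norm _
    have hv0 := coe_ne hn
    obtain ⟨w, hw | hw⟩ := parity y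
    · obtain ⟨s, hs⟩ := sq_two w
      have h1 := congrArg (fun z : ℤ_[2] => (z : ℚ_[2]))
        (show s ^ 2 = 4 * y + 1 by rw [hs, hw]; ring)
      simp only [PadicInt.coe_pow] at h1
      refine final u hu H2 _ d s ?_ hd (Or.inl h1.symm)
      rintro h0
      rw [h0] at h1
      exact hv0 (by rw [← h1]; ring)
    · obtain ⟨s, hs⟩ := sq_two (-3 * w - 2)
      have h1 := congrArg (fun z : ℤ_[2] => (z : ℚ_[2]))
        (show s ^ 2 = u * (4 * y + 1) by rw [hs, hw, hudef]; ring)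
      rw [PadicInt.coe_mul, PadicInt.coe_pow] at h1
      refine final u hu H2 _ d (s / u) (div_ne_zero ?_ hu0) hd (Or.inr ?_)
      · rintro h0
        rw [h0] at h1
        exact mul_ne_zero hu0 hv0 (by rw [← h1]; ring)
      · field_simp
        linear_combination -h1
  have H4 : ∀ v w : ℤ_[2], ‖v‖ = 1 → ‖w‖ = 1 →
      R (u : ℚ_[2]) (2 : ℕ) (v : ℚ_[2]) ((w : ℚ_[2]) * (2 : ℕ)) := by
    intro v w hv hw
    have hv0 := coe_ne hv
    have hb0 : (w : ℚ_[2]) * (2 : ℕ) ≠ 0 := mul_ne_zero (coe_ne hw) p_ne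
    obtain ⟨y, hy⟩ := odd_of_norm v hv
    obtain ⟨z, hz | hz⟩ := parity y
    · rw [show v = 4 * z + 1 by rw [hy, hz]; ring]
      exact Hone z _ hb0
    · obtain ⟨k, hk⟩ := odd_of_norm w hw
      have e : v + w * 2 = 4 * (z + k + 1) + 1 := by rw [hy, hz, hk]; ring
      have e' : (v : ℚ_[2]) + (w : ℚ_[2]) * (2 : ℕ) = ((4 * (z + k + 1) + 1 : ℤ_[2]) : ℚ_[2]) := by
        rw [← e, PadicInt.coe_add, PadicInt.coe_mul]; rfl
      have hn : ‖4 * (z + k + 1) + 1‖ = 1 := by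
        rw [show 4 * (z + k + 1) + 1 = 2 * (2 * (z + k + 1)) + 1 by ring]; exact odd_norm _
      refine R.of (e_add hv0 hb0 (by rw [e']; exact coe_ne hn)) ?_
      rw [e']
      exact Hone _ _ (neg_ne_zero.2 (mul_ne_zero hv0 hb0))
  have H3 : ∀ v w : ℤ_[2], ‖v‖ = 1 → ‖w‖ = 1 →
      R (u : ℚ_[2]) (2 : ℕ) (v : ℚ_[2]) (w : ℚ_[2]) := by
    intro v w hv hw
    have hv0 := coe_ne hv
    have hw0 := coe_ne hw
    obtain ⟨y, hy⟩ := odd_of_norm v hv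
    obtain ⟨z, hz | hz⟩ := parity y
    · rw [show v = 4 * z + 1 by rw [hy, hz]; ring]
      exact Hone z _ hw0
    · have hn : ‖w * (2 * (-z - 1) + 1)‖ = 1 := by rw [norm_mul, hw, odd_norm, one_mul]
      have e : w * (1 ^ 2 - v * 1 ^ 2) = w * (2 * (-z - 1) + 1) * 2 := by rw [hy, hz]; ring
      have e' : (w : ℚ_[2]) * (1 ^ 2 - v * 1 ^ 2) =
          ((w * (2 * (-z - 1) + 1) : ℤ_[2]) : ℚ_[2]) * (2 : ℕ) := by
        have := congrArg (fun z : ℤ_[2] => (z : ℚ_[2])) e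
        rw [PadicInt.coe_mul, PadicInt.coe_mul _ 2] at this
        refine Eq.trans ?_ (this.trans rfl)
        push_cast; rfl
      refine R.of (e_norm hv0 hw0 1 1 ?_) ?_
      · intro h0
        rw [h0, mul_zero] at e'
        exact mul_ne_zero (coe_ne hn) p_ne e'.symm
      · rw [e']
        exact H4 _ _ hv hn
  have n4 : ∀ y : ℤ_[2], ∃ n : ℤ, ‖4 * (2 * y + 1)‖ = ((2 : ℕ) : ℝ) ^ (2 * n) := by
    intro y
    refine ⟨-1, ?_⟩
    rw [show (4 : ℤ_[2]) = 2 * 2 by norm_num, norm_mul, norm_mul, odd_norm, norm_two]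
    norm_num [zpow_neg]
  have n1 : ∀ y : ℤ_[2], ∃ n : ℤ, ‖2 * y + 1‖ = ((2 : ℕ) : ℝ) ^ (2 * n) := by
    intro y
    refine ⟨0, ?_⟩
    rw [odd_norm]; norm_num
  refine assemble u hu ?_ ?_ H3 H4
  · intro t
    obtain ⟨y, hy | hy⟩ := parity t
    · rw [show 1 - u * t ^ 2 = 2 * (6 * y ^ 2) + 1 by rw [hy, hudef]; ring]
      exact n1 _
    · obtain ⟨z, hz | hz⟩ := parity y
      · rw [show 1 - u * t ^ 2 = 4 * (2 * (6 * z ^ 2 + 3 * z) + 1) by rw [hy, hz, hudef]; ring]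
        exact n4 _
      · rw [show 1 - u * t ^ 2 = 4 * (2 * (6 * z ^ 2 + 9 * z + 3) + 1) by rw [hy, hz, hudef]; ring]
        exact n4 _
  · intro t
    obtain ⟨y, hy | hy⟩ := parity t
    · rw [show t ^ 2 - u = 2 * (2 * y ^ 2 + 1) + 1 by rw [hy, hudef]; ring]
      exact n1 _
    · obtain ⟨z, hz | hz⟩ := parity y
      · rw [show t ^ 2 - u = 4 * (2 * (2 * z ^ 2 + z) + 1) by rw [hy, hz, hudef]; ring]
        exact n4 _
      · rw [show t ^ 2 - u = 4 * (2 * (2 * z ^ 2 + 3 * z + 1) + 1) by rw [hy, hz, hudef]; ring]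
        exact n4 _

end two
end QP

theorem stmt_3 (p : ℕ) [Fact p.Prime] :
    ∃ a₀ b₀ : ℚ_[p], a₀ ≠ 0 ∧ b₀ ≠ 0 ∧
      IsDivisionRingPred ℍ[ℚ_[p], a₀, b₀] ∧
      ¬ Nonempty (ℍ[ℚ_[p], a₀, b₀] ≃ₐ[ℚ_[p]] Matrix (Fin 2) (Fin 2) ℚ_[p]) ∧
      ∀ a b : ℚ_[p], a ≠ 0 → b ≠ 0 →
        Nonempty (ℍ[ℚ_[p], a, b] ≃ₐ[ℚ_[p]] Matrix (Fin 2) (Fin 2) ℚ_[p]) ∨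
        Nonempty (ℍ[ℚ_[p], a, b] ≃ₐ[ℚ_[p]] ℍ[ℚ_[p], a₀, b₀]) := by
  by_cases hp2 : p = 2
  · subst hp2
    exact QP.even_case
  · exact QP.odd_case hp2
end

section
/- Let p₁, …, p_{2r} (r ≥ 1) be distinct prime numbers and let d = p₁⋯p_{2r}. Let p be a prime number with p ∤ d, p ≡ 5 (mod 8), and such that p is a quadratic non-residue modulo p_i for every odd p_i dividing d. Then: for every prime number q, the quaternion algebra ℍ[ℚ_q, p, d] is a division ring if and only if q divides d, and likewise ℍ[ℚ_q, p, −d] is a division ring if and only if q divides d; moreover neither ℍ[ℝ, p, d] nor ℍ[ℝ, p, −d] is a division ring. (Hence ℍ[ℚ,p,d] ≅ ℍ[ℚ,p,−d] is the indefinite rational quaternion algebra with discriminant d.) -/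
open Quaternion

theorem not_div_of_isotropic {K : Type*} [Field K] {a b x y z : K}
    (hne : z ≠ 0 ∨ x ≠ 0 ∨ y ≠ 0) (h : z ^ 2 = a * x ^ 2 + b * y ^ 2) :
    ¬ IsDivisionRingPred ℍ[K, a, b] := by
  rintro ⟨-, hu⟩
  set u : ℍ[K, a, b] := ⟨z, x, y, 0⟩ with hudef
  have hu0 : u ≠ 0 := by
    intro h0
    have h1 := congrArg QuaternionAlgebra.re h0
    have h2 := congrArg QuaternionAlgebra.imI h0
    have h3 := congrArg QuaternionAlgebra.imJ h0
    simp [hudef] at h1 h2 h3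
    simp_all
  have hm : u * star u = 0 := by
    ext <;> simp [hudef] <;> first | (ring1) | linear_combination h
  have := (hu u hu0).mul_right_eq_zero.1 hm
  exact hu0 (star_eq_zero.1 this)

theorem div_of_anisotropic {K : Type*} [Field K] {a b : K}
    (h : ∀ x y z w : K, x ^ 2 - a * y ^ 2 = b * (z ^ 2 - a * w ^ 2) →
      x = 0 ∧ y = 0 ∧ z = 0 ∧ w = 0) :
    IsDivisionRingPred ℍ[K, a, b] := by
  refine ⟨one_ne_zero, fun u hu => ?_⟩
  obtain ⟨n, hn⟩ : ∃ n : K, n = u.re ^ 2 - a * u.imI ^ 2 - b * (u.imJ ^ 2 - a * u.imK ^ 2) :=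
    ⟨_, rfl⟩
  have hn0 : n ≠ 0 := by
    intro h0
    obtain ⟨h1, h2, h3, h4⟩ := h u.re u.imI u.imJ u.imK (by rw [hn] at h0; linear_combination h0)
    exact hu (QuaternionAlgebra.ext h1 h2 h3 h4)
  have e1 : u * star u = (n : ℍ[K, a, b]) := by
    ext <;> simp <;> first | ring1 | (rw [hn]; ring1)
  have e2 : star u * u = (n : ℍ[K, a, b]) := by
    ext <;> simp <;> first | ring1 | (rw [hn]; ring1)
  have hnn : ((n⁻¹ : K) : ℍ[K, a, b]) * (n : ℍ[K, a, b]) = 1 := by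
    rw [← QuaternionAlgebra.coe_mul, inv_mul_cancel₀ hn0, QuaternionAlgebra.coe_one]
  have hnn' : (n : ℍ[K, a, b]) * ((n⁻¹ : K) : ℍ[K, a, b]) = 1 := by
    rw [← QuaternionAlgebra.coe_mul, mul_inv_cancel₀ hn0, QuaternionAlgebra.coe_one]
  rw [isUnit_iff_exists_and_exists]
  refine ⟨⟨star u * ((n⁻¹ : K) : ℍ[K, a, b]), ?_⟩, ⟨((n⁻¹ : K) : ℍ[K, a, b]) * star u, ?_⟩⟩
  · rw [← mul_assoc, e1, hnn']
  · rw [mul_assoc, e2, hnn]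

theorem sq_of_hensel {q : ℕ} [Fact q.Prime] (a u : ℤ_[q])
    (h : ‖a ^ 2 - u‖ < ‖2 * a‖ ^ 2) : ∃ z : ℤ_[q], z ^ 2 = u := by
  obtain ⟨z, hz, -⟩ := hensels_lemma (p := q) (R := ℤ_[q])
    (F := Polynomial.X ^ 2 - Polynomial.C u) (a := a) (by
      simpa [Polynomial.derivative_X_pow, one_add_one_eq_two] using h)
  refine ⟨z, ?_⟩
  simpa [sub_eq_zero] using hz

theorem sq_odd {q : ℕ} [Fact q.Prime] (hq : q ≠ 2) (a u : ℤ) (h : (q : ℤ) ∣ a ^ 2 - u)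
    (ha : ¬ (q : ℤ) ∣ a) : ∃ z : ℤ_[q], z ^ 2 = u := by
  apply sq_of_hensel (a : ℤ_[q])
  have h1 : ‖((a ^ 2 - u : ℤ) : ℤ_[q])‖ < 1 := (PadicInt.norm_int_lt_one_iff_dvd _).2 h
  have hqp : q.Prime := Fact.out
  have h2 : ‖((2 * a : ℤ) : ℤ_[q])‖ = 1 := by
    refine le_antisymm (PadicInt.norm_le_one _) (not_lt.1 fun hlt => ?_)
    rw [PadicInt.norm_int_lt_one_iff_dvd] at hlt
    rcases (Nat.prime_iff_prime_int.1 hqp).dvd_or_dvd hlt with h3 | h3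
    · have h4 : q ∣ 2 := by exact_mod_cast h3
      exact hq ((Nat.prime_dvd_prime_iff_eq hqp Nat.prime_two).1 h4)
    · exact ha h3
  push_cast at h1 h2
  rw [h2]
  simpa using h1

theorem sq_two (u : ℤ) (h : (8 : ℤ) ∣ 1 - u) : ∃ z : ℤ_[2], z ^ 2 = u := by
  apply sq_of_hensel 1
  have h1 : ‖((1 - u : ℤ) : ℤ_[2])‖ ≤ ((2 : ℕ) : ℝ) ^ (-(3 : ℕ) : ℤ) :=
    PadicInt.norm_int_le_pow_iff_dvd.2 (by simpa using h)
  have h2 : ‖(2 : ℤ_[2])‖ = 2⁻¹ := by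
    have := PadicInt.norm_p (p := 2)
    simpa using this
  push_cast at h1
  rw [mul_one, h2, one_pow]
  refine lt_of_le_of_lt h1 ?_
  norm_num [zpow_neg]

/-- The integer isotropy criterion. -/
theorem not_div_of_sq {q : ℕ} [Fact q.Prime] (p D x y : ℤ) (hxy : x ≠ 0 ∨ y ≠ 0)
    (h : ∃ z : ℤ_[q], z ^ 2 = ((p * x ^ 2 + D * y ^ 2 : ℤ) : ℤ_[q])) :
    ¬ IsDivisionRingPred ℍ[ℚ_[q], (p : ℚ_[q]), (D : ℚ_[q])] := by
  obtain ⟨z, hz⟩ := h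
  refine not_div_of_isotropic (x := (x : ℚ_[q])) (y := (y : ℚ_[q])) (z := (z : ℚ_[q])) ?_ ?_
  · right; exact_mod_cast hxy
  · have := congrArg (fun t : ℤ_[q] => (t : ℚ_[q])) hz
    push_cast at this
    exact this

theorem not_div_odd {q : ℕ} [Fact q.Prime] (hq : q ≠ 2) (p D : ℤ) (hp : ¬ (q : ℤ) ∣ p)
    (hD : ¬ (q : ℤ) ∣ D) : ¬ IsDivisionRingPred ℍ[ℚ_[q], (p : ℚ_[q]), (D : ℚ_[q])] := by
  have hqp : q.Prime := Fact.out
  have hp0 : (p : ZMod q) ≠ 0 := by rwa [Ne, ZMod.intCast_zmod_eq_zero_iff_dvd]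
  have hD0 : (D : ZMod q) ≠ 0 := by rwa [Ne, ZMod.intCast_zmod_eq_zero_iff_dvd]
  obtain ⟨a, b, hab⟩ := FiniteField.exists_root_sum_quadratic
    (f := Polynomial.C (p : ZMod q) * Polynomial.X ^ 2 + Polynomial.C 0 * Polynomial.X
      + Polynomial.C (-1))
    (g := Polynomial.C (D : ZMod q) * Polynomial.X ^ 2 + Polynomial.C 0 * Polynomial.X
      + Polynomial.C 0)
    (Polynomial.degree_quadratic hp0) (Polynomial.degree_quadratic hD0)
    (by rw [ZMod.card]; exact hqp.eq_two_or_odd.resolve_left hq)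
  simp at hab
  obtain ⟨x, rfl⟩ := ZMod.intCast_surjective a
  obtain ⟨y, rfl⟩ := ZMod.intCast_surjective b
  apply not_div_of_sq p D x y
  · by_contra! hh
    simp [hh.1, hh.2] at hab
  · apply sq_odd hq 1
    · rw [← ZMod.intCast_zmod_eq_zero_iff_dvd]
      push_cast
      linear_combination -hab
    · intro h
      have : q ∣ 1 := by exact_mod_cast h
      exact hqp.one_lt.ne' (Nat.dvd_one.1 this)

theorem not_div_sq {q : ℕ} [Fact q.Prime] (hq : q ≠ 2) (p D : ℤ) (hD : ¬ (q : ℤ) ∣ D)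
    (hs : IsSquare (D : ZMod q)) :
    ¬ IsDivisionRingPred ℍ[ℚ_[q], (p : ℚ_[q]), (D : ℚ_[q])] := by
  obtain ⟨a, ha⟩ := hs
  obtain ⟨x, rfl⟩ := ZMod.intCast_surjective a
  apply not_div_of_sq p D 0 1 (by simp)
  have h1 : (q : ℤ) ∣ x ^ 2 - D := by
    rw [← ZMod.intCast_zmod_eq_zero_iff_dvd]
    push_cast
    rw [ha]; ring
  apply sq_odd hq x
  · simpa using h1
  · intro h
    apply hD
    have := dvd_sub (dvd_pow h two_ne_zero) h1
    simpa using this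

theorem not_div_two (p D : ℤ) (hp : p % 8 = 5) (hD : D % 2 = 1) :
    ¬ IsDivisionRingPred ℍ[ℚ_[2], (p : ℚ_[2]), (D : ℚ_[2])] := by
  have : D % 8 = 1 ∨ D % 8 = 5 ∨ D % 8 = 3 ∨ D % 8 = 7 := by omega
  rcases this with h | h | h | h
  · exact not_div_of_sq p D 0 1 (by simp) (sq_two _ (by omega))
  · exact not_div_of_sq p D 2 1 (by simp) (sq_two _ (by omega))
  · exact not_div_of_sq p D 1 2 (by simp) (sq_two _ (by omega))
  · exact not_div_of_sq p D 1 2 (by simp) (sq_two _ (by omega))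

/-- The condition used in the descent. -/
def KeyCond (q : ℕ) [Fact q.Prime] (p : ℤ) : Prop :=
  ∀ x y z w e : ℤ_[q], IsUnit e →
    x ^ 2 - p * y ^ 2 = q * e * (z ^ 2 - p * w ^ 2) → (q : ℤ_[q]) ∣ x ∧ (q : ℤ_[q]) ∣ y

theorem dvd_iff_toZMod {q : ℕ} [Fact q.Prime] (x : ℤ_[q]) :
    (q : ℤ_[q]) ∣ x ↔ PadicInt.toZMod x = 0 := by
  rw [← RingHom.mem_ker, PadicInt.ker_toZMod, PadicInt.maximalIdeal_eq_span_p,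
    Ideal.mem_span_singleton]

theorem key_odd {q : ℕ} [Fact q.Prime] (p : ℤ) (h : ¬ IsSquare (p : ZMod q)) : KeyCond q p := by
  intro x y z w e _ hx
  rw [dvd_iff_toZMod, dvd_iff_toZMod]
  have h1 := congrArg PadicInt.toZMod hx
  simp only [map_sub, map_mul, map_pow, map_intCast, map_natCast, CharP.cast_eq_zero,
    zero_mul] at h1
  by_cases hy : PadicInt.toZMod y = 0
  · refine ⟨?_, hy⟩
    rw [hy] at h1
    simpa using h1
  · exfalso
    apply h
    refine ⟨PadicInt.toZMod x / PadicInt.toZMod y, ?_⟩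
    field_simp
    linear_combination -h1

theorem dvd_two_iff (x : ℤ_[2]) :
    ((2 : ℕ) : ℤ_[2]) ∣ x ↔ 4 * PadicInt.toZModPow 3 x = 0 := by
  have h4 : (4 * PadicInt.toZModPow 3 x = 0) ↔ PadicInt.toZModPow 3 (4 * x) = 0 := by
    rw [map_mul, map_ofNat]
  rw [h4, ← RingHom.mem_ker, PadicInt.ker_toZModPow, Ideal.mem_span_singleton]
  have : (((2 : ℕ) : ℤ_[2]) ^ 3) = 4 * ((2 : ℕ) : ℤ_[2]) := by norm_num
  rw [this, mul_dvd_mul_iff_left (by norm_num)]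

theorem key_two_aux1 : ∀ x y : ZMod 8, 4 * (x ^ 2 - 5 * y ^ 2) = 0 →
    (4 * x = 0 ∧ 4 * y = 0) ∨ x ^ 2 - 5 * y ^ 2 = 4 := by decide

theorem key_two_aux2 : ∀ z w : ZMod 8, ∀ e : ZMod 8, e ^ 2 = 1 →
    2 * e * (z ^ 2 - 5 * w ^ 2) ≠ 4 := by decide

theorem key_two_aux3 : ∀ e f : ZMod 8, e * f = 1 → e ^ 2 = 1 := by decide

theorem key_two (p : ℤ) (hp : p % 8 = 5) : KeyCond 2 p := by
  intro x y z w e he hx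
  have hp' : ((p : ℤ) : ZMod (2 ^ 3)) = (5 : ZMod 8) := by
    have : ((p : ℤ) : ZMod 8) = ((5 : ℤ) : ZMod 8) := by
      rw [ZMod.intCast_eq_intCast_iff]
      exact hp
    exact this
  rw [dvd_two_iff, dvd_two_iff]
  obtain ⟨f, hf⟩ := he.exists_right_inv
  have h1 := congrArg (PadicInt.toZModPow 3) hx
  have h2 := congrArg (PadicInt.toZModPow 3) hf
  simp only [map_sub, map_mul, map_pow, map_intCast, map_natCast, map_one, hp'] at h1 h2
  generalize PadicInt.toZModPow 3 x = x at *
  generalize PadicInt.toZModPow 3 y = y at *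
  generalize PadicInt.toZModPow 3 z = z at *
  generalize PadicInt.toZModPow 3 w = w at *
  generalize PadicInt.toZModPow 3 e = e at *
  generalize PadicInt.toZModPow 3 f = f at *
  change ZMod 8 at x y z w e f
  have h1' : x ^ 2 - 5 * y ^ 2 = 2 * e * (z ^ 2 - 5 * w ^ 2) := h1
  have he : e ^ 2 = 1 := key_two_aux3 e f h2
  rcases key_two_aux1 x y (by
    rw [h1']
    have : (8 : ZMod 8) = 0 := by decide
    linear_combination (e * (z ^ 2 - 5 * w ^ 2)) * this) with h | h
  · exact h
  · exact absurd (h1'.symm.trans h) (key_two_aux2 z w e he)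

theorem descent {q : ℕ} [Fact q.Prime] {p : ℤ} (hk : KeyCond q p) (x y z w e : ℤ_[q])
    (he : IsUnit e) (h : x ^ 2 - p * y ^ 2 = q * e * (z ^ 2 - p * w ^ 2)) :
    ((q : ℤ_[q]) ∣ x ∧ (q : ℤ_[q]) ∣ y) ∧ ((q : ℤ_[q]) ∣ z ∧ (q : ℤ_[q]) ∣ w) := by
  have hxy := hk x y z w e he h
  refine ⟨hxy, ?_⟩
  obtain ⟨⟨x₂, rfl⟩, ⟨y₂, rfl⟩⟩ := hxy
  obtain ⟨f, hf⟩ := he.exists_right_inv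
  have hfu : IsUnit f := IsUnit.of_mul_eq_one e (by rw [mul_comm]; exact hf)
  refine hk z w x₂ y₂ f hfu ?_
  have hq0 : (q : ℤ_[q]) ≠ 0 := by
    exact_mod_cast (Fact.out : q.Prime).ne_zero
  apply mul_left_cancel₀ hq0
  linear_combination (-f) * h - (q * (z ^ 2 - p * w ^ 2)) * hf

theorem div_of_key {q : ℕ} [Fact q.Prime] {p : ℤ} (hk : KeyCond q p) (e : ℤ)
    (he : ¬ (q : ℤ) ∣ e) :
    IsDivisionRingPred ℍ[ℚ_[q], (p : ℚ_[q]), ((q * e : ℤ) : ℚ_[q])] := by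
  have heu : IsUnit (e : ℤ_[q]) := by
    by_contra hh
    rw [PadicInt.not_isUnit_iff, PadicInt.norm_int_lt_one_iff_dvd] at hh
    exact he hh
  apply div_of_anisotropic
  intro x y z w h
  set v : Fin 4 → ℚ_[q] := ![x, y, z, w] with hv
  obtain ⟨m, hm⟩ := Finite.exists_max (fun i => ‖v i‖)
  by_cases hm0 : v m = 0
  · have hall : ∀ i, v i = 0 := fun i => by
      have := hm i
      rw [hm0, norm_zero] at this
      exact norm_le_zero_iff.1 this
    exact ⟨hall 0, hall 1, hall 2, hall 3⟩
  exfalso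
  have hle : ∀ i, ‖v i / v m‖ ≤ 1 := fun i => by
    rw [norm_div]
    exact div_le_one_of_le₀ (hm i) (norm_nonneg _)
  let V : Fin 4 → ℤ_[q] := fun i => ⟨v i / v m, hle i⟩
  have hV : ∀ i, ((V i : ℤ_[q]) : ℚ_[q]) = v i / v m := fun i => rfl
  have hd := descent hk (V 0) (V 1) (V 2) (V 3) e heu (by
    apply Subtype.coe_injective
    push_cast
    simp only [hV]
    have h' : v 0 ^ 2 - p * v 1 ^ 2 = q * e * (v 2 ^ 2 - p * v 3 ^ 2) := by
      simpa [hv] using h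
    field_simp
    linear_combination h')
  have hall : ∀ i, (q : ℤ_[q]) ∣ V i := by
    intro i
    fin_cases i
    exacts [hd.1.1, hd.1.2, hd.2.1, hd.2.2]
  have h1 := (PadicInt.norm_lt_one_iff_dvd _).2 (hall m)
  have h2 : V m = 1 := by
    apply Subtype.coe_injective
    simp only [hV, div_self hm0, PadicInt.coe_one]
  rw [h2, norm_one] at h1
  exact lt_irrefl _ h1

theorem main_q {q : ℕ} [Fact q.Prime] (p D : ℤ) (hp8 : p % 8 = 5)
    (h1 : (q : ℤ) ∣ p → ¬ (q : ℤ) ∣ D → IsSquare (D : ZMod q))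
    (h2 : (q : ℤ) ∣ D → ∃ e : ℤ, D = q * e ∧ ¬ (q : ℤ) ∣ e)
    (h3 : (q : ℤ) ∣ D → q ≠ 2 → ¬ IsSquare (p : ZMod q)) :
    IsDivisionRingPred ℍ[ℚ_[q], (p : ℚ_[q]), (D : ℚ_[q])] ↔ (q : ℤ) ∣ D := by
  constructor
  · intro h
    by_contra hD
    revert h
    by_cases hq : q = 2
    · subst hq
      exact not_div_two p D hp8 (by push_cast at hD; omega)
    · by_cases hqp : (q : ℤ) ∣ p
      · exact not_div_sq hq p D hD (h1 hqp hD)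
      · exact not_div_odd hq p D hqp hD
  · intro hD
    obtain ⟨e, rfl, he⟩ := h2 hD
    refine div_of_key ?_ e he
    by_cases hq : q = 2
    · subst hq
      exact key_two p hp8
    · exact key_odd p (h3 hD hq)

theorem pred_congr {K : Type*} [Field K] {a a₂ b b₂ : K} (h1 : a = a₂) (h2 : b = b₂) :
    IsDivisionRingPred ℍ[K, a, b] ↔ IsDivisionRingPred ℍ[K, a₂, b₂] := by
  subst h1 h2; rfl

theorem real_not_div (p : ℕ) (hp : 0 < p) (b : ℝ) : ¬ IsDivisionRingPred ℍ[ℝ, (p : ℝ), b] :=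
  not_div_of_isotropic (x := 1) (y := 0) (z := Real.sqrt p) (by simp)
    (by rw [Real.sq_sqrt (by positivity)]; ring)

theorem legendre_at (p l : ℕ) [Fact p.Prime] (hl : l.Prime) (hp8 : p % 8 = 5)
    (hnr : Odd l → ¬ IsSquare (p : ZMod l)) : jacobiSym l p = -1 := by
  have hpodd : Odd p := Nat.odd_iff.2 (by omega)
  rcases hl.eq_two_or_odd' with rfl | ho
  · have := jacobiSym.at_two hpodd
    push_cast
    rw [this, ZMod.χ₈_nat_mod_eight, hp8]
    decide
  · have : Fact l.Prime := ⟨hl⟩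
    rw [← jacobiSym.quadratic_reciprocity_one_mod_four (by omega) ho]
    apply ZMod.nonsquare_iff_jacobiSym_eq_neg_one.2
    simpa using hnr ho

theorem sq_at_p (r : ℕ) (ps : Fin (2 * r) → ℕ) (hps : ∀ i, (ps i).Prime)
    (p : ℕ) [Fact p.Prime] (hp8 : p % 8 = 5)
    (hnr : ∀ i, Odd (ps i) → ¬ IsSquare (p : ZMod (ps i))) :
    IsSquare (((∏ i, ps i : ℕ) : ℤ) : ZMod p) := by
  apply ZMod.isSquare_of_jacobiSym_eq_one
  have hmul : ∀ s : Finset (Fin (2 * r)),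
      jacobiSym ((∏ i ∈ s, ps i : ℕ) : ℤ) p = ∏ i ∈ s, jacobiSym (ps i) p := by
    intro s
    induction s using Finset.induction_on with
    | empty => simp
    | insert a s ha ih =>
      rw [Finset.prod_insert ha, Finset.prod_insert ha, Nat.cast_mul, jacobiSym.mul_left, ih]
  rw [hmul, Finset.prod_congr rfl (fun i _ => legendre_at p (ps i) (hps i) hp8 (hnr i))]
  simp

theorem neg_one_isSq_mod (p : ℕ) [Fact p.Prime] (hp8 : p % 8 = 5) : IsSquare (-1 : ZMod p) :=
  ZMod.exists_sq_eq_neg_one_iff.2 (by omega)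

theorem stmt_7 (r : ℕ) (hr : 1 ≤ r) (ps : Fin (2 * r) → ℕ)
    (hps : ∀ i, (ps i).Prime) (hinj : Function.Injective ps)
    (d : ℕ) (hd : d = ∏ i, ps i)
    (p : ℕ) (hp : p.Prime) (hpd : ¬ p ∣ d) (hp8 : p % 8 = 5)
    (hnr : ∀ i, Odd (ps i) → ¬ IsSquare (p : ZMod (ps i))) :
    (∀ (q : ℕ) [Fact q.Prime],
      (IsDivisionRingPred ℍ[ℚ_[q], (p : ℚ_[q]), (d : ℚ_[q])] ↔ q ∣ d) ∧
      (IsDivisionRingPred ℍ[ℚ_[q], (p : ℚ_[q]), -(d : ℚ_[q])] ↔ q ∣ d)) ∧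
    ¬ IsDivisionRingPred ℍ[ℝ, (p : ℝ), (d : ℝ)] ∧
    ¬ IsDivisionRingPred ℍ[ℝ, (p : ℝ), -(d : ℝ)] := by
  have key : ∀ (q : ℕ) [Fact q.Prime] (s : ℤ), (s = 1 ∨ s = -1) →
      (IsDivisionRingPred ℍ[ℚ_[q], (((p : ℤ)) : ℚ_[q]), ((s * d : ℤ) : ℚ_[q])] ↔
        (q : ℤ) ∣ s * d) := by
    intro q hq s hs
    have hqp : q.Prime := hq.out
    have hsd : ∀ n : ℤ, (q : ℤ) ∣ s * n ↔ (q : ℤ) ∣ n := by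
      intro n
      rcases hs with rfl | rfl <;> simp
    have hdiv : (q : ℤ) ∣ s * d → ∃ i, q = ps i := by
      intro h
      rw [hsd, Int.natCast_dvd_natCast, hd] at h
      obtain ⟨i, -, hi⟩ := (Nat.prime_iff.1 hqp).exists_mem_finset_dvd h
      exact ⟨i, (Nat.prime_dvd_prime_iff_eq hqp (hps i)).1 hi⟩
    apply main_q
    · omega
    · intro h _
      rw [Int.natCast_dvd_natCast, Nat.prime_dvd_prime_iff_eq hqp hp] at h
      subst h
      have h1 := sq_at_p r ps hps q hp8 hnr
      rw [← hd] at h1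
      rcases hs with rfl | rfl
      · simpa using h1
      · have := (neg_one_isSq_mod q hp8).mul h1
        simpa using this
    · intro h
      obtain ⟨i, hi⟩ := hdiv h
      refine ⟨s * (∏ j ∈ Finset.univ.erase i, ps j : ℕ), ?_, ?_⟩
      · rw [hd, ← Finset.mul_prod_erase _ _ (Finset.mem_univ i), hi]
        push_cast; ring
      · rw [hsd, Int.natCast_dvd_natCast]
        intro h2
        obtain ⟨j, hj, hj2⟩ := (Nat.prime_iff.1 hqp).exists_mem_finset_dvd h2
        have h3 := (Nat.prime_dvd_prime_iff_eq hqp (hps j)).1 hj2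
        exact (Finset.mem_erase.1 hj).1 (hinj (h3.symm.trans hi))
    · intro h hq2
      obtain ⟨i, hi⟩ := hdiv h
      subst hi
      simpa using hnr i (hqp.odd_of_ne_two hq2)
  refine ⟨fun q _ => ⟨?_, ?_⟩, real_not_div p hp.pos _, real_not_div p hp.pos _⟩
  · have := key q 1 (Or.inl rfl)
    rw [one_mul, Int.natCast_dvd_natCast] at this
    exact (pred_congr (by simp) (by simp)).trans this
  · have := key q (-1) (Or.inr rfl)
    rw [neg_one_mul, dvd_neg, Int.natCast_dvd_natCast] at this
    exact (pred_congr (by simp) (by simp)).trans this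
end

section
/- Let R be a principal ideal domain whose field of fractions has characteristic different from 2, and let f and g be nondegenerate quadratic forms in 3 variables that are integral over R. Then f and g are similar over R (there is a unit u ∈ Rˣ such that u·f is isometric to g) if and only if the even Clifford algebras C₀(f) and C₀(g) are isomorphic as R-algebras. -/
/-- The Gram matrix `M_f` of a quadratic form `f` in `n` variables: the matrix of the polar
bilinear form `B_f(x, y) = f(x + y) - f(x) - f(y)` in the standard basis. -/
noncomputable def gramMatrix {R : Type*} [CommRing R] {n : ℕ}
    (f : QuadraticForm R (Fin n → R)) : Matrix (Fin n) (Fin n) R :=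
  Matrix.of fun i j => QuadraticMap.polar f (Pi.single i 1) (Pi.single j 1)

namespace TernaryClifford

open CliffordAlgebra

variable {R : Type*} [CommRing R]

/-- The `i`-th standard basis vector. -/
def e (i : Fin 3) : Fin 3 → R := Pi.single i 1

/-- The off-diagonal coefficients of a ternary form. -/
def pol (f : QuadraticForm R (Fin 3 → R)) (i j : Fin 3) : R := QuadraticMap.polar f (e i) (e j)

lemma vec_eq (m : Fin 3 → R) : m = m 0 • e 0 + m 1 • e 1 + m 2 • e 2 := by
  funext i; fin_cases i <;> simp [e]

lemma form_apply (f : QuadraticForm R (Fin 3 → R)) (m : Fin 3 → R) :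
    f m = f (e 0) * m 0 ^ 2 + f (e 1) * m 1 ^ 2 + f (e 2) * m 2 ^ 2
      + pol f 1 2 * (m 1 * m 2) + pol f 0 2 * (m 0 * m 2) + pol f 0 1 * (m 0 * m 1) := by
  conv_lhs => rw [vec_eq m]
  rw [QuadraticMap.map_add (f : QuadraticMap R (Fin 3 → R) R),
    QuadraticMap.map_add (f : QuadraticMap R (Fin 3 → R) R)]
  simp only [QuadraticMap.map_smul, QuadraticMap.polar_add_left, QuadraticMap.polar_smul_left,
    QuadraticMap.polar_smul_right, smul_eq_mul, pol]
  ring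

lemma form_ext (f g : QuadraticForm R (Fin 3 → R)) (h : ∀ i, f (e i) = g (e i))
    (h' : ∀ i j, i < j → f (e i + e j) = g (e i + e j)) : f = g := by
  ext m
  rw [form_apply f, form_apply g]
  simp only [pol, QuadraticMap.polar, h, h' 1 2 (by decide), h' 0 1 (by decide),
    h' 0 2 (by decide)]

/-- Multiplication of the model algebra on `R ^ 4`, basis `1, e₂e₃, e₁e₃, e₁e₂`. -/
def mulv (f : QuadraticForm R (Fin 3 → R)) (p q : Fin 4 → R) : Fin 4 → R :=
  ![p 0 * q 0 - f (e 1) * f (e 2) * (p 1 * q 1) - f (e 0) * f (e 2) * (p 2 * q 2)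
      - f (e 0) * f (e 1) * (p 3 * q 3)
      + (pol f 0 2 * f (e 1) - pol f 0 1 * pol f 1 2) * (p 1 * q 3)
      - f (e 2) * pol f 0 1 * (p 1 * q 2) - f (e 0) * pol f 1 2 * (p 2 * q 3),
    p 0 * q 1 + p 1 * q 0 + pol f 1 2 * (p 1 * q 1) + pol f 0 1 * (p 1 * q 3)
      + pol f 0 2 * (p 1 * q 2) - f (e 0) * (p 3 * q 2) + f (e 0) * (p 2 * q 3),
    p 0 * q 2 + p 2 * q 0 + pol f 0 2 * (p 2 * q 2) + f (e 1) * (p 3 * q 1)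
      - f (e 1) * (p 1 * q 3) + pol f 1 2 * (p 2 * q 1) + pol f 0 1 * (p 3 * q 2),
    p 0 * q 3 + p 3 * q 0 + pol f 0 1 * (p 3 * q 3) + pol f 1 2 * (p 1 * q 3)
      - f (e 2) * (p 2 * q 1) + f (e 2) * (p 1 * q 2) + pol f 0 2 * (p 2 * q 3)]

/-- `mulv` as a bilinear map. -/
def mulL (f : QuadraticForm R (Fin 3 → R)) :
    (Fin 4 → R) →ₗ[R] (Fin 4 → R) →ₗ[R] (Fin 4 → R) :=
  LinearMap.mk₂ R (mulv f)
    (fun _ _ _ => by funext i; fin_cases i <;> simp [mulv] <;> ring)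
    (fun _ _ _ => by funext i; fin_cases i <;> simp [mulv] <;> ring)
    (fun _ _ _ => by funext i; fin_cases i <;> simp [mulv] <;> ring)
    (fun _ _ _ => by funext i; fin_cases i <;> simp [mulv] <;> ring)

/-- The product of two vectors, in model coordinates. -/
def betav (f : QuadraticForm R (Fin 3 → R)) (m n : Fin 3 → R) : Fin 4 → R :=
  ![f (e 0) * (m 0 * n 0) + f (e 1) * (m 1 * n 1) + f (e 2) * (m 2 * n 2)
      + pol f 0 1 * (m 1 * n 0) + pol f 0 2 * (m 2 * n 0) + pol f 1 2 * (m 2 * n 1),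
    m 1 * n 2 - m 2 * n 1, m 0 * n 2 - m 2 * n 0, m 0 * n 1 - m 1 * n 0]

/-- `betav` as a bilinear map. -/
def betaL (f : QuadraticForm R (Fin 3 → R)) :
    (Fin 3 → R) →ₗ[R] (Fin 3 → R) →ₗ[R] (Fin 4 → R) :=
  LinearMap.mk₂ R (betav f)
    (fun _ _ _ => by funext i; fin_cases i <;> simp [betav] <;> ring)
    (fun _ _ _ => by funext i; fin_cases i <;> simp [betav] <;> ring)
    (fun _ _ _ => by funext i; fin_cases i <;> simp [betav] <;> ring)
    (fun _ _ _ => by funext i; fin_cases i <;> simp [betav] <;> ring)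

/-- The left regular representation of the model. -/
def rho (f : QuadraticForm R (Fin 3 → R)) : EvenHom f (Module.End R (Fin 4 → R)) where
  bilin := (betaL f).compr₂ (mulL f)
  contract m := by
    refine LinearMap.ext fun q => ?_
    have : (algebraMap R (Module.End R (Fin 4 → R)) (f m)) q = f m • q := rfl
    rw [this, form_apply f m]
    change mulv f (betav f m m) q = _
    funext i; fin_cases i <;> simp [mulv, betav] <;> ring
  contract_mid m n l := by
    refine LinearMap.ext fun q => ?_
    change mulv f (betav f m n) (mulv f (betav f n l) q) = f n • mulv f (betav f m l) q
    rw [form_apply f n]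
    funext i; fin_cases i <;> simp [mulv, betav] <;> ring

/-- Coordinates on the even Clifford algebra. -/
noncomputable def co (f : QuadraticForm R (Fin 3 → R)) :
    CliffordAlgebra.even f →ₗ[R] (Fin 4 → R) :=
  (LinearMap.applyₗ (Pi.single 0 1 : Fin 4 → R)) ∘ₗ (even.lift f (rho f)).toLinearMap

/-- The element of the Clifford algebra with given coordinates. -/
noncomputable def sv (f : QuadraticForm R (Fin 3 → R)) (p : Fin 4 → R) : CliffordAlgebra.even f :=
  p 0 • 1 + p 1 • (even.ι f).bilin (e 1) (e 2) + p 2 • (even.ι f).bilin (e 0) (e 2)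
    + p 3 • (even.ι f).bilin (e 0) (e 1)

lemma co_sv (f : QuadraticForm R (Fin 3 → R)) (p : Fin 4 → R) : co f (sv f p) = p := by
  have h1 : co f 1 = Pi.single 0 1 := by simp [co]
  have h2 (m n) : co f ((even.ι f).bilin m n) = mulv f (betav f m n) (Pi.single 0 1) := by
    simp only [co, LinearMap.comp_apply, AlgHom.toLinearMap_apply, even.lift_ι]
    rfl
  simp only [sv, map_add, map_smul, h1, h2]
  funext i
  simp only [Pi.add_apply, Pi.smul_apply]
  fin_cases i <;> simp [mulv, betav, e]

section rel
variable (f : QuadraticForm R (Fin 3 → R))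

lemma rel_sq (i : Fin 3) : ι f (e i) * ι f (e i) = f (e i) • 1 := by
  rw [ι_sq_scalar, Algebra.algebraMap_eq_smul_one]

lemma rel_sq' (i : Fin 3) (x : CliffordAlgebra f) :
    ι f (e i) * (ι f (e i) * x) = f (e i) • x := by
  rw [← mul_assoc, rel_sq, smul_mul_assoc, one_mul]

lemma rel_swap (i j : Fin 3) :
    ι f (e j) * ι f (e i) = pol f i j • 1 - ι f (e i) * ι f (e j) := by
  rw [eq_sub_iff_add_eq, add_comm, ι_mul_ι_add_swap, Algebra.algebraMap_eq_smul_one]; rfl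

lemma rel_swap' (i j : Fin 3) (x : CliffordAlgebra f) :
    ι f (e j) * (ι f (e i) * x) = pol f i j • x - ι f (e i) * (ι f (e j) * x) := by
  rw [← mul_assoc, rel_swap, sub_mul, smul_mul_assoc, one_mul, mul_assoc]

lemma coe_bilin (m n) : (((even.ι f).bilin m n : CliffordAlgebra.even f) : CliffordAlgebra f)
    = ι f m * ι f n := rfl

lemma coe_sv (p : Fin 4 → R) : (sv f p : CliffordAlgebra f) =
    p 0 • 1 + p 1 • (ι f (e 1) * ι f (e 2)) + p 2 • (ι f (e 0) * ι f (e 2))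
    + p 3 • (ι f (e 0) * ι f (e 1)) := rfl

lemma sv_mul (p q : Fin 4 → R) : sv f p * sv f q = sv f (mulv f p q) := by
  apply Subtype.ext
  rw [Subalgebra.coe_mul, coe_sv, coe_sv, coe_sv]
  simp only [mul_add, add_mul, smul_mul_assoc, mul_smul_comm, mul_assoc, one_mul, mul_one,
    rel_sq, rel_sq', rel_swap f 0 1, rel_swap f 1 2, rel_swap' f 0 1,
    rel_swap' f 0 2, rel_swap' f 1 2, mul_sub, smul_sub, smul_add, smul_smul]
  simp only [mulv, Matrix.cons_val]
  module

lemma sv_beta (m n : Fin 3 → R) : (even.ι f).bilin m n = sv f (betav f m n) := by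
  apply Subtype.ext
  rw [coe_bilin, coe_sv]
  conv_lhs => rw [vec_eq m, vec_eq n]
  simp only [map_add, map_smul, mul_add, add_mul, smul_mul_assoc, mul_smul_comm,
    rel_sq, rel_swap f 0 1, rel_swap f 0 2, rel_swap f 1 2, smul_sub, smul_add, smul_smul]
  simp only [betav, Matrix.cons_val]
  module

lemma sv_add (p q : Fin 4 → R) : sv f (p + q) = sv f p + sv f q := by
  simp only [sv, Pi.add_apply]; module

lemma sv_smul (r : R) (q : Fin 4 → R) : sv f (r • q) = r • sv f q := by
  simp only [sv, Pi.smul_apply, smul_eq_mul]; module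

lemma sv_one : sv f (Pi.single 0 1) = 1 := by
  simp [sv]

lemma sv_surj (x : CliffordAlgebra.even f) : ∃ p, sv f p = x := by
  obtain ⟨x, hx⟩ := x
  induction x, hx using even_induction with
  | algebraMap r =>
    refine ⟨r • Pi.single 0 1, ?_⟩
    rw [sv_smul, sv_one, ← Algebra.algebraMap_eq_smul_one]; rfl
  | add x y hx hy ihx ihy =>
    obtain ⟨p, hp⟩ := ihx
    obtain ⟨q, hq⟩ := ihy
    exact ⟨p + q, by rw [sv_add, hp, hq]; rfl⟩
  | ι_mul_ι_mul m n x hx ih =>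
    obtain ⟨p, hp⟩ := ih
    exact ⟨mulv f (betav f m n) p, by rw [← sv_mul, ← sv_beta, hp]; rfl⟩

lemma sv_co (x : CliffordAlgebra.even f) : sv f (co f x) = x := by
  obtain ⟨p, rfl⟩ := sv_surj f x
  rw [co_sv]

/-- The coordinate equivalence. -/
noncomputable def coE : CliffordAlgebra.even f ≃ₗ[R] (Fin 4 → R) :=
  { co f with invFun := sv f, left_inv := sv_co f, right_inv := co_sv f }

lemma coE_mul (x y : CliffordAlgebra.even f) : coE f (x * y) = mulv f (coE f x) (coE f y) := by
  apply (coE f).symm.injective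
  rw [LinearEquiv.symm_apply_apply]
  change _ = sv f (mulv f (co f x) (co f y))
  rw [← sv_mul, sv_co, sv_co]

lemma coE_one : coE f 1 = Pi.single 0 1 := by
  rw [← sv_one]; exact co_sv f _

end rel

/-- The algebra map induced by a similitude. -/
noncomputable def simHom (f g : QuadraticForm R (Fin 3 → R)) (r s : R) (hrs : s * r = 1)
    (E : (Fin 3 → R) →ₗ[R] (Fin 3 → R)) (h : ∀ x, g (E x) = r * f x) :
    EvenHom f (CliffordAlgebra.even g) where
  bilin := s • (even.ι g).bilin.compl₁₂ E E
  contract m := by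
    simp only [LinearMap.smul_apply, LinearMap.compl₁₂_apply, EvenHom.contract, h]
    rw [Algebra.smul_def, ← map_mul, ← mul_assoc, hrs, one_mul]
  contract_mid m n l := by
    simp only [LinearMap.smul_apply, LinearMap.compl₁₂_apply, smul_mul_smul_comm,
      EvenHom.contract_mid, h, smul_smul]
    congr 1
    linear_combination s * f n * hrs

lemma forward (f g : QuadraticForm R (Fin 3 → R)) (u : Rˣ) (h : ((u : R) • f).Equivalent g) :
    Nonempty (CliffordAlgebra.even f ≃ₐ[R] CliffordAlgebra.even g) := by
  obtain ⟨E⟩ := h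
  obtain ⟨F, hE⟩ : ∃ F : (Fin 3 → R) ≃ₗ[R] (Fin 3 → R), ∀ x, g (F x) = (u : R) * f x :=
    ⟨E.toLinearEquiv, E.map_app⟩
  have hE' (x) : f (F.symm x) = (↑u⁻¹ : R) * g x := by
    have := hE (F.symm x)
    rw [F.apply_symm_apply] at this
    simp [this]
  refine ⟨AlgEquiv.ofAlgHom
    (even.lift f (simHom f g u (↑u⁻¹ : R) (by simp) F.toLinearMap hE))
    (even.lift g (simHom g f (↑u⁻¹ : R) u (by simp) F.symm.toLinearMap hE'))
    ?_ ?_⟩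
  · apply even.algHom_ext
    refine EvenHom.ext (LinearMap.ext₂ fun m n => ?_)
    simp [simHom, smul_smul]
  · apply even.algHom_ext
    refine EvenHom.ext (LinearMap.ext₂ fun m n => ?_)
    simp [simHom, smul_smul]

/-- Twisted cross product of the pure parts. -/
def cr (p q : Fin 4 → R) : Fin 3 → R :=
  ![p 2 * q 3 - p 3 * q 2, p 1 * q 3 - p 3 * q 1, p 1 * q 2 - p 2 * q 1]

/-- The determinant of the pure parts. -/
def D (p q r : Fin 4 → R) : R :=
  cr p q 0 * r 1 - cr p q 1 * r 2 + cr p q 2 * r 3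

lemma D_mul (f : QuadraticForm R (Fin 3 → R)) (p q : Fin 4 → R) :
    D p q (mulv f p q) = f (cr p q) := by
  rw [form_apply f]
  simp [D, cr, mulv]
  ring

/-- The action on the pure parts. -/
def Wmat (P : Matrix (Fin 3) (Fin 3) R) : Matrix (Fin 3) (Fin 3) R :=
  Matrix.diagonal ![1, -1, 1] * P.adjugate.transpose * Matrix.diagonal ![1, -1, 1]

lemma cr_map (P : Matrix (Fin 3) (Fin 3) R) (T : (Fin 4 → R) → (Fin 4 → R))
    (hT : ∀ p i, T p (Fin.succ i) = ∑ j, P i j * p (Fin.succ j)) (p q : Fin 4 → R) :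
    cr (T p) (T q) = (Wmat P).mulVec (cr p q) := by
  have h1 (p) : T p 1 = P 0 0 * p 1 + P 0 1 * p 2 + P 0 2 * p 3 := by
    simpa [Fin.sum_univ_three] using hT p 0
  have h2 (p) : T p 2 = P 1 0 * p 1 + P 1 1 * p 2 + P 1 2 * p 3 := by
    simpa [Fin.sum_univ_three] using hT p 1
  have h3 (p) : T p 3 = P 2 0 * p 1 + P 2 1 * p 2 + P 2 2 * p 3 := by
    simpa [Fin.sum_univ_three] using hT p 2
  funext i
  fin_cases i <;>
    simp [cr, Wmat, h1, h2, h3, Matrix.mulVec, dotProduct, Fin.sum_univ_three,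
      Matrix.adjugate_fin_three, Matrix.mul_diagonal, Matrix.diagonal_mul] <;> ring

lemma D_map (P : Matrix (Fin 3) (Fin 3) R) (T : (Fin 4 → R) → (Fin 4 → R))
    (hT : ∀ p i, T p (Fin.succ i) = ∑ j, P i j * p (Fin.succ j)) (p q r : Fin 4 → R) :
    D (T p) (T q) (T r) = P.det * D p q r := by
  have h1 (p) : T p 1 = P 0 0 * p 1 + P 0 1 * p 2 + P 0 2 * p 3 := by
    simpa [Fin.sum_univ_three] using hT p 0
  have h2 (p) : T p 2 = P 1 0 * p 1 + P 1 1 * p 2 + P 1 2 * p 3 := by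
    simpa [Fin.sum_univ_three] using hT p 1
  have h3 (p) : T p 3 = P 2 0 * p 1 + P 2 1 * p 2 + P 2 2 * p 3 := by
    simpa [Fin.sum_univ_three] using hT p 2
  simp [D, cr, h1, h2, h3, Matrix.det_fin_three]
  ring

lemma pure_part (T : (Fin 4 → R) →ₗ[R] (Fin 4 → R)) (h : T (Pi.single 0 1) = Pi.single 0 1)
    (p : Fin 4 → R) (i : Fin 3) :
    T p i.succ = ∑ j : Fin 3, T (Pi.single j.succ 1) i.succ * p j.succ := by
  have hp : p = ∑ j, p j • (Pi.single j 1 : Fin 4 → R) := by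
    funext k; simp [Finset.sum_apply, Pi.single_apply]
  conv_lhs => rw [hp]
  rw [map_sum, Fin.sum_univ_succ]
  simp [h, mul_comm]

lemma backward (f g : QuadraticForm R (Fin 3 → R))
    (φ : CliffordAlgebra.even f ≃ₐ[R] CliffordAlgebra.even g) :
    ∃ u : Rˣ, ((u : R) • f).Equivalent g := by
  let T : (Fin 4 → R) ≃ₗ[R] (Fin 4 → R) := (coE f).symm ≪≫ₗ φ.toLinearEquiv ≪≫ₗ coE g
  have hT (p) : T p = coE g (φ ((coE f).symm p)) := rfl
  have h1 : T (Pi.single 0 1) = Pi.single 0 1 := by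
    rw [hT, ← coE_one f, LinearEquiv.symm_apply_apply, map_one, coE_one, coE_one]
  have h1' : T.symm (Pi.single 0 1) = Pi.single 0 1 := by
    rw [LinearEquiv.symm_apply_eq, h1]
  have hmul (p q) : T (mulv f p q) = mulv g (T p) (T q) := by
    rw [hT p, hT q, ← coE_mul, ← map_mul, hT]
    congr 2
    rw [LinearEquiv.symm_apply_eq, coE_mul]
    simp
  let P : Matrix (Fin 3) (Fin 3) R := Matrix.of fun i j => T (Pi.single j.succ 1) i.succ
  let P' : Matrix (Fin 3) (Fin 3) R := Matrix.of fun i j => T.symm (Pi.single j.succ 1) i.succ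
  have hP : ∀ p i, T p (Fin.succ i) = ∑ j, P i j * p (Fin.succ j) :=
    pure_part T.toLinearMap h1
  have hPP : P * P' = 1 := by
    ext i j
    have := hP (T.symm (Pi.single j.succ 1)) i
    rw [LinearEquiv.apply_symm_apply] at this
    rw [Matrix.mul_apply]
    refine this.symm.trans ?_
    simp [Matrix.one_apply, Pi.single_apply]
  have hdet : IsUnit P.det := Matrix.isUnit_det_of_right_inverse hPP
  have hW : IsUnit (Wmat P).det := by
    have : IsUnit (P.adjugate).det := by
      rw [Matrix.det_adjugate]; exact hdet.pow _
    simpa [Wmat, Matrix.det_mul, Fin.prod_univ_three] using this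
  have key (p q) : P.det * f (cr p q) = g ((Wmat P).mulVec (cr p q)) := by
    rw [← cr_map P T hP, ← D_mul, ← D_mul, ← hmul, D_map P T hP]
  have heq : P.det • f = g.comp (Matrix.toLin' (Wmat P)) := by
    have key' (m) (h : ∃ p q, cr p q = m) :
        (P.det • f) m = g.comp (Matrix.toLin' (Wmat P)) m := by
      obtain ⟨p, q, rfl⟩ := h
      simpa using key p q
    apply form_ext
    · intro i
      apply key'
      fin_cases i
      · exact ⟨![0, 0, 1, 0], ![0, 0, 0, 1], by funext k; fin_cases k <;> simp [cr, e]⟩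
      · exact ⟨![0, 1, 0, 0], ![0, 0, 0, 1], by funext k; fin_cases k <;> simp [cr, e]⟩
      · exact ⟨![0, 1, 0, 0], ![0, 0, 1, 0], by funext k; fin_cases k <;> simp [cr, e]⟩
    · intro i j hij
      apply key'
      fin_cases i <;> fin_cases j <;> first | exact absurd hij (by decide) | skip
      · exact ⟨![0, 1, 1, 0], ![0, 0, 0, 1], by funext k; fin_cases k <;> simp [cr, e]⟩
      · exact ⟨![0, 1, 0, -1], ![0, 0, 1, 0], by funext k; fin_cases k <;> simp [cr, e]⟩
      · exact ⟨![0, 1, 0, 0], ![0, 0, 1, 1], by funext k; fin_cases k <;> simp [cr, e]⟩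
  obtain ⟨u, hu⟩ := hdet
  refine ⟨u, ⟨⟨Matrix.toLinearEquiv' (Wmat P) (Matrix.invertibleOfIsUnitDet _ hW), fun m => ?_⟩⟩⟩
  rw [hu, heq]
  rfl

end TernaryClifford

theorem stmt_10 (R : Type*) [CommRing R] [IsDomain R] [IsPrincipalIdealRing R]
    (K : Type*) [Field K] [Algebra R K] [IsFractionRing R K] (hchar : ringChar K ≠ 2)
    (f g : QuadraticForm R (Fin 3 → R))
    (hf : (gramMatrix f).det ≠ 0) (hg : (gramMatrix g).det ≠ 0) :
    (∃ u : Rˣ, ((u : R) • f).Equivalent g) ↔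
      Nonempty (CliffordAlgebra.even f ≃ₐ[R] CliffordAlgebra.even g) := by
  constructor
  · rintro ⟨u, h⟩
    exact TernaryClifford.forward f g u h
  · rintro ⟨φ⟩
    exact TernaryClifford.backward f g φ
end

section
/- Let f be a primitive nondegenerate quadratic form in 3 variables that is integral over ℤ₂. Then f is similar over ℤ₂ to a form of one of the following five kinds: (1) a diagonal form ⟨1, δ2^r, ε2^s⟩ with units δ, ε ∈ ℤ₂ˣ and 0 ≤ r ≤ s; (2) X² + 2^r·YZ with r ≥ 0; (3) XY + 2^r·Z² with r ≥ 0; (4) X² + 2^r·(Y² + YZ + Z²) with r ≥ 0; (5) X² + XY + Y² + 2^r·Z² with r ≥ 0. -/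
/-- The ideal generated by the coefficients `a_{ij}` of a quadratic form
`f = Σ_{i ≤ j} a_{ij} X_i X_j`. -/
noncomputable def coeffIdeal {R : Type*} [CommRing R] {n : ℕ}
    (f : QuadraticForm R (Fin n → R)) : Ideal R :=
  Ideal.span ((Set.range fun i => f (Pi.single i 1)) ∪
    (Set.range fun ij : Fin n × Fin n =>
      QuadraticMap.polar f (Pi.single ij.1 1) (Pi.single ij.2 1)))

/-- A quadratic form is primitive if the ideal generated by its coefficients is the whole ring. -/
noncomputable def IsPrimitiveForm {R : Type*} [CommRing R] {n : ℕ}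
    (f : QuadraticForm R (Fin n → R)) : Prop :=
  coeffIdeal f = ⊤

/-- Two quadratic forms are similar if a unit multiple of one is isometric to the other. -/
def SimilarForm {R : Type*} [CommRing R] {n : ℕ}
    (f g : QuadraticForm R (Fin n → R)) : Prop :=
  ∃ u : Rˣ, ((u : R) • f).Equivalent g

open Polynomial in
theorem hensel_quad (A B C : ℤ_[2]) (hB : IsUnit B) (hC : ¬ IsUnit C) :
    ∃ t : ℤ_[2], A * t ^ 2 + B * t + C = 0 := by
  have h := hensels_lemma (p := 2) (R := ℤ_[2])
    (F := Polynomial.C A * X ^ 2 + Polynomial.C B * X + Polynomial.C C) (a := 0) (by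
      simp [PadicInt.isUnit_iff.1 hB]
      exact PadicInt.not_isUnit_iff.1 hC)
  obtain ⟨z, hz, -⟩ := h
  exact ⟨z, by simpa using hz⟩

theorem even_of_not_unit {x : ℤ_[2]} (h : ¬ IsUnit x) : ∃ y, x = 2 * y := by
  have := (PadicInt.norm_lt_one_iff_dvd x).1 (PadicInt.not_isUnit_iff.1 h)
  exact_mod_cast this

theorem not_unit_two_mul (y : ℤ_[2]) : ¬ IsUnit (2 * y) := by
  rw [PadicInt.not_isUnit_iff, PadicInt.norm_lt_one_iff_dvd]
  exact_mod_cast dvd_mul_right _ _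

theorem unit_add {x y : ℤ_[2]} (hx : IsUnit x) : IsUnit (x + 2 * y) := by
  by_contra h
  obtain ⟨z, hz⟩ := even_of_not_unit h
  apply not_unit_two_mul (z - y)
  rw [show 2 * (z - y) = x by linear_combination -hz]
  exact hx

theorem sub_one_not_unit {x : ℤ_[2]} (hx : IsUnit x) : ¬ IsUnit (x - 1) := by
  intro h
  have h1 := hx.map (PadicInt.toZMod (p := 2))
  have h2 := h.map (PadicInt.toZMod (p := 2))
  rw [map_sub, map_one] at h2
  revert h1 h2
  generalize (PadicInt.toZMod (p := 2)) x = w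
  revert w
  simp only [isUnit_iff_ne_zero]
  decide

/-- Equivalence of binary forms. -/
def BinEq (a b c a' b' c' : ℤ_[2]) : Prop :=
  ∃ p q r s : ℤ_[2], IsUnit (p * s - q * r) ∧ a * p ^ 2 + b * p * r + c * r ^ 2 = a' ∧
    2 * a * p * q + b * (p * s + q * r) + 2 * c * r * s = b' ∧
    a * q ^ 2 + b * q * s + c * s ^ 2 = c'

theorem BinEq.trans {a b c a' b' c' a'' b'' c'' : ℤ_[2]} (h : BinEq a b c a' b' c')
    (h' : BinEq a' b' c' a'' b'' c'') : BinEq a b c a'' b'' c'' := by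
  obtain ⟨p, q, r, s, hu, rfl, rfl, rfl⟩ := h
  obtain ⟨p', q', r', s', hu', rfl, rfl, rfl⟩ := h'
  refine ⟨p * p' + q * r', p * q' + q * s', r * p' + s * r', r * q' + s * s', ?_, ?_, ?_, ?_⟩
  · convert hu.mul hu' using 1; ring
  all_goals ring

theorem BinEq.swap (a b c : ℤ_[2]) : BinEq a b c c b a :=
  ⟨0, 1, 1, 0, by simp, by ring, by ring, by ring⟩

theorem bin_hyp {a b c : ℤ_[2]} (hb : IsUnit b) (hc : ¬ IsUnit c) : BinEq a b c 0 1 0 := by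
  obtain ⟨t, ht⟩ := hensel_quad a b c hb hc
  have hu : IsUnit (b + 2 * (a * t)) := unit_add hb
  obtain ⟨v, hv⟩ := hu.exists_right_inv
  -- e = (v, 0) - a v ^ 2 (t, 1), w = (t, 1)
  refine ⟨v - a * v ^ 2 * t, t, - a * v ^ 2, 1, ?_, ?_, ?_, ?_⟩
  · have : IsUnit v := IsUnit.of_mul_eq_one_right _ hv
    convert this using 1; ring
  · linear_combination (a * v ^ 2) ^ 2 * ht - a * v ^ 2 * hv
  · linear_combination hv - 2 * a * v ^ 2 * ht
  · linear_combination ht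

theorem bin_ell {a b c : ℤ_[2]} (hb : IsUnit b) (ha : IsUnit a) (hc : IsUnit c) :
    BinEq a b c 1 1 1 := by
  obtain ⟨t, ht⟩ := hensel_quad a b (c - 1) hb (sub_one_not_unit hc)
  have hu : IsUnit (b + 2 * (a * t)) := unit_add hb
  obtain ⟨v, hv⟩ := hu.exists_right_inv
  have hvu : IsUnit v := IsUnit.of_mul_eq_one_right _ hv
  have h1 : BinEq a b c (a * v ^ 2) 1 1 := by
    refine ⟨v, t, 0, 1, by simpa using hvu, by ring, ?_, ?_⟩
    · linear_combination hv
    · linear_combination ht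
  refine h1.trans ?_
  have hk : IsUnit (a * v ^ 2) := ha.mul (hvu.pow 2)
  generalize a * v ^ 2 = k at hk
  obtain ⟨s, hs⟩ := hensel_quad (4 * k - 1) (-(4 * k - 1)) (k - 1) (by
    rw [show -(4 * k - 1) = 1 + 2 * (-2 * k) by ring]
    exact unit_add isUnit_one) (sub_one_not_unit hk)
  refine ⟨1 - 2 * s, 0, s, 1, ?_, ?_, ?_, ?_⟩
  · rw [show (1 - 2 * s) * 1 - 0 * s = 1 + 2 * (- s) by ring]
    exact unit_add isUnit_one
  · linear_combination hs
  · ring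
  · ring

theorem bin_class (a b c : ℤ_[2]) (hb : IsUnit b) : BinEq a b c 0 1 0 ∨ BinEq a b c 1 1 1 := by
  by_cases hc : IsUnit c
  · by_cases ha : IsUnit a
    · exact Or.inr (bin_ell hb ha hc)
    · exact Or.inl ((BinEq.swap a b c).trans (bin_hyp hb ha))
  · exact Or.inl (bin_hyp hb hc)

/-- Ternary form with given coefficients. -/
noncomputable def tern (a b c d e h : ℤ_[2]) : QuadraticForm ℤ_[2] (Fin 3 → ℤ_[2]) :=
  Matrix.toQuadraticMap' (R := ℤ_[2]) !![a, d, e; 0, b, h; 0, 0, c]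

theorem tern_apply (a b c d e h : ℤ_[2]) (x : Fin 3 → ℤ_[2]) :
    tern a b c d e h x = a * x 0 ^ 2 + b * x 1 ^ 2 + c * x 2 ^ 2 + d * x 0 * x 1
      + e * x 0 * x 2 + h * x 1 * x 2 := by
  simp [tern, Matrix.toQuadraticMap', Matrix.toQuadraticForm', Matrix.toLinearMap₂'_apply, Fin.sum_univ_three]
  ring

theorem SimilarForm.trans' {f g k : QuadraticForm ℤ_[2] (Fin 3 → ℤ_[2])}
    (h : SimilarForm f g) (h' : SimilarForm g k) : SimilarForm f k := by
  obtain ⟨u, ⟨φ⟩⟩ := h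
  obtain ⟨v, ⟨ψ⟩⟩ := h'
  refine ⟨v * u, ⟨⟨φ.toLinearEquiv.trans ψ.toLinearEquiv, fun x => ?_⟩⟩⟩
  have h1 := φ.map_app x
  have h2 := ψ.map_app (φ x)
  simp at h1 h2 ⊢
  ring

theorem similar_of_matrix {f g : QuadraticForm ℤ_[2] (Fin 3 → ℤ_[2])} (u : ℤ_[2])
    (hu : IsUnit u) (P : Matrix (Fin 3) (Fin 3) ℤ_[2]) (hP : IsUnit P.det)
    (h : ∀ x, g x = u * f (P.mulVec x)) : SimilarForm f g := by
  obtain ⟨u, rfl⟩ := hu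
  refine ⟨u, QuadraticMap.Equivalent.symm ⟨⟨Matrix.toLinearEquiv' P
    (Matrix.invertibleOfIsUnitDet P hP), fun x => ?_⟩⟩⟩
  rw [h x]
  simp [Matrix.toLinearEquiv', Matrix.toLin'_apply]

/-- The conclusion. -/
def Concl (f : QuadraticForm ℤ_[2] (Fin 3 → ℤ_[2])) : Prop :=
    (∃ (δ ε : ℤ_[2]ˣ) (r s : ℕ), r ≤ s ∧
      SimilarForm f (tern 1 ((δ : ℤ_[2]) * 2 ^ r) ((ε : ℤ_[2]) * 2 ^ s) 0 0 0)) ∨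
    (∃ r : ℕ, SimilarForm f (tern 1 0 0 0 0 (2 ^ r))) ∨
    (∃ r : ℕ, SimilarForm f (tern 0 0 (2 ^ r) 1 0 0)) ∨
    (∃ r : ℕ, SimilarForm f (tern 1 (2 ^ r) (2 ^ r) 0 0 (2 ^ r))) ∨
    (∃ r : ℕ, SimilarForm f (tern 1 1 (2 ^ r) 1 0 0))

theorem Concl.of_similar {f g : QuadraticForm ℤ_[2] (Fin 3 → ℤ_[2])}
    (h : SimilarForm f g) (hg : Concl g) : Concl f := by
  rcases hg with ⟨δ, ε, r, s, hrs, H⟩ | ⟨r, H⟩ | ⟨r, H⟩ | ⟨r, H⟩ | ⟨r, H⟩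
  · exact Or.inl ⟨δ, ε, r, s, hrs, h.trans' H⟩
  · exact Or.inr (Or.inl ⟨r, h.trans' H⟩)
  · exact Or.inr (Or.inr (Or.inl ⟨r, h.trans' H⟩))
  · exact Or.inr (Or.inr (Or.inr (Or.inl ⟨r, h.trans' H⟩)))
  · exact Or.inr (Or.inr (Or.inr (Or.inr ⟨r, h.trans' H⟩)))

theorem swap01 (a b c d e h : ℤ_[2]) : SimilarForm (tern a b c d e h) (tern b a c d h e) := by
  refine similar_of_matrix 1 isUnit_one !![0, 1, 0; 1, 0, 0; 0, 0, 1] ?_ fun x => ?_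
  · simp [Matrix.det_fin_three]
  · simp [tern_apply, Matrix.mulVec, dotProduct, Fin.sum_univ_three]
    ring

theorem swap12 (a b c d e h : ℤ_[2]) : SimilarForm (tern a b c d e h) (tern a c b e d h) := by
  refine similar_of_matrix 1 isUnit_one !![1, 0, 0; 0, 0, 1; 0, 1, 0] ?_ fun x => ?_
  · simp [Matrix.det_fin_three]
  · simp [tern_apply, Matrix.mulVec, dotProduct, Fin.sum_univ_three]
    ring

theorem bin01 {a b c a' b' c' : ℤ_[2]} (k : ℤ_[2]) (H : BinEq a b c a' b' c') :
    SimilarForm (tern a c k b 0 0) (tern a' c' k b' 0 0) := by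
  obtain ⟨p, q, r, s, hu, rfl, rfl, rfl⟩ := H
  refine similar_of_matrix 1 isUnit_one !![p, q, 0; r, s, 0; 0, 0, 1] ?_ fun x => ?_
  · simpa [Matrix.det_fin_three] using hu
  · simp [tern_apply, Matrix.mulVec, dotProduct, Fin.sum_univ_three]
    ring

theorem bin12 {a b c a' b' c' : ℤ_[2]} (m : ℤ_[2]) (H : BinEq a b c a' b' c') :
    SimilarForm (tern 1 (m * a) (m * c) 0 0 (m * b)) (tern 1 (m * a') (m * c') 0 0 (m * b')) := by
  obtain ⟨p, q, r, s, hu, rfl, rfl, rfl⟩ := H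
  refine similar_of_matrix 1 isUnit_one !![1, 0, 0; 0, p, q; 0, r, s] ?_ fun x => ?_
  · simpa [Matrix.det_fin_three] using hu
  · simp [tern_apply, Matrix.mulVec, dotProduct, Fin.sum_univ_three]
    ring

theorem scale (a b c d e h u : ℤ_[2]) (hu : IsUnit u) :
    SimilarForm (tern a b c d e h) (tern (u * a) (u * b) (u * c) (u * d) (u * e) (u * h)) := by
  refine similar_of_matrix u hu 1 (by simp) fun x => ?_
  simp [tern_apply]
  ring

theorem unit_pow {x : ℤ_[2]} (hx : x ≠ 0) : ∃ (u : ℤ_[2]ˣ) (n : ℕ), x = u * 2 ^ n :=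
  ⟨PadicInt.unitCoeff hx, x.valuation, by exact_mod_cast PadicInt.unitCoeff_spec hx⟩

theorem caseA (a b c d e h : ℤ_[2]) (hd : IsUnit d)
    (hΔ : 4 * a * b * c + d * e * h - a * h ^ 2 - b * e ^ 2 - c * d ^ 2 ≠ 0) :
    Concl (tern a b c d e h) := by
  have hD : IsUnit (d ^ 2 + 2 * (- 2 * a * b)) := unit_add (hd.pow 2)
  obtain ⟨w, hw⟩ := hD.exists_right_inv
  set α := w * (2 * b * e - d * h) with hα
  set β := w * (2 * a * h - d * e) with hβ
  have e1 : 2 * a * α + d * β + e = 0 := by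
    rw [hα, hβ]; linear_combination (-e) * hw
  have e2 : d * α + 2 * b * β + h = 0 := by
    rw [hα, hβ]; linear_combination (-h) * hw
  have S1 : SimilarForm (tern a b c d e h)
      (tern a b (a * α ^ 2 + b * β ^ 2 + c + d * α * β + e * α + h * β) d 0 0) := by
    refine similar_of_matrix 1 isUnit_one !![1, 0, α; 0, 1, β; 0, 0, 1] ?_ fun x => ?_
    · simp [Matrix.det_fin_three]
    · simp [tern_apply, Matrix.mulVec, dotProduct, Fin.sum_univ_three]
      linear_combination -x 0 * x 2 * e1 - x 1 * x 2 * e2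
  have hk : a * α ^ 2 + b * β ^ 2 + c + d * α * β + e * α + h * β ≠ 0 := by
    intro h0
    apply hΔ
    clear_value α β
    obtain rfl : e = -2 * a * α - d * β := by linear_combination e1
    obtain rfl : h = -d * α - 2 * b * β := by linear_combination e2
    linear_combination (4 * a * b - d ^ 2) * h0
  generalize a * α ^ 2 + b * β ^ 2 + c + d * α * β + e * α + h * β = k at S1 hk
  refine Concl.of_similar S1 ?_
  obtain ⟨u, n, rfl⟩ := unit_pow hk
  refine Concl.of_similar (scale _ _ _ _ _ _ (↑u⁻¹ : ℤ_[2]) u⁻¹.isUnit) ?_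
  simp only [mul_zero, Units.inv_mul_cancel_left]
  rcases bin_class (↑u⁻¹ * a) (↑u⁻¹ * d) (↑u⁻¹ * b) (u⁻¹.isUnit.mul hd) with H | H
  · exact Or.inr (Or.inr (Or.inl ⟨n, bin01 _ H⟩))
  · exact Or.inr (Or.inr (Or.inr (Or.inr ⟨n, bin01 _ H⟩)))

theorem content (n : ℕ) : ∀ a b c : ℤ_[2], ¬ (2 ^ n ∣ a ∧ 2 ^ n ∣ b ∧ 2 ^ n ∣ c) →
    ∃ (r : ℕ) (a' b' c' : ℤ_[2]), a = 2 ^ r * a' ∧ b = 2 ^ r * b' ∧ c = 2 ^ r * c' ∧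
      (IsUnit a' ∨ IsUnit b' ∨ IsUnit c') := by
  induction n with
  | zero => intro a b c h; simp at h
  | succ n ih =>
    intro a b c h
    by_cases hu : IsUnit a ∨ IsUnit b ∨ IsUnit c
    · exact ⟨0, a, b, c, by simp, by simp, by simp, hu⟩
    · push Not at hu
      obtain ⟨a, rfl⟩ := even_of_not_unit hu.1
      obtain ⟨b, rfl⟩ := even_of_not_unit hu.2.1
      obtain ⟨c, rfl⟩ := even_of_not_unit hu.2.2
      obtain ⟨r, a', b', c', rfl, rfl, rfl, H⟩ := ih a b c (fun hh => h (by
        simp only [pow_succ']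
        exact ⟨mul_dvd_mul_left _ hh.1, mul_dvd_mul_left _ hh.2.1, mul_dvd_mul_left _ hh.2.2⟩))
      exact ⟨r + 1, a', b', c', by ring, by ring, by ring, H⟩

theorem diagCase (r : ℕ) (a b c : ℤ_[2]) (ha : IsUnit a) (hb : ¬ IsUnit b)
    (h0 : 4 * a * c - b ^ 2 ≠ 0) :
    Concl (tern 1 (2 ^ r * a) (2 ^ r * c) 0 0 (2 ^ r * b)) := by
  obtain ⟨b, rfl⟩ := even_of_not_unit hb
  obtain ⟨u, rfl⟩ := ha
  have hu : (u : ℤ_[2]) * ↑u⁻¹ = 1 := u.mul_inv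
  have H : BinEq u (2 * b) c u 0 (c - ↑u⁻¹ * b ^ 2) := by
    refine ⟨1, - ↑u⁻¹ * b, 0, 1, by simp, by ring, ?_, ?_⟩
    · linear_combination (-2 * b) * hu
    · linear_combination (b ^ 2 * ↑u⁻¹) * hu
  refine Concl.of_similar (bin12 _ H) ?_
  have hk : c - ↑u⁻¹ * b ^ 2 ≠ 0 := by
    intro h
    apply h0
    linear_combination 4 * (u : ℤ_[2]) * h + 4 * b ^ 2 * hu
  generalize c - ↑u⁻¹ * b ^ 2 = k at hk
  obtain ⟨v, n, rfl⟩ := unit_pow hk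
  refine Or.inl ⟨u, v, r, r + n, by omega, ?_⟩
  rw [show (2 : ℤ_[2]) ^ r * u = u * 2 ^ r by ring,
    show (2 : ℤ_[2]) ^ r * (v * 2 ^ n) = v * 2 ^ (r + n) by ring, mul_zero]
  exact ⟨1, by simpa using QuadraticMap.Equivalent.refl _⟩

theorem caseB1 (b c h : ℤ_[2]) (hΔ : 4 * b * c - h ^ 2 ≠ 0) : Concl (tern 1 b c 0 0 h) := by
  obtain ⟨u, n, hn⟩ := unit_pow hΔ
  obtain ⟨r, b, h, c, rfl, rfl, rfl, H⟩ := content (n + 1) b h c (by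
    rintro ⟨⟨b, rfl⟩, ⟨h, rfl⟩, ⟨c, rfl⟩⟩
    have h2 : (2 : ℤ_[2]) ^ n ≠ 0 := pow_ne_zero _ two_ne_zero
    apply not_unit_two_mul (2 ^ (n + 1) * (4 * b * c - h ^ 2))
    convert u.isUnit using 1
    apply mul_right_cancel₀ h2
    rw [← hn]; ring)
  have hΔ' : 4 * b * c - h ^ 2 ≠ 0 := by
    intro h0; apply hΔ; linear_combination (2 ^ r) ^ 2 * h0
  by_cases hh : IsUnit h
  · rcases bin_class b h c hh with H | H
    · have := bin12 (2 ^ r) H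
      simp only [mul_zero, mul_one] at this
      exact Or.inr (Or.inl ⟨r, this⟩)
    · have := bin12 (2 ^ r) H
      simp only [mul_one] at this
      exact Or.inr (Or.inr (Or.inr (Or.inl ⟨r, this⟩)))
  · by_cases hb : IsUnit b
    · exact diagCase r b h c hb hh hΔ'
    · have hc : IsUnit c := by tauto
      refine Concl.of_similar (swap12 _ _ _ _ _ _) (diagCase r c h b hc hh ?_)
      intro h0; apply hΔ'; linear_combination h0

theorem caseB (a b c d e h : ℤ_[2]) (ha : IsUnit a) (hd : ¬ IsUnit d) (he : ¬ IsUnit e)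
    (hΔ : 4 * a * b * c + d * e * h - a * h ^ 2 - b * e ^ 2 - c * d ^ 2 ≠ 0) :
    Concl (tern a b c d e h) := by
  obtain ⟨d, rfl⟩ := even_of_not_unit hd
  obtain ⟨e, rfl⟩ := even_of_not_unit he
  obtain ⟨v, hv⟩ := ha.exists_right_inv
  have hvu : IsUnit v := IsUnit.of_mul_eq_one_right _ hv
  have S1 : SimilarForm (tern a b c (2 * d) (2 * e) h)
      (tern 1 (v * b - v ^ 2 * d ^ 2) (v * c - v ^ 2 * e ^ 2) 0 0
        (v * h - 2 * v ^ 2 * d * e)) := by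
    refine similar_of_matrix v hvu !![1, -v * d, -v * e; 0, 1, 0; 0, 0, 1] ?_ fun x => ?_
    · simp [Matrix.det_fin_three]
    · simp [tern_apply, Matrix.mulVec, dotProduct, Fin.sum_univ_three]
      linear_combination (-(x 0 - v * d * x 1 - v * e * x 2) ^ 2) * hv
  refine Concl.of_similar S1 (caseB1 _ _ _ fun h0 => hΔ ?_)
  refine (mul_eq_zero.1 ?_).resolve_left (pow_ne_zero 3 hvu.ne_zero)
  linear_combination h0 + (4 * b * c - h ^ 2) * v ^ 2 * hv

theorem coeffMain (a b c d e h : ℤ_[2])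
    (hΔ : 4 * a * b * c + d * e * h - a * h ^ 2 - b * e ^ 2 - c * d ^ 2 ≠ 0)
    (hp : IsUnit a ∨ IsUnit b ∨ IsUnit c ∨ IsUnit d ∨ IsUnit e ∨ IsUnit h) :
    Concl (tern a b c d e h) := by
  by_cases hd : IsUnit d
  · exact caseA _ _ _ _ _ _ hd hΔ
  by_cases he : IsUnit e
  · refine Concl.of_similar (swap12 _ _ _ _ _ _) (caseA _ _ _ _ _ _ he ?_)
    convert hΔ using 1; ring
  by_cases hh : IsUnit h
  · refine Concl.of_similar (swap01 _ _ _ _ _ _) (Concl.of_similar (swap12 _ _ _ _ _ _)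
      (caseA _ _ _ _ _ _ hh ?_))
    convert hΔ using 1; ring
  by_cases ha : IsUnit a
  · exact caseB _ _ _ _ _ _ ha hd he hΔ
  by_cases hb : IsUnit b
  · refine Concl.of_similar (swap01 _ _ _ _ _ _) (caseB _ _ _ _ _ _ hb hd hh ?_)
    convert hΔ using 1; ring
  have hc : IsUnit c := by tauto
  refine Concl.of_similar (swap12 _ _ _ _ _ _) (Concl.of_similar (swap01 _ _ _ _ _ _)
      (caseB _ _ _ _ _ _ hc he hh ?_))
  convert hΔ using 1; ring

theorem eq_tern (f : QuadraticForm ℤ_[2] (Fin 3 → ℤ_[2])) :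
    f = tern (f (Pi.single 0 1)) (f (Pi.single 1 1)) (f (Pi.single 2 1))
      (QuadraticMap.polar f (Pi.single 0 1) (Pi.single 1 1))
      (QuadraticMap.polar f (Pi.single 0 1) (Pi.single 2 1))
      (QuadraticMap.polar f (Pi.single 1 1) (Pi.single 2 1)) := by
  ext x
  have hx : x = x 0 • Pi.single 0 1 + x 1 • Pi.single 1 1 + x 2 • Pi.single 2 1 := by
    ext i; fin_cases i <;> simp
  rw [tern_apply]
  conv_lhs => rw [hx]
  rw [QuadraticMap.map_add f, QuadraticMap.map_add f, QuadraticMap.polar_add_left]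
  simp only [QuadraticMap.polar_smul_left, QuadraticMap.polar_smul_right, QuadraticMap.map_smul,
    smul_eq_mul]
  ring

theorem polar_self' (f : QuadraticForm ℤ_[2] (Fin 3 → ℤ_[2])) (x : Fin 3 → ℤ_[2]) :
    QuadraticMap.polar f x x = 2 * f x := by
  rw [QuadraticMap.polar_self]; simp

theorem stmt_12 (f : QuadraticForm ℤ_[2] (Fin 3 → ℤ_[2]))
    (hprim : IsPrimitiveForm f) (hnd : (gramMatrix f).det ≠ 0) :
    (∃ (δ ε : ℤ_[2]ˣ) (r s : ℕ), r ≤ s ∧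
      SimilarForm f (QuadraticMap.weightedSumSquares ℤ_[2]
        ![1, (δ : ℤ_[2]) * 2 ^ r, (ε : ℤ_[2]) * 2 ^ s])) ∨
    (∃ r : ℕ, SimilarForm f
      (Matrix.toQuadraticMap' (R := ℤ_[2]) !![1, 0, 0; 0, 0, 2 ^ r; 0, 0, 0])) ∨
    (∃ r : ℕ, SimilarForm f
      (Matrix.toQuadraticMap' (R := ℤ_[2]) !![0, 1, 0; 0, 0, 0; 0, 0, 2 ^ r])) ∨
    (∃ r : ℕ, SimilarForm f
      (Matrix.toQuadraticMap' (R := ℤ_[2]) !![1, 0, 0; 0, 2 ^ r, 2 ^ r; 0, 0, 2 ^ r])) ∨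
    (∃ r : ℕ, SimilarForm f
      (Matrix.toQuadraticMap' (R := ℤ_[2]) !![1, 1, 0; 0, 1, 0; 0, 0, 2 ^ r])) := by
  have hC : Concl f := by
    rw [eq_tern f]
    apply coeffMain
    · intro h0
      apply hnd
      have c1 := QuadraticMap.polar_comm f (Pi.single 1 1) (Pi.single 0 1)
      have c2 := QuadraticMap.polar_comm f (Pi.single 2 1) (Pi.single 0 1)
      have c3 := QuadraticMap.polar_comm f (Pi.single 2 1) (Pi.single 1 1)
      simp only [gramMatrix, Matrix.det_fin_three, Matrix.of_apply, polar_self', c1, c2, c3]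
      linear_combination 2 * h0
    · by_contra hne
      push Not at hne
      obtain ⟨h1, h2, h3, h4, h5, h6⟩ := hne
      have hle : coeffIdeal f ≤ Ideal.span {(2 : ℤ_[2])} := by
        rw [coeffIdeal, Ideal.span_le]
        rintro x (⟨i, rfl⟩ | ⟨⟨i, j⟩, rfl⟩)
        · rw [SetLike.mem_coe, Ideal.mem_span_singleton]
          fin_cases i
          · exact even_of_not_unit h1
          · exact even_of_not_unit h2
          · exact even_of_not_unit h3
        · rw [SetLike.mem_coe, Ideal.mem_span_singleton]
          have c1 := QuadraticMap.polar_comm f (Pi.single 1 1) (Pi.single 0 1)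
          have c2 := QuadraticMap.polar_comm f (Pi.single 2 1) (Pi.single 0 1)
          have c3 := QuadraticMap.polar_comm f (Pi.single 2 1) (Pi.single 1 1)
          fin_cases i <;> fin_cases j
          · exact ⟨_, polar_self' f _⟩
          · exact even_of_not_unit h4
          · exact even_of_not_unit h5
          · rw [← c1] at h4; exact even_of_not_unit h4
          · exact ⟨_, polar_self' f _⟩
          · exact even_of_not_unit h6
          · rw [← c2] at h5; exact even_of_not_unit h5
          · rw [← c3] at h6; exact even_of_not_unit h6
          · exact ⟨_, polar_self' f _⟩
      rw [show coeffIdeal f = ⊤ from hprim] at hle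
      have h1' : (1 : ℤ_[2]) ∈ Ideal.span {(2 : ℤ_[2])} := hle trivial
      obtain ⟨y, hy⟩ := Ideal.mem_span_singleton.1 h1'
      exact not_unit_two_mul y (hy ▸ isUnit_one)
  have hw : ∀ b c : ℤ_[2], QuadraticMap.weightedSumSquares ℤ_[2] ![1, b, c] =
      tern 1 b c 0 0 0 := by
    intro b c
    ext x
    simp [tern_apply, QuadraticMap.weightedSumSquares_apply, Fin.sum_univ_three]
    ring
  simp only [hw]
  exact hC
end

section
/- Over the ring ℤ₂ of 2-adic integers the following similarities of ternary quadratic forms hold: (1) X² + 2YZ is similar to the diagonal form ⟨1,1,−1⟩; (2) X² + 2(Y² + YZ + Z²) is similar to the diagonal form ⟨1,1,1⟩; (3) X² + 4YZ is similar to X² + 4(Y² + YZ + Z²). -/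
lemma similar_of_matrix_s13 {R : Type*} [CommRing R] {n : ℕ}
    (f g : QuadraticForm R (Fin n → R)) (u : R) (hu : IsUnit u)
    (A B : Matrix (Fin n) (Fin n) R) (hBA : B * A = 1)
    (h : ∀ v, g (A.mulVec v) = u * f v) : SimilarForm f g := by
  obtain ⟨u, rfl⟩ := hu
  have hAB : A * B = 1 := mul_eq_one_comm.mp hBA
  refine ⟨u, ⟨⟨Matrix.toLin'OfInv hBA hAB, fun v => ?_⟩⟩⟩
  change g (Matrix.toLin' A v) = _
  rw [Matrix.toLin'_apply, h]
  rfl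

lemma toQuadraticMap'_apply_three {R : Type*} [CommRing R]
    (M : Matrix (Fin 3) (Fin 3) R) (v : Fin 3 → R) :
    M.toQuadraticMap' v = ∑ i, ∑ j, v i * M i j * v j := by
  simp [Matrix.toQuadraticMap', Matrix.toQuadraticForm', Matrix.toLinearMap₂'_apply, Fin.sum_univ_three]
  ring

lemma exists_inv_two_adic (k : ℤ) (hk : k % 2 = 1) : ∃ t : ℤ_[2], (k : ℤ_[2]) * t = 1 := by
  have h : IsUnit (k : ℤ_[2]) := by
    rw [PadicInt.isUnit_iff]
    by_contra hne
    have := lt_of_le_of_ne (PadicInt.norm_le_one (k : ℤ_[2])) hne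
    rw [PadicInt.norm_int_lt_one_iff_dvd] at this
    omega
  exact h.exists_right_inv

lemma exists_root_two_adic : ∃ r : ℤ_[2], 5 * r ^ 2 + 5 * r + 2 = 0 := by
  have h5 : ‖(5 : ℤ_[2])‖ = 1 := by
    rw [← PadicInt.isUnit_iff]
    obtain ⟨t, ht⟩ := exists_inv_two_adic 5 (by norm_num)
    exact IsUnit.of_mul_eq_one t (by exact_mod_cast ht)
  have h2 : ‖(2 : ℤ_[2])‖ < 1 := by
    have := PadicInt.norm_p (p := 2)
    norm_num at this
    rw [this]; norm_num
  let F : Polynomial ℤ_[2] :=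
    Polynomial.C 5 * Polynomial.X ^ 2 + Polynomial.C 5 * Polynomial.X + Polynomial.C 2
  have hF : ‖F.aeval (0 : ℤ_[2])‖ < ‖F.derivative.aeval (0 : ℤ_[2])‖ ^ 2 := by
    simp [F, Polynomial.aeval_def, -Polynomial.map_ofNat, -map_ofNat, h5, h2]
  obtain ⟨r, hr, -⟩ := hensels_lemma hF
  refine ⟨r, ?_⟩
  simpa [F, Polynomial.aeval_def, -Polynomial.map_ofNat, -map_ofNat] using hr

theorem stmt_13 :
    SimilarForm (Matrix.toQuadraticMap' (R := ℤ_[2]) !![1, 0, 0; 0, 0, 2; 0, 0, 0])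
      (QuadraticMap.weightedSumSquares ℤ_[2] ![1, 1, -1]) ∧
    SimilarForm (Matrix.toQuadraticMap' (R := ℤ_[2]) !![1, 0, 0; 0, 2, 2; 0, 0, 2])
      (QuadraticMap.weightedSumSquares ℤ_[2] ![1, 1, 1]) ∧
    SimilarForm (Matrix.toQuadraticMap' (R := ℤ_[2]) !![1, 0, 0; 0, 0, 4; 0, 0, 0])
      (Matrix.toQuadraticMap' (R := ℤ_[2]) !![1, 0, 0; 0, 4, 4; 0, 0, 4]) := by
  obtain ⟨t, ht⟩ := exists_inv_two_adic 3 (by norm_num)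
  obtain ⟨q, hq⟩ := exists_inv_two_adic 5 (by norm_num)
  obtain ⟨r, hr⟩ := exists_root_two_adic
  push_cast at ht hq
  refine ⟨?_, ?_, ?_⟩
  · refine similar_of_matrix_s13 _ _ 1 isUnit_one !![1, 1, 0; 1, 0, -1; 1, 1, -1]
      !![1, 1, -1; 0, -1, 1; 1, 0, -1] ?_ fun v => ?_
    · ext i j
      fin_cases i <;> fin_cases j <;> simp [Matrix.mul_apply, Fin.sum_univ_three]
    · simp [toQuadraticMap'_apply_three, QuadraticMap.weightedSumSquares_apply,
        Fin.sum_univ_three, Matrix.mulVec, dotProduct]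
      ring
  · -- rows of the inverse: Gram-dual basis, with `t = 1/3`
    refine similar_of_matrix_s13 _ _ 3 (IsUnit.of_mul_eq_one t ht) !![1, 1, 2; 1, 1, -1; 1, -2, -1]
      !![t, t, t; 0, t, -t; t, -t, 0] ?_ fun v => ?_
    · ext i j
      fin_cases i <;> fin_cases j <;> simp [Matrix.mul_apply, Fin.sum_univ_three] <;> grind
    · simp [toQuadraticMap'_apply_three, QuadraticMap.weightedSumSquares_apply,
        Fin.sum_univ_three, Matrix.mulVec, dotProduct]
      ring
  · obtain ⟨w, hw⟩ : ∃ w : ℤ_[2], (1 + 2 * r) * w = 1 :=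
      ⟨-5 * t * (1 + 2 * r), by linear_combination ht - 4 * t * hr⟩
    refine similar_of_matrix_s13 _ _ 5 (IsUnit.of_mul_eq_one q hq)
      !![1, -4 * (1 - r * w) + 2 * w, -4 * (r * w) - 2 * w; 1, 1 - r * w, r * w; 0, -w, w]
      !![q, 4 * q, 2 * q; -q, 1 - 4 * q, -2 * q - r; -q, 1 - 4 * q, -2 * q + 1 + r] ?_ fun v => ?_
    · ext i j
      fin_cases i <;> fin_cases j <;> simp [Matrix.mul_apply, Fin.sum_univ_three] <;> grind
    · simp [toQuadraticMap'_apply_three, Fin.sum_univ_three, Matrix.mulVec, dotProduct]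
      generalize v 0 = X
      generalize v 1 = P
      generalize v 2 = Q
      obtain ⟨z, hz⟩ : ∃ z, z = w * (Q - P) := ⟨_, rfl⟩
      have h1 : (1 + 2 * r) * z = Q - P := by rw [hz]; linear_combination (Q - P) * hw
      have hQ : Q = P + (1 + 2 * r) * z := by linear_combination -h1
      trans (X - 4 * (P + r * z) - 2 * z) ^ 2 + 4 * (X + P + r * z) ^ 2
        + 4 * (X + P + r * z) * z + 4 * z ^ 2
      · rw [hz]; ring
      · rw [hQ]; linear_combination 4 * z ^ 2 * hr
end

section
/- Let p be an odd prime and fix a unit δ ∈ ℤ_pˣ that is not a square. Consider the following list of integral ternary quadratic forms over ℤ_p: (1) ⟨1,1,1⟩; (2) ⟨1, −ε₁, p^s⟩ with s ≥ 1 and ε₁ ∈ {1, δ}; (3) ⟨1, p^r, ε₁p^r⟩ with r ≥ 1 and ε₁ ∈ {1, δ}; (4) ⟨1, ε₁p^r, ε₂p^s⟩ with s > r ≥ 1 and ε₁, ε₂ ∈ {1, δ}. Then every primitive nondegenerate quadratic form in 3 variables integral over ℤ_p is similar over ℤ_p to exactly one form in this list (in particular, distinct members of the list are pairwise non-similar).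 -/
/-- The standard list of representatives of similarity classes of primitive ternary quadratic
forms over `ℤ_p` for an odd prime `p`, given a non-square unit `δ`. -/
noncomputable def InStandardList (p : ℕ) [Fact p.Prime] (δ : ℤ_[p]ˣ)
    (g : QuadraticForm ℤ_[p] (Fin 3 → ℤ_[p])) : Prop :=
  g = QuadraticMap.weightedSumSquares ℤ_[p] ![1, 1, 1] ∨
  (∃ (s : ℕ) (ε₁ : ℤ_[p]ˣ), 1 ≤ s ∧ (ε₁ = 1 ∨ ε₁ = δ) ∧
    g = QuadraticMap.weightedSumSquares ℤ_[p]
      ![1, -(ε₁ : ℤ_[p]), (p : ℤ_[p]) ^ s]) ∨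
  (∃ (r : ℕ) (ε₁ : ℤ_[p]ˣ), 1 ≤ r ∧ (ε₁ = 1 ∨ ε₁ = δ) ∧
    g = QuadraticMap.weightedSumSquares ℤ_[p]
      ![1, (p : ℤ_[p]) ^ r, (ε₁ : ℤ_[p]) * (p : ℤ_[p]) ^ r]) ∨
  (∃ (r s : ℕ) (ε₁ ε₂ : ℤ_[p]ˣ), 1 ≤ r ∧ r < s ∧ (ε₁ = 1 ∨ ε₁ = δ) ∧ (ε₂ = 1 ∨ ε₂ = δ) ∧
    g = QuadraticMap.weightedSumSquares ℤ_[p]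
      ![1, (ε₁ : ℤ_[p]) * (p : ℤ_[p]) ^ r, (ε₂ : ℤ_[p]) * (p : ℤ_[p]) ^ s])


namespace TernAux

open QuadraticMap

section arith
variable {p : ℕ} [Fact p.Prime]

lemma toZMod_eq_zero_iff (x : ℤ_[p]) : PadicInt.toZMod x = 0 ↔ (p : ℤ_[p]) ∣ x := by
  rw [← RingHom.mem_ker, PadicInt.ker_toZMod, PadicInt.maximalIdeal_eq_span_p,
    Ideal.mem_span_singleton]

lemma isUnit_iff_toZMod (x : ℤ_[p]) : IsUnit x ↔ PadicInt.toZMod x ≠ 0 := by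
  rw [Ne, ← RingHom.mem_ker, PadicInt.ker_toZMod, IsLocalRing.mem_maximalIdeal, mem_nonunits_iff,
    not_not]

lemma two_ne (hp : p ≠ 2) : (2 : ZMod p) ≠ 0 := by
  exact Ring.two_ne_zero (by rwa [ZMod.ringChar_zmod_n])

lemma isUnit_two (hp : p ≠ 2) : IsUnit (2 : ℤ_[p]) := by
  rw [isUnit_iff_toZMod, map_ofNat]
  exact two_ne hp

lemma toZMod_surj : Function.Surjective (PadicInt.toZMod : ℤ_[p] →+* ZMod p) :=
  ZMod.ringHom_surjective _

lemma sq_of_mod (hp : p ≠ 2) (u : ℤ_[p]) (a : ℤ_[p]) (hu : IsUnit u)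
    (h : PadicInt.toZMod u = PadicInt.toZMod a ^ 2) :
    ∃ t : ℤ_[p]ˣ, u = t ^ 2 := by
  have ha : IsUnit a := by
    rw [isUnit_iff_toZMod] at hu ⊢
    intro h0; rw [h0] at h; apply hu; rw [h]; simp
  have h1 : ‖a ^ 2 - u‖ < 1 := by
    rw [PadicInt.norm_lt_one_iff_dvd, ← toZMod_eq_zero_iff]
    simp [h]
  have h2 : ‖2 * a‖ = 1 := by
    rw [← PadicInt.isUnit_iff]; exact (isUnit_two hp).mul ha
  obtain ⟨z, hz, -⟩ := hensels_lemma (p := p) (R := ℤ_[p])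
    (F := Polynomial.X ^ 2 - Polynomial.C u) (a := a) (by
      simp only [Polynomial.derivative_sub, Polynomial.derivative_X_pow, Polynomial.derivative_C]
      simpa [h2] using h1)
  have hz' : z ^ 2 = u := by
    have : z ^ 2 - u = 0 := by simpa using hz
    exact sub_eq_zero.mp this
  have hzu : IsUnit z := by
    rw [← hz'] at hu
    exact (isUnit_pow_iff two_ne_zero).mp hu
  exact ⟨hzu.unit, by simp [hz']⟩

lemma isSquare_iff_mod (hp : p ≠ 2) (u : ℤ_[p]ˣ) :
    IsSquare u ↔ IsSquare (PadicInt.toZMod (u : ℤ_[p])) := by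
  constructor
  · rintro ⟨t, rfl⟩
    exact ⟨PadicInt.toZMod (t : ℤ_[p]), by simp⟩
  · rintro ⟨b, hb⟩
    obtain ⟨a, rfl⟩ := toZMod_surj b
    obtain ⟨t, ht⟩ := sq_of_mod hp u a u.isUnit (by rw [hb, pow_two])
    exact ⟨t, by ext; rw [ht]; simp [pow_two]⟩

lemma isSquare_mul_of_not (hp : p ≠ 2) (u v : ℤ_[p]ˣ) (hu : ¬ IsSquare u) (hv : ¬ IsSquare v) :
    IsSquare (u * v) := by
  have hu0 := (isUnit_iff_toZMod (u : ℤ_[p])).1 u.isUnit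
  have hv0 := (isUnit_iff_toZMod (v : ℤ_[p])).1 v.isUnit
  rw [isSquare_iff_mod hp] at *
  have hc : ringChar (ZMod p) ≠ 2 := by rwa [ZMod.ringChar_zmod_n]
  rw [← quadraticChar_neg_one_iff_not_isSquare] at hu hv
  rw [Units.val_mul, map_mul, ← quadraticChar_one_iff_isSquare (mul_ne_zero hu0 hv0), map_mul, hu, hv]
  norm_num

/-- every unit is `1` or `δ` times a square -/
lemma exists_class (hp : p ≠ 2) (δ : ℤ_[p]ˣ) (hδ : ¬ IsSquare δ) (w : ℤ_[p]ˣ) :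
    ∃ ε t : ℤ_[p]ˣ, (ε = 1 ∨ ε = δ) ∧ w = ε * t ^ 2 := by
  by_cases hw : IsSquare w
  · obtain ⟨t, rfl⟩ := hw
    exact ⟨1, t, Or.inl rfl, by rw [pow_two, one_mul]⟩
  · obtain ⟨t, ht⟩ := isSquare_mul_of_not hp w δ hw hδ
    refine ⟨δ, t * δ⁻¹, Or.inr rfl, ?_⟩
    rw [mul_pow, pow_two t, ← ht, pow_two, mul_comm δ]
    group

lemma class_unique {δ : ℤ_[p]ˣ} (hδ : ¬ IsSquare δ) {ε ε' : ℤ_[p]ˣ} (h : ε = 1 ∨ ε = δ)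
    (h' : ε' = 1 ∨ ε' = δ) (hs : IsSquare (ε * ε')) : ε = ε' := by
  rcases h with rfl | rfl <;> rcases h' with rfl | rfl
  · rfl
  · exact absurd (by simpa using hs) hδ
  · exact absurd (by simpa using hs) hδ
  · rfl

lemma exists_repr_one (hp : p ≠ 2) (u v : ℤ_[p]ˣ) :
    ∃ x y : ℤ_[p], (u : ℤ_[p]) * x ^ 2 + (v : ℤ_[p]) * y ^ 2 = 1 := by
  have hu0 := (isUnit_iff_toZMod (u : ℤ_[p])).1 u.isUnit
  have hv0 := (isUnit_iff_toZMod (v : ℤ_[p])).1 v.isUnit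
  have hodd : Fintype.card (ZMod p) % 2 = 1 := by
    rw [ZMod.card]
    exact Nat.odd_iff.mp ((Fact.out : p.Prime).odd_of_ne_two hp)
  obtain ⟨a, b, hab⟩ := FiniteField.exists_root_sum_quadratic
    (f := Polynomial.C (PadicInt.toZMod (u : ℤ_[p])) * Polynomial.X ^ 2 + Polynomial.C 0 * Polynomial.X + Polynomial.C 0)
    (g := Polynomial.C (PadicInt.toZMod (v : ℤ_[p])) * Polynomial.X ^ 2 + Polynomial.C 0 * Polynomial.X + Polynomial.C (-1))
    (Polynomial.degree_quadratic hu0) (Polynomial.degree_quadratic hv0) hodd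
  obtain ⟨x, rfl⟩ := toZMod_surj a
  obtain ⟨y, rfl⟩ := toZMod_surj b
  have hw : PadicInt.toZMod ((u : ℤ_[p]) * x ^ 2 + (v : ℤ_[p]) * y ^ 2) = 1 := by
    simp at hab
    simp
    linear_combination hab
  have hwu : IsUnit ((u : ℤ_[p]) * x ^ 2 + (v : ℤ_[p]) * y ^ 2) := by
    rw [isUnit_iff_toZMod, hw]; exact one_ne_zero
  obtain ⟨t, ht⟩ := sq_of_mod hp _ 1 hwu (by rw [hw]; simp)
  refine ⟨x * (t⁻¹ : ℤ_[p]ˣ), y * (t⁻¹ : ℤ_[p]ˣ), ?_⟩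
  have h1 : (t : ℤ_[p]) * (t⁻¹ : ℤ_[p]ˣ) = 1 := by simp
  linear_combination (((t⁻¹ : ℤ_[p]ˣ) : ℤ_[p]) ^ 2) * ht + ((t : ℤ_[p]) * (t⁻¹ : ℤ_[p]ˣ) + 1) * h1

end arith

section diag

variable {p : ℕ} [Fact p.Prime]

lemma dvd_of_val_le {x y : ℤ_[p]} (hx : x ≠ 0) (hy : y ≠ 0) (h : x.valuation ≤ y.valuation) :
    x ∣ y := by
  rw [PadicInt.unitCoeff_spec hx, PadicInt.unitCoeff_spec hy, Units.mul_left_dvd]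
  exact dvd_mul_of_dvd_right (pow_dvd_pow _ h) _

lemma exists_ortho_basis (hp : p ≠ 2) (n : ℕ) : ∀ (M : Type) [AddCommGroup M] [Module ℤ_[p] M]
    (_ : Module.Basis (Fin n) ℤ_[p] M) (f : QuadraticForm ℤ_[p] M),
    ∃ b : Module.Basis (Fin n) ℤ_[p] M, (∀ i j, i ≠ j → polar f (b i) (b j) = 0) ∧
      (∀ i j, i ≤ j → f (b i) ∣ f (b j)) := by
  induction n with
  | zero => intro M _ _ b f; exact ⟨b, fun i => i.elim0, fun i => i.elim0⟩
  | succ n ih =>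
    intro M _ _ b0 f
    by_cases hf : ∀ x, f x = 0
    · exact ⟨b0, fun i j _ => by simp [polar, hf], fun i j _ => by simp [hf]⟩
    push Not at hf
    have hex : ∃ k, ∃ x, f x ≠ 0 ∧ (f x).valuation = k := by
      obtain ⟨x, hx⟩ := hf; exact ⟨_, x, hx, rfl⟩
    classical
    obtain ⟨x, hx0, hxv⟩ := Nat.find_spec hex
    have hdvd : ∀ y, f x ∣ f y := by
      intro y
      by_cases hy : f y = 0
      · simp [hy]
      · refine dvd_of_val_le hx0 hy ?_
        rw [hxv]
        exact Nat.find_min' hex ⟨y, hy, rfl⟩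
    have h2 := isUnit_two hp
    have hpol : ∀ y, ∃ c, polar f x y = 2 * f x * c := by
      intro y
      have : f x ∣ polar f x y := by
        unfold polar
        exact dvd_sub (dvd_sub (hdvd _) (hdvd _)) (hdvd _)
      have : 2 * f x ∣ polar f x y := by
        obtain ⟨u, hu⟩ := h2
        rw [← hu]
        exact (Units.mul_left_dvd).2 this
      exact this
    choose c hc using hpol
    have hne : 2 * f x ≠ 0 := mul_ne_zero h2.ne_zero hx0
    let φ : M →ₗ[ℤ_[p]] ℤ_[p] :=
      { toFun := c
        map_add' := by
          intro y z
          apply mul_left_cancel₀ hne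
          rw [← hc, mul_add, ← hc, ← hc, polar_add_right]
        map_smul' := by
          intro a y
          apply mul_left_cancel₀ hne
          rw [← hc, polar_smul_right, hc]
          simp only [smul_eq_mul, RingHom.id_apply]; ring }
    have hφ : ∀ y, polar f x y = 2 * f x * φ y := hc
    have hφx : φ x = 1 := by
      apply mul_left_cancel₀ hne
      rw [← hφ, polar_self]; simp
    have hsp : ∀ z : M, ∃ a : ℤ_[p], z + a • x ∈ LinearMap.ker φ := by
      intro z
      refine ⟨- φ z, ?_⟩
      simp [hφx]
    have hli : ∀ (a : ℤ_[p]), ∀ y ∈ LinearMap.ker φ, a • x + y = 0 → a = 0 := by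
      intro a y hy h
      have := congrArg φ h
      simpa [hφx, LinearMap.mem_ker.1 hy] using this
    have : Module.Free ℤ_[p] M := Module.Free.of_basis b0
    have : Module.Finite ℤ_[p] M := Module.Finite.of_basis b0
    have hfr : Module.finrank ℤ_[p] (LinearMap.ker φ) = n := by
      let b1 := Module.finBasis ℤ_[p] (LinearMap.ker φ)
      let b2 := Module.Basis.mkFinCons x b1 hli hsp
      have h1 := Module.finrank_eq_card_basis b2
      have h2 := Module.finrank_eq_card_basis b0
      simp at h1 h2
      omega
    obtain ⟨b1, ho, hd⟩ := ih (LinearMap.ker φ) (Module.finBasisOfFinrankEq _ _ hfr)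
      (f.comp (LinearMap.ker φ).subtype)
    refine ⟨Module.Basis.mkFinCons x b1 hli hsp, ?_, ?_⟩
    · have hb : ∀ j, polar f x (b1 j) = 0 := by
        intro j
        rw [hφ, LinearMap.mem_ker.1 (b1 j).2, mul_zero]
      intro i j hij
      rw [Module.Basis.coe_mkFinCons]
      induction i using Fin.cases with
      | zero =>
        induction j using Fin.cases with
        | zero => exact absurd rfl hij
        | succ j => simpa using hb j
      | succ i =>
        induction j using Fin.cases with
        | zero => rw [polar_comm]; simpa using hb i
        | succ j =>
          have := ho i j (by simpa using hij)
          simpa [polar] using this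
    · intro i j hij
      rw [Module.Basis.coe_mkFinCons]
      induction i using Fin.cases with
      | zero => simpa using hdvd _
      | succ i =>
        induction j using Fin.cases with
        | zero => simp at hij
        | succ j =>
          have := hd i j (by simpa using hij)
          simpa using this

lemma exists_diag (hp : p ≠ 2) (f : QuadraticForm ℤ_[p] (Fin 3 → ℤ_[p]))
    (hprim : IsPrimitiveForm f) (hnd : (gramMatrix f).det ≠ 0) :
    ∃ (u : Fin 3 → ℤ_[p]ˣ) (r s : ℕ), r ≤ s ∧ f.Equivalent (weightedSumSquares ℤ_[p]
      ![(u 0 : ℤ_[p]), u 1 * (p : ℤ_[p]) ^ r, u 2 * (p : ℤ_[p]) ^ s]) := by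
  obtain ⟨b, ho, hd⟩ := exists_ortho_basis hp 3 _ (Pi.basisFun ℤ_[p] (Fin 3)) f
  have hval : ∀ w : Fin 3 → ℤ_[p], f (∑ i, w i • b i) = ∑ i, f (b i) * (w i * w i) := by
    intro w
    simp only [Fin.sum_univ_three, QuadraticMap.map_add f, polar_add_left, polar_smul_left,
      polar_smul_right, QuadraticMap.map_smul, ho 0 1 (by decide), ho 0 2 (by decide),
      ho 1 2 (by decide), smul_eq_mul]
    ring
  have hequiv : f.Equivalent (weightedSumSquares ℤ_[p] fun i => f (b i)) := by
    have : f.basisRepr b = weightedSumSquares ℤ_[p] fun i => f (b i) := by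
      ext w
      rw [basisRepr_apply, hval, weightedSumSquares_apply]
      rfl
    exact this ▸ ⟨f.isometryEquivBasisRepr b⟩
  have hdv : ∀ y, f (b 0) ∣ f y := by
    intro y
    rw [← b.sum_repr y, hval]
    exact Finset.dvd_sum fun i _ => Dvd.dvd.mul_right (hd 0 i (Fin.zero_le _)) _
  have hu0 : IsUnit (f (b 0)) := by
    have : coeffIdeal f ≤ Ideal.span {f (b 0)} := by
      unfold coeffIdeal
      rw [Ideal.span_le]
      rintro z (⟨i, rfl⟩ | ⟨ij, rfl⟩)
      · exact Ideal.mem_span_singleton.2 (hdv _)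
      · refine Ideal.mem_span_singleton.2 ?_
        show _ ∣ polar f _ _
        unfold polar
        exact dvd_sub (dvd_sub (hdv _) (hdv _)) (hdv _)
    rw [show coeffIdeal f = ⊤ from hprim, top_le_iff, Ideal.span_singleton_eq_top] at this
    exact this
  have hn : ∀ k, f (b k) ≠ 0 := by
    intro k hk
    apply hnd
    have hrad : ∀ y, polar f y (b k) = 0 := by
      intro y
      have : (polarBilin f).flip (b k) = 0 := by
        refine b.ext fun i => ?_
        by_cases hik : i = k
        · subst hik; simp [polar_self, hk]
        · simpa using ho i k hik
      simpa using LinearMap.congr_fun this y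
    rw [← Matrix.exists_mulVec_eq_zero_iff]
    refine ⟨b k, b.ne_zero k, ?_⟩
    ext i
    have h := hrad (Pi.single i 1)
    rw [pi_eq_sum_univ' (b k), ← polarBilin_apply_apply, map_sum] at h
    simp only [map_smul, polarBilin_apply_apply, smul_eq_mul] at h
    rw [Pi.zero_apply, ← h]
    simp only [Matrix.mulVec, dotProduct, gramMatrix, Matrix.of_apply]
    refine Finset.sum_congr rfl fun j _ => ?_
    rw [mul_comm]
  refine ⟨![hu0.unit, PadicInt.unitCoeff (hn 1), PadicInt.unitCoeff (hn 2)], (f (b 1)).valuation,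
    (f (b 2)).valuation, ?_, ?_⟩
  · obtain ⟨c, hc⟩ := hd 1 2 (by decide)
    have hc0 : c ≠ 0 := by rintro rfl; exact hn 2 (by simpa using hc)
    rw [hc, PadicInt.valuation_mul (hn 1) hc0]
    omega
  · convert hequiv using 2
    ext i
    fin_cases i
    · simp
    · simpa using (PadicInt.unitCoeff_spec (hn 1)).symm
    · simpa using (PadicInt.unitCoeff_spec (hn 2)).symm
end diag

section main

variable {p : ℕ} [Fact p.Prime]

/-- The diagonal form `⟨a, b p^r, c p^s⟩`. -/
noncomputable def W (p : ℕ) [Fact p.Prime] (a b c : ℤ_[p]ˣ) (r s : ℕ) :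
    QuadraticForm ℤ_[p] (Fin 3 → ℤ_[p]) :=
  weightedSumSquares ℤ_[p] ![(a : ℤ_[p]), b * (p : ℤ_[p]) ^ r, c * (p : ℤ_[p]) ^ s]

lemma W_apply (a b c : ℤ_[p]ˣ) (r s : ℕ) (x : Fin 3 → ℤ_[p]) :
    W p a b c r s x = a * x 0 ^ 2 + b * (p : ℤ_[p]) ^ r * x 1 ^ 2 + c * (p : ℤ_[p]) ^ s * x 2 ^ 2 := by
  simp [W, Fin.sum_univ_three, pow_two]

lemma W_smul (u a b c : ℤ_[p]ˣ) (r s : ℕ) :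
    (u : ℤ_[p]) • W p a b c r s = W p (u * a) (u * b) (u * c) r s := by
  ext x
  rw [_root_.smul_apply, W_apply, W_apply]
  simp; ring

lemma equiv_of_matrix {f g : QuadraticForm ℤ_[p] (Fin 3 → ℤ_[p])}
    (P Q : Matrix (Fin 3) (Fin 3) ℤ_[p]) (h1 : Q * P = 1) (h : ∀ x, f (P.mulVec x) = g x) :
    f.Equivalent g := by
  have h2 : P * Q = 1 := mul_eq_one_comm.1 h1
  refine Equivalent.symm ⟨⟨Matrix.toLin'OfInv h1 h2, ?_⟩⟩
  intro x
  rw [← h x]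
  congr 1

lemma W_sq (a b c t₀ t₁ t₂ : ℤ_[p]ˣ) (r s : ℕ) :
    (W p (a * t₀ ^ 2) (b * t₁ ^ 2) (c * t₂ ^ 2) r s).Equivalent (W p a b c r s) := by
  refine equiv_of_matrix (Matrix.diagonal ![((t₀⁻¹ : ℤ_[p]ˣ) : ℤ_[p]), (t₁⁻¹ : ℤ_[p]ˣ), (t₂⁻¹ : ℤ_[p]ˣ)])
    (Matrix.diagonal ![(t₀ : ℤ_[p]), t₁, t₂]) ?_ ?_
  · rw [Matrix.diagonal_mul_diagonal, ← Matrix.diagonal_one]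
    congr 1
    ext i
    fin_cases i <;> simp
  · intro x
    rw [W_apply, W_apply]
    simp only [Matrix.mulVec_diagonal]
    have k (t : ℤ_[p]ˣ) : (t : ℤ_[p]) * (t⁻¹ : ℤ_[p]ˣ) = 1 := by simp
    have k2 (t : ℤ_[p]ˣ) : (t : ℤ_[p]) ^ 2 * ((t⁻¹ : ℤ_[p]ˣ) : ℤ_[p]) ^ 2 = 1 := by
      rw [← mul_pow, k, one_pow]
    simp
    linear_combination a * x 0 ^ 2 * k2 t₀ + b * (p : ℤ_[p]) ^ r * x 1 ^ 2 * k2 t₁ +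
      c * (p : ℤ_[p]) ^ s * x 2 ^ 2 * k2 t₂

lemma W_merge01 (hp : p ≠ 2) (a b c : ℤ_[p]ˣ) (s : ℕ) :
    (W p a b c 0 s).Equivalent (W p 1 (a * b) c 0 s) := by
  obtain ⟨x, y, h⟩ := exists_repr_one hp a b
  refine equiv_of_matrix !![x, -(b * y), 0; y, a * x, 0; 0, 0, 1]
    !![a * x, b * y, 0; -y, x, 0; 0, 0, 1] ?_ ?_
  · ext i j
    fin_cases i <;> fin_cases j <;> simp [Matrix.mul_apply, Fin.sum_univ_three] <;>
      first | ring1 | linear_combination h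
  · intro z
    rw [W_apply, W_apply]
    simp [Matrix.mulVec, dotProduct, Fin.sum_univ_three]
    linear_combination (z 0 ^ 2 + a * b * z 1 ^ 2) * h

lemma W_merge12 (hp : p ≠ 2) (a b c : ℤ_[p]ˣ) (r : ℕ) :
    (W p a b c r r).Equivalent (W p a 1 (b * c) r r) := by
  obtain ⟨x, y, h⟩ := exists_repr_one hp b c
  refine equiv_of_matrix !![1, 0, 0; 0, x, -(c * y); 0, y, b * x]
    !![1, 0, 0; 0, b * x, c * y; 0, -y, x] ?_ ?_
  · ext i j
    fin_cases i <;> fin_cases j <;> simp [Matrix.mul_apply, Fin.sum_univ_three] <;>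
      first | ring1 | linear_combination h
  · intro z
    rw [W_apply, W_apply]
    simp [Matrix.mulVec, dotProduct, Fin.sum_univ_three]
    linear_combination (z 1 ^ 2 + b * c * z 2 ^ 2) * h * (p : ℤ_[p]) ^ r

/-- The parameters occurring in the standard list. -/
def Params (δ a b : ℤ_[p]ˣ) (r s : ℕ) : Prop :=
  (r = 0 ∧ s = 0 ∧ a = 1 ∧ b = 1) ∨ (r = 0 ∧ 1 ≤ s ∧ b = 1 ∧ (-a = 1 ∨ -a = δ)) ∨
  (1 ≤ r ∧ r = s ∧ a = 1 ∧ (b = 1 ∨ b = δ)) ∨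
  (1 ≤ r ∧ r < s ∧ (a = 1 ∨ a = δ) ∧ (b = 1 ∨ b = δ))

lemma inStandardList_iff (δ : ℤ_[p]ˣ) (g : QuadraticForm ℤ_[p] (Fin 3 → ℤ_[p])) :
    InStandardList p δ g ↔ ∃ a b r s, Params δ a b r s ∧ g = W p 1 a b r s := by
  constructor
  · rintro (rfl | ⟨s, ε, hs, he, rfl⟩ | ⟨r, ε, hr, he, rfl⟩ | ⟨r, s, ε, ε', hr, hs, he, he', rfl⟩)
    · exact ⟨1, 1, 0, 0, Or.inl ⟨rfl, rfl, rfl, rfl⟩, by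
        ext x; simp [W, Fin.sum_univ_three]⟩
    · exact ⟨-ε, 1, 0, s, Or.inr (Or.inl ⟨rfl, hs, rfl, by simpa using he⟩), by simp [W]⟩
    · exact ⟨1, ε, r, r, Or.inr (Or.inr (Or.inl ⟨hr, rfl, rfl, he⟩)), by simp [W]⟩
    · exact ⟨ε, ε', r, s, Or.inr (Or.inr (Or.inr ⟨hr, hs, he, he'⟩)), by simp [W]⟩
  · rintro ⟨a, b, r, s, (⟨rfl, rfl, rfl, rfl⟩ | ⟨rfl, hs, rfl, he⟩ | ⟨hr, rfl, rfl, he⟩ |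
      ⟨hr, hs, he, he'⟩), rfl⟩
    · left; ext x; simp [W, Fin.sum_univ_three]
    · right; left; exact ⟨s, -a, hs, he, by simp [W]⟩
    · right; right; left; exact ⟨r, b, hr, he, by simp [W]⟩
    · right; right; right; exact ⟨r, s, a, b, hr, hs, he, he', by simp [W]⟩

lemma exists_std (hp : p ≠ 2) (δ : ℤ_[p]ˣ) (hδ : ¬ IsSquare δ) (u₀ u₁ u₂ : ℤ_[p]ˣ) (r s : ℕ)
    (hrs : r ≤ s) : ∃ a b u, Params δ a b r s ∧
      (W p (u * u₀) (u * u₁) (u * u₂) r s).Equivalent (W p 1 a b r s) := by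
  rcases Nat.eq_zero_or_pos r with rfl | hr
  · rcases Nat.eq_zero_or_pos s with rfl | hs
    · refine ⟨1, 1, u₀ * u₁ * u₂, Or.inl ⟨rfl, rfl, rfl, rfl⟩, ?_⟩
      refine (W_merge01 hp _ _ _ _).trans ((W_merge12 hp _ _ _ _).trans ?_)
      convert W_sq 1 1 1 1 1 ((u₀ * u₁ * u₂) ^ 2) 0 0 using 2
      · simp
      · simp
      · ext; push_cast; ring
    · obtain ⟨ε, t, he, ht⟩ := exists_class hp δ hδ (-(u₀ * u₁))
      refine ⟨-ε, 1, u₂, Or.inr (Or.inl ⟨rfl, hs, rfl, by simpa using he⟩), ?_⟩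
      refine (W_merge01 hp _ _ _ _).trans ?_
      convert W_sq 1 (-ε) 1 1 (u₂ * t) u₂ 0 s using 2
      · simp
      · have : u₀ * u₁ = - (ε * t ^ 2) := by rw [← ht, neg_neg]
        rw [show u₂ * u₀ * (u₂ * u₁) = (u₀ * u₁) * u₂ ^ 2 by ext; push_cast; ring, this]
        ext; push_cast; ring
      · ext; push_cast; ring
  · rcases eq_or_lt_of_le hrs with rfl | hs
    · obtain ⟨ε, t, he, ht⟩ := exists_class hp δ hδ (u₁ * u₂)
      refine ⟨1, ε, u₀, Or.inr (Or.inr (Or.inl ⟨hr, rfl, rfl, he⟩)), ?_⟩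
      refine (W_merge12 hp _ _ _ _).trans ?_
      convert W_sq 1 1 ε u₀ 1 (u₀ * t) r r using 2
      · ext; push_cast; ring
      · simp
      · rw [show u₀ * u₁ * (u₀ * u₂) = (u₁ * u₂) * u₀ ^ 2 by ext; push_cast; ring, ht]
        ext; push_cast; ring
    · obtain ⟨ε, t, he, ht⟩ := exists_class hp δ hδ (u₀ * u₁)
      obtain ⟨ε', t', he', ht'⟩ := exists_class hp δ hδ (u₀ * u₂)
      refine ⟨ε, ε', u₀, Or.inr (Or.inr (Or.inr ⟨hr, hs, he, he'⟩)), ?_⟩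
      rw [ht, ht']
      convert W_sq 1 ε ε' u₀ t t' r s using 2
      ext; push_cast; ring

lemma exists_mats (hp : p ≠ 2) (a b : Fin 3 → ℤ_[p])
    (h : (weightedSumSquares ℤ_[p] a).Equivalent (weightedSumSquares ℤ_[p] b)) :
    ∃ P Q : Matrix (Fin 3) (Fin 3) ℤ_[p], P * Q = 1 ∧ ∀ i j, a i * P i j = Q j i * b j := by
  obtain ⟨φ⟩ := h.symm
  have hpol (w x y : Fin 3 → ℤ_[p]) : polar (weightedSumSquares ℤ_[p] w) x y
      = 2 * ∑ i, w i * (x i * y i) := by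
    simp [polar, Fin.sum_univ_three]; ring
  refine ⟨LinearMap.toMatrix' (φ.toLinearEquiv : (Fin 3 → ℤ_[p]) →ₗ[ℤ_[p]] _),
    LinearMap.toMatrix' (φ.toLinearEquiv.symm : (Fin 3 → ℤ_[p]) →ₗ[ℤ_[p]] _), ?_, ?_⟩
  · rw [← LinearMap.toMatrix'_comp, ← LinearMap.toMatrix'_id]
    congr 1
    exact LinearMap.ext fun x => φ.toLinearEquiv.apply_symm_apply x
  · intro i j
    have key : ∀ x y, polar (weightedSumSquares ℤ_[p] a) (φ.toLinearEquiv x) y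
        = polar (weightedSumSquares ℤ_[p] b) x (φ.toLinearEquiv.symm y) := by
      intro x y
      obtain ⟨z, rfl⟩ := φ.toLinearEquiv.surjective y
      rw [LinearEquiv.symm_apply_apply]
      unfold polar
      rw [← map_add]
      have hm : ∀ m, (weightedSumSquares ℤ_[p] a) (φ.toLinearEquiv m)
        = weightedSumSquares ℤ_[p] b m := φ.map_app'
      rw [hm, hm, hm]
    have h := key (Pi.single j 1) (Pi.single i 1)
    rw [hpol, hpol] at h
    have h := mul_left_cancel₀ (isUnit_two hp).ne_zero h
    simp only [LinearMap.toMatrix'_apply]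
    simp [Pi.single_apply] at h ⊢
    rw [h, mul_comm]

lemma exp_dvd {α β x y : ℤ_[p]} {m n : ℕ} (hα : IsUnit α) (h : α * (p : ℤ_[p]) ^ m * x = y * (β * (p : ℤ_[p]) ^ n))
    (hmn : m < n) : PadicInt.toZMod x = 0 := by
  obtain ⟨u, rfl⟩ := hα
  obtain ⟨k, rfl⟩ := Nat.exists_eq_add_of_lt hmn
  have hp0 : (p : ℤ_[p]) ^ m ≠ 0 := pow_ne_zero _ (NeZero.ne _)
  have h' : (u : ℤ_[p]) * x = p * (y * β * p ^ k) := by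
    apply mul_left_cancel₀ hp0
    linear_combination h
  rw [toZMod_eq_zero_iff]
  exact (Units.dvd_mul_left).1 ⟨_, h'⟩

section uniq
variable {α β : Fin 3 → ℤ_[p]ˣ} {e e' : Fin 3 → ℕ} {P Q : Matrix (Fin 3) (Fin 3) ℤ_[p]}

lemma exp_le (hPQ : P * Q = 1) (he : Monotone e) (he' : Monotone e')
    (h : ∀ i j, (α i : ℤ_[p]) * (p : ℤ_[p]) ^ e i * P i j = Q j i * (β j * (p : ℤ_[p]) ^ e' j)) (i : Fin 3) :
    e' i ≤ e i := by
  by_contra! hlt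
  have hz : ∀ k j, k ≤ i → i ≤ j → PadicInt.toZMod (P k j) = 0 := fun k j hk hj =>
    exp_dvd (α k).isUnit (h k j) ((he hk).trans_lt (hlt.trans_le (he' hj)))
  have hdet : PadicInt.toZMod P.det = 0 := by
    rw [Matrix.det_fin_three]
    fin_cases i <;> simp at hz
    · simp [hz 0 0, hz 0 1, hz 0 2]
    · simp [hz 0 1, hz 0 2, hz 1 1, hz 1 2]
    · simp [hz 0 2, hz 1 2, hz 2 2]
  have := congrArg Matrix.det hPQ
  rw [Matrix.det_mul, Matrix.det_one] at this
  have := congrArg PadicInt.toZMod this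
  simp [hdet] at this

lemma isolated (hp : p ≠ 2) (hPQ : P * Q = 1)
    (h : ∀ i j, (α i : ℤ_[p]) * (p : ℤ_[p]) ^ e i * P i j = Q j i * (β j * (p : ℤ_[p]) ^ e j)) (i : Fin 3)
    (hi : ∀ j, j ≠ i → e j ≠ e i) : IsSquare (α i * β i) := by
  have hz : ∀ j, j ≠ i → PadicInt.toZMod (P i j * Q j i) = 0 := by
    intro j hj
    rcases lt_or_gt_of_ne (hi j hj) with hl | hl
    · rw [map_mul, exp_dvd (β j).isUnit (y := P i j) (β := (α i : ℤ_[p])) (x := Q j i) (m := e j)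
        (n := e i) (by linear_combination - h i j) hl, mul_zero]
    · rw [map_mul, exp_dvd (α i).isUnit (h i j) hl, zero_mul]
  have h1 : ∑ j, P i j * Q j i = 1 := by
    rw [← Matrix.mul_apply, hPQ, Matrix.one_apply_eq]
  have h2 : PadicInt.toZMod (P i i) * PadicInt.toZMod (Q i i) = 1 := by
    have := congrArg PadicInt.toZMod h1
    rw [map_sum, Finset.sum_eq_single i (fun j _ hj => hz j hj) (by simp), map_mul, map_one] at this
    exact this
  have h3 : (α i : ℤ_[p]) * P i i = Q i i * β i := by
    apply mul_left_cancel₀ (pow_ne_zero (e i) (NeZero.ne (p : ℤ_[p])))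
    linear_combination h i i
  have h4 := congrArg PadicInt.toZMod h3
  rw [map_mul, map_mul] at h4
  rw [isSquare_iff_mod hp]
  refine ⟨PadicInt.toZMod (Q i i) * PadicInt.toZMod (β i : ℤ_[p]), ?_⟩
  rw [Units.val_mul, map_mul]
  linear_combination (-PadicInt.toZMod (α i : ℤ_[p]) * PadicInt.toZMod (β i : ℤ_[p])) * h2 +
    PadicInt.toZMod (Q i i) * PadicInt.toZMod (β i : ℤ_[p]) * h4

lemma det_square (hPQ : P * Q = 1)
    (h : ∀ i j, (α i : ℤ_[p]) * (p : ℤ_[p]) ^ e i * P i j = Q j i * (β j * (p : ℤ_[p]) ^ e j)) :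
    IsSquare ((α 0 * α 1 * α 2) * (β 0 * β 1 * β 2)) := by
  have hm : Matrix.diagonal (fun i => (α i : ℤ_[p]) * (p : ℤ_[p]) ^ e i) * P =
      Q.transpose * Matrix.diagonal (fun j => β j * (p : ℤ_[p]) ^ e j) := by
    ext i j
    rw [Matrix.diagonal_mul, Matrix.mul_diagonal, Matrix.transpose_apply]
    exact h i j
  have hd := congrArg Matrix.det hm
  rw [Matrix.det_mul, Matrix.det_mul, Matrix.det_diagonal, Matrix.det_diagonal,
    Matrix.det_transpose] at hd
  simp only [Fin.prod_univ_three] at hd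
  have h1 := congrArg Matrix.det hPQ
  rw [Matrix.det_mul, Matrix.det_one] at h1
  have h2 : (α 0 * α 1 * α 2 : ℤ_[p]) * P.det = Q.det * (β 0 * β 1 * β 2) := by
    apply mul_left_cancel₀ (pow_ne_zero (e 0 + e 1 + e 2) (NeZero.ne (p : ℤ_[p])))
    rw [pow_add, pow_add]
    linear_combination hd
  have hQ : IsUnit Q.det := IsUnit.of_mul_eq_one_right _ h1
  refine ⟨hQ.unit * (β 0 * β 1 * β 2), ?_⟩
  ext
  push_cast
  rw [IsUnit.unit_spec]
  linear_combination -((α 0 * α 1 * α 2 : ℤ_[p]) * (β 0 * β 1 * β 2)) * h1 +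
    Q.det * (β 0 * β 1 * β 2) * h2

end uniq

lemma W_invariants (hp : p ≠ 2) {a₀ a₁ a₂ b₀ b₁ b₂ : ℤ_[p]ˣ} {r s r' s' : ℕ} (hrs : r ≤ s)
    (hrs' : r' ≤ s') (h : (W p a₀ a₁ a₂ r s).Equivalent (W p b₀ b₁ b₂ r' s')) :
    r = r' ∧ s = s' ∧ IsSquare ((a₀ * a₁ * a₂) * (b₀ * b₁ * b₂)) ∧
      (1 ≤ r → IsSquare (a₀ * b₀)) ∧ (r < s → IsSquare (a₂ * b₂)) ∧
      (1 ≤ r → r < s → IsSquare (a₁ * b₁)) := by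
  obtain ⟨P, Q, hPQ, hm⟩ := exists_mats hp _ _ h
  have hm1 : ∀ i j, ((![a₀, a₁, a₂] i : ℤ_[p]ˣ) : ℤ_[p]) * (p : ℤ_[p]) ^ (![0, r, s] i) * P i j =
      Q j i * ((![b₀, b₁, b₂] j : ℤ_[p]ˣ) * (p : ℤ_[p]) ^ (![0, r', s'] j)) := by
    intro i j
    convert hm i j using 2
    · fin_cases i <;> simp
    · fin_cases j <;> simp
  have hQP : Q * P = 1 := mul_eq_one_comm.1 hPQ
  have hm2 : ∀ i j, ((![b₀, b₁, b₂] i : ℤ_[p]ˣ) : ℤ_[p]) * (p : ℤ_[p]) ^ (![0, r', s'] i) * Q i j =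
      P j i * ((![a₀, a₁, a₂] j : ℤ_[p]ˣ) * (p : ℤ_[p]) ^ (![0, r, s] j)) := by
    intro i j
    linear_combination - hm1 j i
  have mono : ∀ {r s : ℕ}, r ≤ s → Monotone ![0, r, s] := by
    intro r s hrs i j hij
    fin_cases i <;> fin_cases j <;> simp at hij ⊢ <;> omega
  have l1 := exp_le hPQ (mono hrs) (mono hrs') hm1
  have l2 := exp_le hQP (mono hrs') (mono hrs) hm2
  have hr : r = r' := le_antisymm (by simpa using l2 1) (by simpa using l1 1)
  have hs : s = s' := le_antisymm (by simpa using l2 2) (by simpa using l1 2)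
  subst hr hs
  refine ⟨rfl, rfl, by simpa using det_square hPQ hm1, fun h => ?_, fun h => ?_, fun h h' => ?_⟩
  · refine isolated hp hPQ hm1 0 ?_
    intro j hj
    fin_cases j <;> simp at hj ⊢ <;> omega
  · refine isolated hp hPQ hm1 2 ?_
    intro j hj
    fin_cases j <;> simp at hj ⊢ <;> omega
  · refine isolated hp hPQ hm1 1 ?_
    intro j hj
    fin_cases j <;> simp at hj ⊢ <;> omega

lemma sq_cancel {x y : ℤ_[p]ˣ} (h : IsSquare (x * y)) (hy : IsSquare y) : IsSquare x := by
  have := h.div hy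
  rwa [mul_div_cancel_right] at this

lemma Params.le {δ a b : ℤ_[p]ˣ} {r s : ℕ} (h : Params δ a b r s) : r ≤ s := by
  unfold Params at h
  omega

lemma std_unique (hp : p ≠ 2) {δ : ℤ_[p]ˣ} (hδ : ¬ IsSquare δ) {a b a' b' u : ℤ_[p]ˣ}
    {r s r' s' : ℕ} (h : Params δ a b r s) (h' : Params δ a' b' r' s')
    (he : (W p u (u * a) (u * b) r s).Equivalent (W p 1 a' b' r' s')) :
    a = a' ∧ b = b' ∧ r = r' ∧ s = s' := by
  obtain ⟨rfl, rfl, hd, h0, h2, h1⟩ := W_invariants hp h.le h'.le he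
  have hcl : ∀ {x y : ℤ_[p]ˣ}, IsSquare u → IsSquare (u * x * y) → IsSquare (x * y) := by
    intro x y hu h
    rw [mul_assoc, mul_comm] at h
    exact sq_cancel h hu
  rcases h with ⟨q1, q2, rfl, rfl⟩ | ⟨q1, q2, rfl, ha⟩ | ⟨q1, q2, rfl, hb⟩ | ⟨q1, q2, ha, hb⟩ <;>
  rcases h' with ⟨q1', q2', rfl, rfl⟩ | ⟨q1', q2', rfl, ha'⟩ | ⟨q1', q2', rfl, hb'⟩ |
    ⟨q1', q2', ha', hb'⟩ <;> try omega
  · simp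
  · have hu : IsSquare u := by simpa using h2 (by omega)
    have : IsSquare (a * a') := by
      have h3 : IsSquare ((a * a') * (u ^ 2 * u)) := by
        convert hd using 1
        ext; push_cast; ring
      exact sq_cancel h3 ((IsSquare.sq u).mul hu)
    have := class_unique hδ ha ha' (by simpa using this)
    simpa using this
  · have hu : IsSquare u := by simpa using h0 (by omega)
    have : IsSquare (b * b') := by
      have h3 : IsSquare ((b * b') * (u ^ 2 * u)) := by
        convert hd using 1
        ext; push_cast; ring
      exact sq_cancel h3 ((IsSquare.sq u).mul hu)
    simpa using class_unique hδ hb hb' this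
  · have hu : IsSquare u := by simpa using h0 (by omega)
    exact ⟨class_unique hδ ha ha' (hcl hu (h1 q1 q2)), class_unique hδ hb hb' (hcl hu (h2 q2)),
      rfl, rfl⟩

end main
end TernAux

theorem stmt_14 (p : ℕ) [Fact p.Prime] (hp : p ≠ 2)
    (δ : ℤ_[p]ˣ) (hδ : ¬ IsSquare (δ : ℤ_[p]))
    (f : QuadraticForm ℤ_[p] (Fin 3 → ℤ_[p]))
    (hprim : IsPrimitiveForm f) (hnd : (gramMatrix f).det ≠ 0) :
    ∃! g : QuadraticForm ℤ_[p] (Fin 3 → ℤ_[p]), InStandardList p δ g ∧ SimilarForm f g := by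
  have hδ' : ¬ IsSquare δ := by
    rintro ⟨t, ht⟩
    exact hδ ⟨t, by rw [ht]; simp⟩
  obtain ⟨u, r, s, hrs, hf⟩ := TernAux.exists_diag hp f hprim hnd
  change f.Equivalent (TernAux.W p (u 0) (u 1) (u 2) r s) at hf
  have smul_equiv : ∀ {f g : QuadraticForm ℤ_[p] (Fin 3 → ℤ_[p])} (c : ℤ_[p]), f.Equivalent g →
      (c • f).Equivalent (c • g) := by
    rintro f g c ⟨φ⟩
    refine ⟨⟨φ.toLinearEquiv, fun m => ?_⟩⟩
    have : g (φ.toLinearEquiv m) = f m := φ.map_app' m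
    simpa using congrArg (c * ·) this
  obtain ⟨a, b, v, hpar, hW⟩ := TernAux.exists_std hp δ hδ' (u 0) (u 1) (u 2) r s hrs
  have hv : ((v : ℤ_[p]) • f).Equivalent (TernAux.W p 1 a b r s) := by
    refine (smul_equiv _ hf).trans ?_
    rw [TernAux.W_smul]
    exact hW
  refine ⟨TernAux.W p 1 a b r s, ⟨(TernAux.inStandardList_iff _ _).2 ⟨a, b, r, s, hpar, rfl⟩,
    v, hv⟩, ?_⟩
  rintro g ⟨hg, w, hw⟩
  obtain ⟨a', b', r', s', hpar', rfl⟩ := (TernAux.inStandardList_iff _ _).1 hg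
  have hsim : (TernAux.W p (w * v⁻¹) (w * v⁻¹ * a) (w * v⁻¹ * b) r s).Equivalent
      (TernAux.W p 1 a' b' r' s') := by
    have h1 := smul_equiv ((w * v⁻¹ : ℤ_[p]ˣ) : ℤ_[p]) hv.symm
    rw [TernAux.W_smul, mul_one, smul_smul, ← Units.val_mul, inv_mul_cancel_right] at h1
    exact h1.trans hw
  obtain ⟨rfl, rfl, rfl, rfl⟩ := TernAux.std_unique hp hδ' hpar hpar' hsim
  rfl
end
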